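/- arXiv:2207.05655 — 6 statements merged into one kernel-verified Lean document; each statement's English description precedes it below -/
import Mathlib

section
/- Let d ≥ 2 and k ≥ 1 be integers, r₀ > 0, and let Q : ℝ^d → ℝ be a solid harmonic of degree k. For each ε ∈ (0, 1], let u_ε(x) := A_ε|x|^{2−d−2k}Q(x) + B_ε Q(x), where D_ε := k r₀^{d+2k−2} + (k+d−2)(r₀+ε)^{d+2k−2}, A_ε := k r₀^{d+2k−2}(r₀+ε)^{d+2k−2}/D_ε, and B_ε := (k+d−2)(r₀+ε)^{d+2k−2}/D_ε. Then there exists a constant C > 0, depending only on d, k, r₀ and Q but not on ε, such that |∇u_ε(x)| ≤ C for every ε ∈ (0, 1] and every x with r₀ < |x| < r₀ + ε. -/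
open MeasureTheory Metric Set
open scoped InnerProductSpace

/-- The Laplacian of `f : ℝ^d → ℝ` at `x`, as the sum of the pure second
partial derivatives in the coordinate directions. -/
noncomputable def laplacian {d : ℕ} (f : EuclideanSpace ℝ (Fin d) → ℝ)
    (x : EuclideanSpace ℝ (Fin d)) : ℝ :=
  ∑ i : Fin d,
    iteratedFDeriv ℝ 2 f x ![EuclideanSpace.single i 1, EuclideanSpace.single i 1]

/-- `f` is harmonic on the open set `U ⊆ ℝ^d`: it is `C²` there and its
Laplacian vanishes on `U`. -/
def HarmonicOnSet {d : ℕ} (f : EuclideanSpace ℝ (Fin d) → ℝ)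
    (U : Set (EuclideanSpace ℝ (Fin d))) : Prop :=
  ContDiffOn ℝ 2 f U ∧ ∀ x ∈ U, laplacian f x = 0

/-- `Q : ℝ^d → ℝ` is a solid harmonic of degree `k`: a polynomial, homogeneous of
degree `k`, which is harmonic on all of `ℝ^d`. -/
def IsSolidHarmonic {d : ℕ} (k : ℕ) (Q : EuclideanSpace ℝ (Fin d) → ℝ) : Prop :=
  (∃ P : MvPolynomial (Fin d) ℝ, P.IsHomogeneous k ∧
    ∀ x : EuclideanSpace ℝ (Fin d), Q x = MvPolynomial.eval (fun i => x i) P) ∧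
  ∀ x : EuclideanSpace ℝ (Fin d), laplacian Q x = 0

theorem insulated_no_gradient_blowup {d k : ℕ} (hd : 2 ≤ d) (hk : 1 ≤ k)
    {r₀ : ℝ} (hr₀ : 0 < r₀)
    (Q : EuclideanSpace ℝ (Fin d) → ℝ) (hQ : IsSolidHarmonic k Q) :
    let D : ℝ → ℝ := fun ε => (k : ℝ) * r₀ ^ ((d : ℝ) + 2 * (k : ℝ) - 2)
      + ((k : ℝ) + (d : ℝ) - 2) * (r₀ + ε) ^ ((d : ℝ) + 2 * (k : ℝ) - 2)
    let A : ℝ → ℝ := fun ε => (k : ℝ) * r₀ ^ ((d : ℝ) + 2 * (k : ℝ) - 2)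
      * (r₀ + ε) ^ ((d : ℝ) + 2 * (k : ℝ) - 2) / D ε
    let B : ℝ → ℝ := fun ε =>
      ((k : ℝ) + (d : ℝ) - 2) * (r₀ + ε) ^ ((d : ℝ) + 2 * (k : ℝ) - 2) / D ε
    let u : ℝ → EuclideanSpace ℝ (Fin d) → ℝ := fun ε x =>
      A ε * ‖x‖ ^ ((2 : ℝ) - (d : ℝ) - 2 * (k : ℝ)) * Q x + B ε * Q x
    ∃ C : ℝ, 0 < C ∧ ∀ ε ∈ Set.Ioc (0 : ℝ) 1, ∀ x : EuclideanSpace ℝ (Fin d),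
      r₀ < ‖x‖ → ‖x‖ < r₀ + ε → ‖gradient (u ε) x‖ ≤ C := by
  intro D A B u
  obtain ⟨⟨P, -, hP⟩, -⟩ := hQ
  have hQs : ContDiff ℝ 1 Q := by
    have h : Q = fun x : EuclideanSpace ℝ (Fin d) => MvPolynomial.eval (fun i => x i) P :=
      funext hP
    rw [h]
    induction P using MvPolynomial.induction_on generalizing Q with
    | C a => simpa using contDiff_const
    | add p q hp hq =>
      simp only [map_add]
      exact (hp _ (fun _ => rfl) rfl).add (hq _ (fun _ => rfl) rfl)
    | mul_X p i hp =>
      simp only [map_mul, MvPolynomial.eval_X]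
      refine (hp _ (fun _ => rfl) rfl).mul ?_
      fun_prop
  set p : ℝ := (2 : ℝ) - (d : ℝ) - 2 * (k : ℝ) with hp
  set q : ℝ := (d : ℝ) + 2 * (k : ℝ) - 2 with hq
  have hd' : (2 : ℝ) ≤ d := by exact_mod_cast hd
  have hk' : (1 : ℝ) ≤ k := by exact_mod_cast hk
  have hq0 : 0 ≤ q := by rw [hq]; linarith
  let F : EuclideanSpace ℝ (Fin d) → ℝ := fun x => ‖x‖ ^ p * Q x
  have hF : ContDiffOn ℝ 1 F {x | x ≠ 0} := by
    intro x hx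
    have h1 : ContDiffAt ℝ 1 (fun y : EuclideanSpace ℝ (Fin d) => ‖y‖) x := contDiffAt_norm ℝ hx
    exact ((h1.rpow_const_of_ne (norm_ne_zero_iff.mpr hx)).mul hQs.contDiffAt).contDiffWithinAt
  have hopen : IsOpen {x : EuclideanSpace ℝ (Fin d) | x ≠ 0} := isOpen_ne
  have hFc := hF.continuousOn_fderiv_of_isOpen hopen le_rfl
  have hQc : Continuous (fderiv ℝ Q) := hQs.continuous_fderiv one_ne_zero
  let K : Set (EuclideanSpace ℝ (Fin d)) := closedBall 0 (r₀ + 1) ∩ {x | r₀ ≤ ‖x‖}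
  have hK : IsCompact K :=
    (isCompact_closedBall _ _).inter_right (isClosed_le continuous_const continuous_norm)
  have hK0 : K ⊆ {x | x ≠ 0} := by
    rintro x ⟨-, hx⟩ rfl
    simp only [mem_ofPred_eq, norm_zero] at hx
    linarith
  obtain ⟨M1, hM1⟩ := hK.exists_bound_of_continuousOn (hFc.mono hK0)
  obtain ⟨M2, hM2⟩ := hK.exists_bound_of_continuousOn hQc.continuousOn
  have hM3 : 0 ≤ (r₀ + 1) ^ q := by positivity
  refine ⟨(r₀ + 1) ^ q * |M1| + |M2| + 1, by positivity, ?_⟩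
  rintro ε ⟨he0, he1⟩ x hx1 hx2
  have hxK : x ∈ K := ⟨by simp; linarith, hx1.le⟩
  have ha : 0 < (k : ℝ) * r₀ ^ q := by positivity
  have hR : 0 < (r₀ + ε) ^ q := by positivity
  have hb : 0 ≤ ((k : ℝ) + (d : ℝ) - 2) * (r₀ + ε) ^ q := mul_nonneg (by linarith) hR.le
  have hD : 0 < D ε := add_pos_of_pos_of_nonneg ha hb
  have hA0 : 0 ≤ A ε := by
    show 0 ≤ (k : ℝ) * r₀ ^ q * (r₀ + ε) ^ q / D ε
    positivity
  have hA : A ε ≤ (r₀ + 1) ^ q := by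
    have h1 : A ε ≤ (r₀ + ε) ^ q := by
      show (k : ℝ) * r₀ ^ q * (r₀ + ε) ^ q / D ε ≤ _
      rw [div_le_iff₀ hD, mul_comm]
      exact mul_le_mul_of_nonneg_left (le_add_of_nonneg_right hb) hR.le
    exact h1.trans (Real.rpow_le_rpow (by linarith) (by linarith) hq0)
  have hB0 : 0 ≤ B ε := div_nonneg hb hD.le
  have hB : B ε ≤ 1 := by
    show ((k : ℝ) + (d : ℝ) - 2) * (r₀ + ε) ^ q / D ε ≤ 1
    rw [div_le_one hD]
    exact le_add_of_nonneg_left ha.le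
  have hFd : DifferentiableAt ℝ F x :=
    (hF.differentiableOn one_ne_zero).differentiableAt (hopen.mem_nhds (hK0 hxK))
  have hQd : DifferentiableAt ℝ Q x := hQs.differentiable one_ne_zero x
  have hu : u ε = fun y => A ε * F y + B ε * Q y := by
    funext y
    simp only [u, F, hp, mul_assoc]
  have hfd : fderiv ℝ (u ε) x = A ε • fderiv ℝ F x + B ε • fderiv ℝ Q x := by
    rw [hu]
    exact ((hFd.hasFDerivAt.const_mul _).add (hQd.hasFDerivAt.const_mul _)).fderiv
  rw [gradient, LinearIsometryEquiv.norm_map, hfd]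
  refine (norm_add_le _ _).trans ?_
  rw [norm_smul, norm_smul, Real.norm_of_nonneg hA0, Real.norm_of_nonneg hB0]
  have e1 : A ε * ‖fderiv ℝ F x‖ ≤ (r₀ + 1) ^ q * |M1| :=
    mul_le_mul hA ((hM1 x hxK).trans (le_abs_self _)) (norm_nonneg _) hM3
  have e2 : B ε * ‖fderiv ℝ Q x‖ ≤ 1 * |M2| :=
    mul_le_mul hB ((hM2 x hxK).trans (le_abs_self _)) (norm_nonneg _) zero_le_one
  linarith
end

section
/- Let d ≥ 2 be an integer, r₀, ε > 0, and let w be continuous on the closed annulus {x ∈ ℝ^d : r₀ ≤ |x| ≤ r₀+ε}, harmonic on the open annulus {x ∈ ℝ^d : r₀ < |x| < r₀+ε}, and C¹ up to the inner sphere with ⟨∇w(x), x/|x|⟩ = 0 for every x with |x| = r₀. Then the supremum of |w| over the closed annulus equals the supremum of |w| over the outer sphere {x : |x| = r₀+ε}. -/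
open MeasureTheory Metric Set
open scoped InnerProductSpace

/-- Second directional derivative along a line. -/
lemma line_second_deriv {E : Type*} [NormedAddCommGroup E] [NormedSpace ℝ E]
    (w : E → ℝ) (x e : E) (h : ContDiffAt ℝ 2 w x) (a b c : ℝ) :
    deriv (deriv (fun t : ℝ => w (x + t • e) + (a + b * t + c * t ^ 2))) 0
      = iteratedFDeriv ℝ 2 w x ![e, e] + 2 * c := by
  have hl : ∀ t : ℝ, HasDerivAt (fun t : ℝ => x + t • e) e t := fun t => by
    simpa using ((hasDerivAt_id t).smul_const e).const_add x
  have hq : ∀ t : ℝ, HasDerivAt (fun t : ℝ => a + b * t + c * t ^ 2) (b + 2 * c * t) t := by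
    intro t
    have h1 := ((hasDerivAt_id t).const_mul b).const_add a
    have h2 := ((hasDerivAt_id t).pow 2).const_mul c
    exact (h1.add h2).congr_deriv (by simp; ring)
  have hev : ∀ᶠ y in nhds x, DifferentiableAt ℝ w y := by
    filter_upwards [h.eventually (by simp)] with y hy
    exact hy.differentiableAt (by norm_num)
  have htend : Filter.Tendsto (fun t : ℝ => x + t • e) (nhds 0) (nhds x) := by
    have := (hl 0).continuousAt.tendsto
    simpa using this
  have hd1 : deriv (fun t : ℝ => w (x + t • e) + (a + b * t + c * t ^ 2)) =ᶠ[nhds 0]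
      fun t => fderiv ℝ w (x + t • e) e + (b + 2 * c * t) := by
    filter_upwards [htend.eventually hev] with t ht
    exact ((ht.hasFDerivAt.comp_hasDerivAt t (hl t)).add (hq t)).deriv
  rw [hd1.deriv_eq]
  have hf : DifferentiableAt ℝ (fderiv ℝ w) x :=
    (h.fderiv_right (m := 1) (by norm_num)).differentiableAt (by norm_num)
  have hf' : HasFDerivAt (fderiv ℝ w) (fderiv ℝ (fderiv ℝ w) x) (x + (0 : ℝ) • e) := by
    simpa using hf.hasFDerivAt
  have h3 : HasDerivAt (fun t : ℝ => fderiv ℝ w (x + t • e) e)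
      (fderiv ℝ (fderiv ℝ w) x e e) 0 := by
    have h31 : HasDerivAt (fun t : ℝ => fderiv ℝ w (x + t • e))
      (fderiv ℝ (fderiv ℝ w) x e) 0 := hf'.comp_hasDerivAt (0 : ℝ) (hl 0)
    have h32 := h31.clm_apply (hasDerivAt_const (0 : ℝ) e)
    exact h32.congr_deriv (by simp)
  have h4 : HasDerivAt (fun t : ℝ => b + 2 * c * t) (2 * c) 0 := by
    simpa using ((hasDerivAt_id (0 : ℝ)).const_mul (2 * c)).const_add b
  have h5 : deriv (fun t : ℝ => fderiv ℝ w (x + t • e) e + (b + 2 * c * t)) 0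
      = fderiv ℝ (fderiv ℝ w) x e e + 2 * c := (h3.add h4).deriv
  rw [h5, iteratedFDeriv_two_apply]
  rfl

/-- One-sided estimate: the value of `w` is bounded by any upper bound on the outer sphere. -/
lemma insulated_le {d : ℕ} (hd : 2 ≤ d)
    {r₀ ε : ℝ} (hr₀ : 0 < r₀) (hε : 0 < ε)
    (w : EuclideanSpace ℝ (Fin d) → ℝ)
    (hcont : ContinuousOn w {x | r₀ ≤ ‖x‖ ∧ ‖x‖ ≤ r₀ + ε})
    (hharm : HarmonicOnSet w {x | r₀ < ‖x‖ ∧ ‖x‖ < r₀ + ε})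
    (hneu : ∀ x : EuclideanSpace ℝ (Fin d), ‖x‖ = r₀ →
      ∃ L : EuclideanSpace ℝ (Fin d) →L[ℝ] ℝ,
        HasFDerivWithinAt w L {y | r₀ ≤ ‖y‖ ∧ ‖y‖ < r₀ + ε} x ∧ L (‖x‖⁻¹ • x) = 0)
    (M : ℝ) (hM : ∀ x, ‖x‖ = r₀ + ε → w x ≤ M)
    (x : EuclideanSpace ℝ (Fin d)) (hx : r₀ ≤ ‖x‖ ∧ ‖x‖ ≤ r₀ + ε) : w x ≤ M := by
  have key : ∀ δ : ℝ, 0 < δ → w x ≤ M + δ * (r₀ + ε) ^ 2 := by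
    intro δ hδ
    have hK : IsCompact {x : EuclideanSpace ℝ (Fin d) | r₀ ≤ ‖x‖ ∧ ‖x‖ ≤ r₀ + ε} := by
      refine (isCompact_closedBall (0 : EuclideanSpace ℝ (Fin d)) (r₀ + ε)).of_isClosed_subset
        ?_ ?_
      · exact (isClosed_le continuous_const continuous_norm).inter
          (isClosed_le continuous_norm continuous_const)
      · intro y hy
        simpa using hy.2
    obtain ⟨z, hz, hmax⟩ := hK.exists_isMaxOn ⟨x, hx⟩
      (hcont.add ((continuous_norm.pow 2).const_smul δ).continuousOn)
    have hmax' : ∀ y, r₀ ≤ ‖y‖ → ‖y‖ ≤ r₀ + ε → w y + δ * ‖y‖ ^ 2 ≤ w z + δ * ‖z‖ ^ 2 := by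
      intro y h1 h2
      simpa using hmax (show y ∈ {x | r₀ ≤ ‖x‖ ∧ ‖x‖ ≤ r₀ + ε} from ⟨h1, h2⟩)
    have hxz := hmax' x hx.1 hx.2
    have hx2 : 0 ≤ δ * ‖x‖ ^ 2 := by positivity
    rcases eq_or_lt_of_le hz.2 with hzo | hzo
    · have := hM z hzo
      rw [hzo] at hxz
      linarith
    exfalso
    rcases eq_or_lt_of_le hz.1 with hzi | hzi
    · -- inner sphere
      have hz0 : ‖z‖ = r₀ := hzi.symm
      set n : EuclideanSpace ℝ (Fin d) := ‖z‖⁻¹ • z with hn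
      have hnorm : ∀ t : ℝ, 0 ≤ t → ‖z + t • n‖ = r₀ + t := by
        intro t ht
        have : z + t • n = (1 + t * ‖z‖⁻¹) • z := by
          rw [hn, smul_smul, add_smul, one_smul]
        rw [this, norm_smul, hz0, Real.norm_of_nonneg (by positivity)]
        field_simp
      obtain ⟨L, hdiff, hL⟩ := hneu z hz0
      have hl : HasDerivWithinAt (fun t : ℝ => z + t • n) n (Ico 0 ε) 0 := by
        simpa using (((hasDerivAt_id (0 : ℝ)).smul_const n).const_add z).hasDerivWithinAt
      have hmaps : MapsTo (fun t : ℝ => z + t • n) (Ico 0 ε)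
          {y | r₀ ≤ ‖y‖ ∧ ‖y‖ < r₀ + ε} := by
        intro t ht
        have := hnorm t ht.1
        simp only [mem_setOf_eq, this]
        constructor <;> linarith [ht.1, ht.2]
      have hdiff' : HasFDerivWithinAt w L
          {y | r₀ ≤ ‖y‖ ∧ ‖y‖ < r₀ + ε} (z + (0 : ℝ) • n) := by
        simpa using hdiff
      have hw := hdiff'.comp_hasDerivWithinAt (0 : ℝ) hl hmaps
      rw [hL] at hw
      have hq : HasDerivWithinAt (fun t : ℝ => δ * (r₀ + t) ^ 2) (2 * δ * r₀) (Ico 0 ε) 0 := by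
        have h1 := ((((hasDerivAt_id (0 : ℝ)).const_add r₀).pow 2).const_mul δ).hasDerivWithinAt
          (s := Ico 0 ε)
        exact h1.congr_deriv (by simp; ring)
      have hg := hw.add hq
      have hlm : IsLocalMaxOn ((w ∘ fun t : ℝ => z + t • n) + fun t : ℝ => δ * (r₀ + t) ^ 2)
          (Ico 0 ε) 0 := by
        apply IsMaxOn.localize
        intro t ht
        have h1 := hnorm t ht.1
        have h2 := hmax' (z + t • n) (by rw [h1]; linarith [ht.1]) (by rw [h1]; linarith [ht.2])
        rw [h1, hz0] at h2
        simpa using h2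
      have hcone : (ε / 2 : ℝ) ∈ posTangentConeAt (Ico 0 ε) (0 : ℝ) := by
        apply mem_posTangentConeAt_of_segment_subset
        rw [zero_add, segment_eq_Icc (by linarith)]
        exact Icc_subset_Ico_right (by linarith)
      have h3 := hlm.hasFDerivWithinAt_nonpos hg.hasFDerivWithinAt hcone
      simp at h3
      have : 0 < ε / 2 * (2 * δ * r₀) := by positivity
      linarith
    · -- interior
      have hU : IsOpen {x : EuclideanSpace ℝ (Fin d) | r₀ < ‖x‖ ∧ ‖x‖ < r₀ + ε} :=
        (isOpen_lt continuous_const continuous_norm).inter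
          (isOpen_lt continuous_norm continuous_const)
      have hUz := hU.mem_nhds (show z ∈ {x : EuclideanSpace ℝ (Fin d) |
        r₀ < ‖x‖ ∧ ‖x‖ < r₀ + ε} from ⟨hzi, hzo⟩)
      have hc : ContDiffAt ℝ 2 w z := hharm.1.contDiffAt hUz
      have hlap := hharm.2 z ⟨hzi, hzo⟩
      obtain ⟨i, hi⟩ : ∃ i : Fin d, 0 ≤ iteratedFDeriv ℝ 2 w z
          ![EuclideanSpace.single i 1, EuclideanSpace.single i 1] := by
        by_contra! hcon
        have : laplacian w z < 0 :=
          Finset.sum_neg (fun i _ => hcon i) ⟨⟨0, by omega⟩, Finset.mem_univ _⟩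
        linarith
      set e : EuclideanSpace ℝ (Fin d) := EuclideanSpace.single i 1 with he
      have hnorm : ∀ t : ℝ, δ * ‖z + t • e‖ ^ 2
          = δ * ‖z‖ ^ 2 + (2 * δ * ⟪z, e⟫_ℝ) * t + δ * t ^ 2 := by
        intro t
        rw [norm_add_sq_real, norm_smul, inner_smul_right, he, EuclideanSpace.norm_single]
        simp
        ring
      have h2 := line_second_deriv w z e hc (δ * ‖z‖ ^ 2) (2 * δ * ⟪z, e⟫_ℝ) δ
      set g : ℝ → ℝ := fun t => w (z + t • e) +
        (δ * ‖z‖ ^ 2 + (2 * δ * ⟪z, e⟫_ℝ) * t + δ * t ^ 2) with hg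
      have hpos : 0 < deriv (deriv g) 0 := by rw [h2]; linarith
      have hlc : ContinuousAt (fun t : ℝ => z + t • e) 0 := by fun_prop
      have htend : Filter.Tendsto (fun t : ℝ => z + t • e) (nhds 0) (nhds z) := by
        simpa using hlc.tendsto
      have hgmax : IsLocalMax g 0 := by
        filter_upwards [htend.eventually hUz] with t ht
        have := hmax' (z + t • e) ht.1.le ht.2.le
        rw [hnorm] at this
        simpa [hg] using this
      have hgc : ContinuousAt g 0 := by
        have h5 : ContinuousAt (fun t : ℝ => w (z + t • e)) 0 := by
          have : ContinuousAt w (z + (0 : ℝ) • e) := by simpa using hc.continuousAt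
          exact ContinuousAt.comp (f := fun t : ℝ => z + t • e) this hlc
        exact h5.add (by fun_prop)
      have hgmin := isLocalMin_of_deriv_deriv_pos hpos hgmax.deriv_eq_zero hgc
      have hconst : g =ᶠ[nhds 0] fun _ => g 0 := by
        filter_upwards [hgmax, hgmin] with t h1 h2
        exact le_antisymm h1 h2
      have h6 := hconst.deriv.deriv_eq
      simp at h6
      linarith
  by_contra! hcon
  have hR : 0 < (r₀ + ε) ^ 2 := by positivity
  have := key ((w x - M) / (2 * (r₀ + ε) ^ 2)) (div_pos (by linarith) (by positivity))
  have h7 : (w x - M) / (2 * (r₀ + ε) ^ 2) * (r₀ + ε) ^ 2 = (w x - M) / 2 := by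
    field_simp
  linarith

theorem insulated_maximum_principle {d : ℕ} (hd : 2 ≤ d)
    {r₀ ε : ℝ} (hr₀ : 0 < r₀) (hε : 0 < ε)
    (w : EuclideanSpace ℝ (Fin d) → ℝ)
    (hcont : ContinuousOn w {x | r₀ ≤ ‖x‖ ∧ ‖x‖ ≤ r₀ + ε})
    (hharm : HarmonicOnSet w {x | r₀ < ‖x‖ ∧ ‖x‖ < r₀ + ε})
    (hC1 : ContDiffOn ℝ 1 w {x | r₀ ≤ ‖x‖ ∧ ‖x‖ < r₀ + ε})
    (hneu : ∀ x : EuclideanSpace ℝ (Fin d), ‖x‖ = r₀ →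
      fderivWithin ℝ w {y | r₀ ≤ ‖y‖ ∧ ‖y‖ < r₀ + ε} x (‖x‖⁻¹ • x) = 0) :
    sSup ((fun x => |w x|) '' {x | r₀ ≤ ‖x‖ ∧ ‖x‖ ≤ r₀ + ε})
      = sSup ((fun x => |w x|) '' {x | ‖x‖ = r₀ + ε}) := by
  have hK : IsCompact {x : EuclideanSpace ℝ (Fin d) | r₀ ≤ ‖x‖ ∧ ‖x‖ ≤ r₀ + ε} := by
    refine (isCompact_closedBall (0 : EuclideanSpace ℝ (Fin d)) (r₀ + ε)).of_isClosed_subset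
      ?_ ?_
    · exact (isClosed_le continuous_const continuous_norm).inter
        (isClosed_le continuous_norm continuous_const)
    · intro y hy
      simpa using hy.2
  have hbdd : BddAbove ((fun x => |w x|) '' {x | r₀ ≤ ‖x‖ ∧ ‖x‖ ≤ r₀ + ε}) :=
    (hK.image_of_continuousOn hcont.abs).bddAbove
  have hsub : {x : EuclideanSpace ℝ (Fin d) | ‖x‖ = r₀ + ε} ⊆
      {x | r₀ ≤ ‖x‖ ∧ ‖x‖ ≤ r₀ + ε} := by
    intro x hx
    have hx' : ‖x‖ = r₀ + ε := hx
    exact ⟨by linarith, hx'.le⟩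
  have hne : {x : EuclideanSpace ℝ (Fin d) | ‖x‖ = r₀ + ε}.Nonempty := by
    refine ⟨EuclideanSpace.single ⟨0, by omega⟩ (r₀ + ε), ?_⟩
    simp only [mem_setOf_eq, EuclideanSpace.norm_single]
    exact Real.norm_of_nonneg (by positivity)
  have hbdd' := hbdd.mono (image_mono hsub)
  have hout : ∀ x : EuclideanSpace ℝ (Fin d), ‖x‖ = r₀ + ε →
      |w x| ≤ sSup ((fun x => |w x|) '' {x | ‖x‖ = r₀ + ε}) :=
    fun x hx => le_csSup hbdd' ⟨x, hx, rfl⟩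
  have hF : ∀ y : EuclideanSpace ℝ (Fin d), ‖y‖ = r₀ → HasFDerivWithinAt w
      (fderivWithin ℝ w {y | r₀ ≤ ‖y‖ ∧ ‖y‖ < r₀ + ε} y)
      {y | r₀ ≤ ‖y‖ ∧ ‖y‖ < r₀ + ε} y := fun y hy =>
    (hC1.differentiableOn (by norm_num) y ⟨hy.ge, by linarith⟩).hasFDerivWithinAt
  apply le_antisymm
  · apply csSup_le ((hne.mono hsub).image _)
    rintro _ ⟨x, hx, rfl⟩
    apply abs_le'.2
    constructor
    · exact insulated_le hd hr₀ hε w hcont hharm (fun y hy => ⟨_, hF y hy, hneu y hy⟩) _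
        (fun y hy => (le_abs_self _).trans (hout y hy)) x hx
    · refine insulated_le hd hr₀ hε (-w) hcont.neg ⟨hharm.1.neg, ?_⟩ ?_ _
        (fun y hy => (neg_le_abs _).trans (hout y hy)) x hx
      · intro y hy
        have := hharm.2 y hy
        simp only [laplacian, iteratedFDeriv_neg_apply] at this ⊢
        simp [this]
      · intro y hy
        exact ⟨_, (hF y hy).neg, by simp only [neg_apply, hneu y hy, neg_zero]⟩
  · exact csSup_le_csSup hbdd (hne.image _) (image_mono hsub)
end

section
/- Let d ≥ 3 be an integer, r₀, ε > 0, and let v₁(x) := (|x|^{2−d} − (r₀+ε)^{2−d}) / (r₀^{2−d} − (r₀+ε)^{2−d}). Suppose u is continuous on the closed annulus {x ∈ ℝ^d : r₀ ≤ |x| ≤ r₀+ε}, C¹ up to its boundary, harmonic on the open annulus, u ≡ c on the inner sphere {|x| = r₀} for some constant c, the total radial flux of u across the inner sphere vanishes (∫_{{|x|=r₀}} ⟨∇u(x), x/|x|⟩ dσ(x) = 0), and u = φ on the outer sphere {|x| = r₀+ε} for a continuous function φ. Then c = (∫_{{|x|=r₀+ε}} ⟨∇v₁(x), x/|x|⟩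 φ(x) dσ(x)) / (∫_{{|x|=r₀}} ⟨∇v₁(x), x/|x|⟩ dσ(x)). -/
open MeasureTheory Metric Set
open scoped InnerProductSpace

theorem aux_finrank {d : ℕ} (hd : 3 ≤ d) (v : EuclideanSpace ℝ (Fin d)) (hv : ‖v‖ = 1) :
    (Module.finrank ℝ (ℝ ∙ v)ᗮ : ℝ) = (d : ℝ) - 1 := by
  obtain ⟨n, rfl⟩ : ∃ n, d = n + 1 := ⟨d - 1, by omega⟩
  have : Fact (Module.finrank ℝ (EuclideanSpace ℝ (Fin (n + 1))) = n + 1) := ⟨by simp⟩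
  rw [Submodule.finrank_orthogonal_span_singleton (n := n) (by rintro rfl; simp at hv)]
  simp

theorem aux_hemi {d : ℕ} (hd : 3 ≤ d) (v : EuclideanSpace ℝ (Fin d)) (hv : ‖v‖ = 1) :
    μH[(d : ℝ) - 1] {x : EuclideanSpace ℝ (Fin d) | ‖x‖ = 1 ∧ ⟪v, x⟫_ℝ ≤ 0} < ⊤ := by
  have hd1 : (0 : ℝ) ≤ (d : ℝ) - 1 := by
    have : (3 : ℝ) ≤ d := by exact_mod_cast hd
    linarith
  set g : (ℝ ∙ v)ᗮ → EuclideanSpace ℝ (Fin d) := fun w => stereoInvFunAux v (w : EuclideanSpace ℝ (Fin d))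
  have hg : ContDiff ℝ 1 g := contDiff_stereoInvFunAux.comp (ℝ ∙ v)ᗮ.subtypeL.contDiff
  have hl : LocallyLipschitz g := hg.locallyLipschitz
  obtain ⟨K, hK⟩ := (hl.locallyLipschitzOn (s := closedBall 0 2)).exists_lipschitzOnWith_of_compact
    (isCompact_closedBall 0 2)
  have h1 := hK.hausdorffMeasure_image_le hd1
  have h2 : μH[(d : ℝ) - 1] (closedBall (0 : (ℝ ∙ v)ᗮ) 2) < ⊤ := by
    rw [← aux_finrank hd v hv]
    exact (isCompact_closedBall _ _).measure_lt_top
  refine lt_of_le_of_lt (measure_mono ?_) (h1.trans_lt (ENNReal.mul_lt_top ?_ h2))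
  · rintro x ⟨hx, hvx⟩
    refine ⟨stereoToFun v x, ?_, ?_⟩
    · rw [mem_closedBall_zero_iff, stereoToFun_apply, norm_smul]
      have h3 : ‖(ℝ ∙ v)ᗮ.orthogonalProjectionOnto x‖ ≤ 1 := by
        rw [← hx]
        exact Submodule.norm_orthogonalProjectionOnto_apply_le _ _
      have h4 : ‖2 / ((1 : ℝ) - innerSL ℝ v x)‖ ≤ 2 := by
        rw [innerSL_apply_apply, Real.norm_of_nonneg (by apply div_nonneg <;> linarith)]
        rw [div_le_iff₀ (by linarith)]
        linarith
      calc _ ≤ (2 : ℝ) * 1 := mul_le_mul h4 h3 (norm_nonneg _) (by norm_num)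
        _ = 2 := by norm_num
    · have := stereo_left_inv hv (x := ⟨x, by simpa using hx⟩) (by
        rintro h
        simp only at h
        rw [h, real_inner_self_eq_norm_sq, hv] at hvx
        norm_num at hvx)
      exact congrArg Subtype.val this
  · exact ENNReal.rpow_lt_top_of_nonneg hd1 ENNReal.coe_ne_top

theorem aux_sphere_lt_top {d : ℕ} (hd : 3 ≤ d) :
    μH[(d : ℝ) - 1] (sphere (0 : EuclideanSpace ℝ (Fin d)) 1) < ⊤ := by
  set v : EuclideanSpace ℝ (Fin d) := EuclideanSpace.single ⟨0, by omega⟩ 1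
  have hv : ‖v‖ = 1 := by simp [v]
  refine lt_of_le_of_lt (measure_mono (t := {x | ‖x‖ = 1 ∧ ⟪v, x⟫_ℝ ≤ 0} ∪
    {x | ‖x‖ = 1 ∧ ⟪-v, x⟫_ℝ ≤ 0}) ?_) (measure_union_lt_top (aux_hemi hd v hv)
      (aux_hemi hd (-v) (by simpa using hv)))
  intro x hx
  have hx' : ‖x‖ = 1 := by simpa using hx
  rcases le_total ⟪v, x⟫_ℝ 0 with h | h
  · exact Or.inl ⟨hx', h⟩
  · refine Or.inr ⟨hx', ?_⟩
    rw [inner_neg_left]; linarith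

theorem aux_sphere_pos {d : ℕ} (hd : 3 ≤ d) :
    0 < μH[(d : ℝ) - 1] (sphere (0 : EuclideanSpace ℝ (Fin d)) 1) := by
  have hd1 : (0 : ℝ) ≤ (d : ℝ) - 1 := by
    have : (3 : ℝ) ≤ d := by exact_mod_cast hd
    linarith
  set v : EuclideanSpace ℝ (Fin d) := EuclideanSpace.single ⟨0, by omega⟩ 1
  have hv : ‖v‖ = 1 := by simp [v]
  have h1 := hausdorffMeasure_orthogonalProjectionOnto_le (𝕜 := ℝ) (ℝ ∙ v)ᗮ ((d : ℝ) - 1)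
    (sphere (0 : EuclideanSpace ℝ (Fin d)) 1) hd1
  have h2 : 0 < μH[(d : ℝ) - 1] (ball (0 : (ℝ ∙ v)ᗮ) 1) := by
    rw [← aux_finrank hd v hv]
    exact measure_ball_pos _ _ one_pos
  refine lt_of_lt_of_le (h2.trans_le (measure_mono ?_)) h1
  intro w hw
  rw [mem_ball_zero_iff] at hw
  have hvw : ⟪(w : EuclideanSpace ℝ (Fin d)), v⟫_ℝ = 0 :=
    Submodule.mem_orthogonal_singleton_iff_inner_left.mp w.2
  have hnn : 0 ≤ 1 - ‖w‖ ^ 2 := by nlinarith [norm_nonneg w]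
  refine ⟨(w : EuclideanSpace ℝ (Fin d)) + Real.sqrt (1 - ‖w‖ ^ 2) • v, ?_, ?_⟩
  · rw [mem_sphere_zero_iff_norm]
    have : ‖(w : EuclideanSpace ℝ (Fin d)) + Real.sqrt (1 - ‖w‖ ^ 2) • v‖ ^ 2 = 1 := by
      rw [norm_add_sq_real, inner_smul_right, hvw, norm_smul, hv, Real.norm_eq_abs, mul_one, sq_abs,
        Real.sq_sqrt hnn]
      simp
    have h0 := norm_nonneg ((w : EuclideanSpace ℝ (Fin d)) + Real.sqrt (1 - ‖w‖ ^ 2) • v)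
    nlinarith
  · rw [map_add, map_smul, Submodule.orthogonalProjectionOnto_orthogonalComplement_singleton_eq_zero]
    simp

theorem aux_scale {d : ℕ} (hd : 3 ≤ d) {r : ℝ} (hr : 0 < r) (f : EuclideanSpace ℝ (Fin d) → ℝ) :
    ∫ x in sphere (0 : EuclideanSpace ℝ (Fin d)) r, f x ∂μH[(d : ℝ) - 1] =
      r ^ ((d : ℝ) - 1) * ∫ x in sphere (0 : EuclideanSpace ℝ (Fin d)) 1, f (r • x) ∂μH[(d : ℝ) - 1] := by
  have hd1 : (0 : ℝ) ≤ (d : ℝ) - 1 := by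
    have : (3 : ℝ) ≤ d := by exact_mod_cast hd
    linarith
  have hemb : MeasurableEmbedding (fun x : EuclideanSpace ℝ (Fin d) => r • x) :=
    (Homeomorph.smulOfNeZero r hr.ne').measurableEmbedding
  have hpre : (fun x : EuclideanSpace ℝ (Fin d) => r • x) ⁻¹' (sphere 0 r) = sphere 0 1 := by
    ext x
    simp [norm_smul, abs_of_pos hr, hr.ne']
  have hmap : (μH[(d : ℝ) - 1] : Measure (EuclideanSpace ℝ (Fin d))) =
      (‖r‖₊ ^ ((d : ℝ) - 1)) • Measure.map (fun x : EuclideanSpace ℝ (Fin d) => r • x) μH[(d : ℝ) - 1] := by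
    ext s hs
    rw [Measure.smul_apply, hemb.map_apply, ← Measure.hausdorffMeasure_smul₀ hd1 hr.ne']
    congr 1
    rw [← Set.image_smul, Set.image_preimage_eq]
    exact (Homeomorph.smulOfNeZero r hr.ne').surjective
  conv_lhs => rw [hmap]
  rw [Measure.restrict_smul, hemb.restrict_map, hpre, integral_smul_nnreal_measure,
    hemb.integral_map, NNReal.smul_def]
  simp [abs_of_pos hr]

theorem aux_rot {d : ℕ} (R : EuclideanSpace ℝ (Fin d) →L[ℝ] EuclideanSpace ℝ (Fin d))
    (hR : ∀ x, ‖R x‖ = ‖x‖) (f : EuclideanSpace ℝ (Fin d) → ℝ) :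
    ∫ x in sphere (0 : EuclideanSpace ℝ (Fin d)) 1, f (R x) ∂μH[(d : ℝ) - 1] =
      ∫ x in sphere (0 : EuclideanSpace ℝ (Fin d)) 1, f x ∂μH[(d : ℝ) - 1] := by
  let e : EuclideanSpace ℝ (Fin d) ≃ₗᵢ[ℝ] EuclideanSpace ℝ (Fin d) :=
    (LinearIsometry.mk (R : EuclideanSpace ℝ (Fin d) →ₗ[ℝ] EuclideanSpace ℝ (Fin d)) hR).toLinearIsometryEquiv rfl
  have he : ∀ x, e x = R x := fun x => rfl
  have hmp := e.toIsometryEquiv.measurePreserving_hausdorffMeasure ((d : ℝ) - 1)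
  have hemb : MeasurableEmbedding e.toIsometryEquiv :=
    e.toIsometryEquiv.toHomeomorph.measurableEmbedding
  have := hmp.setIntegral_preimage_emb hemb f (sphere 0 1)
  rw [← this]
  have hpre : e.toIsometryEquiv ⁻¹' (sphere 0 1) = sphere 0 1 := by
    ext x
    simp
  rw [hpre]
  rfl
section
variable {E : Type*} [NormedAddCommGroup E] [NormedSpace ℝ E] [MeasurableSpace E] [BorelSpace E]
  [SecondCountableTopology E]

theorem aux_integrableOn (μ : Measure E) {S : Set E} (hS : IsCompact S) (hμ : μ S < ⊤)
    {f : E → ℝ} (hf : ContinuousOn f S) : IntegrableOn f S μ := by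
  obtain ⟨C, hC⟩ := hS.exists_bound_of_continuousOn hf
  refine IntegrableOn.of_bound hμ (hf.aestronglyMeasurable hS.measurableSet) C ?_
  exact (ae_restrict_mem hS.measurableSet).mono hC

theorem aux_cont (μ : Measure E) {S : Set E} (hS : IsCompact S) (hμ : μ S < ⊤)
    {K : Set ℝ} (hK : IsCompact K) (h : ℝ → E → ℝ)
    (hh : ContinuousOn (fun p : ℝ × E => h p.1 p.2) (K ×ˢ S)) :
    ContinuousOn (fun t => ∫ x in S, h t x ∂μ) K := by
  obtain ⟨C, hC⟩ := (hK.prod hS).exists_bound_of_continuousOn hh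
  refine continuousOn_of_dominated (bound := fun _ => C) ?_ ?_ ?_ ?_
  · intro t ht
    refine ContinuousOn.aestronglyMeasurable ?_ hS.measurableSet
    exact hh.comp (f := fun x => (t, x)) (by fun_prop) (fun x hx => ⟨ht, hx⟩)
  · intro t ht
    exact (ae_restrict_mem hS.measurableSet).mono fun x hx => hC (t, x) ⟨ht, hx⟩
  · exact integrableOn_const hμ.ne
  · refine (ae_restrict_mem hS.measurableSet).mono fun x hx => ?_
    exact hh.comp (f := fun t => (t, x)) (by fun_prop) (fun t ht => ⟨ht, hx⟩)

theorem aux_deriv (μ : Measure E) {S : Set E} (hS : IsCompact S) (hμ : μ S < ⊤)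
    {U : Set E} (hU : IsOpen U) {f : E → ℝ} (hf : ContDiffOn ℝ 1 f U)
    (Γ Γ' : ℝ → E →L[ℝ] E) (hΓ : ∀ t, HasDerivAt Γ (Γ' t) t) (hΓ' : Continuous Γ')
    (t₀ : ℝ) (hin : ∀ x ∈ S, Γ t₀ x ∈ U) :
    HasDerivAt (fun t => ∫ x in S, f (Γ t x) ∂μ)
      (∫ x in S, fderiv ℝ f (Γ t₀ x) (Γ' t₀ x) ∂μ) t₀ := by
  have hΓc : Continuous Γ := continuous_iff_continuousAt.2 fun t => (hΓ t).continuousAt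
  have hΓj : Continuous (fun p : ℝ × E => Γ p.1 p.2) :=
    (hΓc.comp continuous_fst).clm_apply continuous_snd
  have hΓ'j : Continuous (fun p : ℝ × E => Γ' p.1 p.2) :=
    (hΓ'.comp continuous_fst).clm_apply continuous_snd
  have hW : IsOpen ((fun p : ℝ × E => Γ p.1 p.2) ⁻¹' U) := hU.preimage hΓj
  obtain ⟨a, b, ha, hb, hta, hSb, hab⟩ := generalized_tube_lemma (isCompact_singleton (x := t₀)) hS hW
    (by rintro ⟨t, x⟩ ⟨ht, hx⟩; rw [mem_singleton_iff] at ht; simp only at ht; subst ht; exact hin x hx)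
  obtain ⟨δ, hδ, hδa⟩ := Metric.nhds_basis_closedBall.mem_iff.1 (ha.mem_nhds (hta rfl))
  have hmem : ∀ t ∈ closedBall t₀ δ, ∀ x ∈ S, Γ t x ∈ U := fun t ht x hx =>
    hab (show (t, x) ∈ a ×ˢ b from ⟨hδa ht, hSb hx⟩)
  have hf' : ContinuousOn (fderiv ℝ f) U := hf.continuousOn_fderiv_of_isOpen hU le_rfl
  have hF' : ContinuousOn (fun p : ℝ × E => fderiv ℝ f (Γ p.1 p.2) (Γ' p.1 p.2))
      (closedBall t₀ δ ×ˢ S) := by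
    refine ContinuousOn.clm_apply ?_ hΓ'j.continuousOn
    exact hf'.comp hΓj.continuousOn fun p hp => hmem p.1 hp.1 p.2 hp.2
  have hcf : ∀ t ∈ closedBall t₀ δ, ContinuousOn (fun x => f (Γ t x)) S := fun t ht =>
    hf.continuousOn.comp (Γ t).continuous.continuousOn fun x hx => hmem t ht x hx
  obtain ⟨C, hC⟩ := ((isCompact_closedBall t₀ δ).prod hS).exists_bound_of_continuousOn hF'
  have h0 : t₀ ∈ closedBall t₀ δ := mem_closedBall_self hδ.le
  refine (hasDerivAt_integral_of_dominated_loc_of_deriv_le (bound := fun _ => C)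
    (F := fun t x => f (Γ t x))
    (F' := fun t x => fderiv ℝ f (Γ t x) (Γ' t x)) (closedBall_mem_nhds t₀ hδ) ?_ ?_ ?_ ?_ ?_ ?_).2
  · filter_upwards [closedBall_mem_nhds t₀ hδ] with t ht
    exact (hcf t ht).aestronglyMeasurable hS.measurableSet
  · exact aux_integrableOn μ hS hμ (hcf t₀ h0)
  · refine ContinuousOn.aestronglyMeasurable ?_ hS.measurableSet
    exact hF'.comp (f := fun x => (t₀, x)) (by fun_prop) (fun x hx => ⟨h0, hx⟩)
  · exact (ae_restrict_mem hS.measurableSet).mono fun x hx t ht => hC (t, x) ⟨ht, hx⟩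
  · exact integrableOn_const hμ.ne
  · refine (ae_restrict_mem hS.measurableSet).mono fun x hx t ht => ?_
    have h1 : HasFDerivAt f (fderiv ℝ f (Γ t x)) (Γ t x) :=
      ((hf.differentiableOn one_ne_zero).differentiableAt (hU.mem_nhds (hmem t ht x hx))).hasFDerivAt
    have h2 : HasDerivAt (fun s => Γ s x) (Γ' t x) t := by
      simpa using (hΓ t).clm_apply (hasDerivAt_const t x)
    exact h1.comp_hasDerivAt t h2
end

theorem aux_exp0 {d : ℕ} (J : EuclideanSpace ℝ (Fin d) →L[ℝ] EuclideanSpace ℝ (Fin d)) :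
    NormedSpace.exp ((0 : ℝ) • J) = 1 := by
  have h : (0 : ℝ) • J = 0 := by ext; simp
  rw [h, NormedSpace.exp_zero]

theorem aux_exp_norm {d : ℕ} (J : EuclideanSpace ℝ (Fin d) →L[ℝ] EuclideanSpace ℝ (Fin d))
    (hJ : ∀ x, ⟪J x, x⟫_ℝ = 0) (t : ℝ) (x : EuclideanSpace ℝ (Fin d)) :
    ‖NormedSpace.exp (t • J) x‖ = ‖x‖ := by
  have hd : ∀ s : ℝ, HasDerivAt (fun s : ℝ => ‖NormedSpace.exp (s • J) x‖ ^ 2) 0 s := by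
    intro s
    have h1 : HasDerivAt (fun s : ℝ => NormedSpace.exp (s • J) x) (J (NormedSpace.exp (s • J) x)) s := by
      simpa using (hasDerivAt_exp_smul_const' J s).clm_apply (hasDerivAt_const s x)
    have h2 := h1.norm_sq
    rw [real_inner_comm, hJ] at h2
    simpa using h2
  have := is_const_of_deriv_eq_zero (fun s => (hd s).differentiableAt) (fun s => (hd s).deriv) t 0
  simp only [aux_exp0] at this
  simpa using this

theorem aux_skew {d : ℕ} (hμ : μH[(d : ℝ) - 1] (sphere (0 : EuclideanSpace ℝ (Fin d)) 1) < ⊤)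
    (hrot : ∀ R : EuclideanSpace ℝ (Fin d) →L[ℝ] EuclideanSpace ℝ (Fin d), (∀ x, ‖R x‖ = ‖x‖) →
      ∀ f : EuclideanSpace ℝ (Fin d) → ℝ,
    ∫ x in sphere (0 : EuclideanSpace ℝ (Fin d)) 1, f (R x) ∂μH[(d : ℝ) - 1] =
      ∫ x in sphere (0 : EuclideanSpace ℝ (Fin d)) 1, f x ∂μH[(d : ℝ) - 1])
    {U : Set (EuclideanSpace ℝ (Fin d))} (hU : IsOpen U) {r : ℝ}
    (hr : ∀ x : EuclideanSpace ℝ (Fin d), ‖x‖ = 1 → r • x ∈ U)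
    {f : EuclideanSpace ℝ (Fin d) → ℝ} (hf : ContDiffOn ℝ 1 f U)
    (J : EuclideanSpace ℝ (Fin d) →L[ℝ] EuclideanSpace ℝ (Fin d)) (hJ : ∀ x, ⟪J x, x⟫_ℝ = 0) :
    ∫ x in sphere (0 : EuclideanSpace ℝ (Fin d)) 1, fderiv ℝ f (r • x) (J (r • x))
      ∂μH[(d : ℝ) - 1] = 0 := by
  have hΓ : ∀ t : ℝ, HasDerivAt (fun t : ℝ => r • NormedSpace.exp (t • J))
      (r • (NormedSpace.exp (t • J) * J)) t := fun t => (hasDerivAt_exp_smul_const J t).const_smul r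
  have hΓ' : Continuous (fun t : ℝ => r • (NormedSpace.exp (t • J) * J)) := by
    have : Continuous (fun t : ℝ => NormedSpace.exp (t • J)) :=
      continuous_iff_continuousAt.2 fun t => (hasDerivAt_exp_smul_const J t).continuousAt
    exact (this.mul continuous_const).const_smul r
  have h := aux_deriv μH[(d : ℝ) - 1] (isCompact_sphere (0 : EuclideanSpace ℝ (Fin d)) 1) hμ hU hf
    _ _ hΓ hΓ' 0 (by intro x hx; simpa [aux_exp0] using hr x (by simpa using hx))
  have hc : (fun t : ℝ => ∫ x in sphere (0 : EuclideanSpace ℝ (Fin d)) 1,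
      f ((r • NormedSpace.exp (t • J)) x) ∂μH[(d : ℝ) - 1]) = fun _ =>
      ∫ x in sphere (0 : EuclideanSpace ℝ (Fin d)) 1, f (r • x) ∂μH[(d : ℝ) - 1] := by
    ext t
    exact hrot (NormedSpace.exp (t • J)) (aux_exp_norm J hJ t) (fun x => f (r • x))
  rw [hc] at h
  have := h.unique (hasDerivAt_const _ _)
  simpa [aux_exp0] using this

noncomputable def auxJ {d : ℕ} (i j : Fin d) :
    EuclideanSpace ℝ (Fin d) →L[ℝ] EuclideanSpace ℝ (Fin d) :=
  (EuclideanSpace.proj i : EuclideanSpace ℝ (Fin d) →L[ℝ] ℝ).smulRight (EuclideanSpace.single j 1)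
    - (EuclideanSpace.proj j : EuclideanSpace ℝ (Fin d) →L[ℝ] ℝ).smulRight (EuclideanSpace.single i 1)

theorem auxJ_apply {d : ℕ} (i j : Fin d) (x : EuclideanSpace ℝ (Fin d)) :
    auxJ i j x = x i • EuclideanSpace.single j 1 - x j • EuclideanSpace.single i 1 := by
  simp [auxJ]

theorem auxJ_skew {d : ℕ} (i j : Fin d) (x : EuclideanSpace ℝ (Fin d)) : ⟪auxJ i j x, x⟫_ℝ = 0 := by
  rw [auxJ_apply, inner_sub_left, inner_smul_left, inner_smul_left,
    EuclideanSpace.inner_single_left, EuclideanSpace.inner_single_left]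
  simp; ring

theorem aux_expand {d : ℕ} (x : EuclideanSpace ℝ (Fin d)) :
    x = ∑ i, x i • EuclideanSpace.single i (1 : ℝ) := by
  ext k
  simp [Pi.single_apply]

theorem auxJ_sum_sq {d : ℕ} (x : EuclideanSpace ℝ (Fin d)) :
    ∑ i, ∑ j, auxJ i j (auxJ i j x) = (2 - 2 * (d : ℝ)) • x := by
  ext k
  simp [auxJ_apply, Pi.single_apply, Finset.sum_sub_distrib, sub_mul, mul_ite]
  ring

theorem auxJ_sum_bilin {d : ℕ}
    (B : EuclideanSpace ℝ (Fin d) →L[ℝ] EuclideanSpace ℝ (Fin d) →L[ℝ] ℝ)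
    (x : EuclideanSpace ℝ (Fin d)) :
    ∑ i, ∑ j, B (auxJ i j x) (auxJ i j x) =
      2 * ‖x‖ ^ 2 * ∑ i, B (EuclideanSpace.single i 1) (EuclideanSpace.single i 1) - 2 * B x x := by
  have h1 : B x x = ∑ i, ∑ j, x i * x j * B (EuclideanSpace.single i 1) (EuclideanSpace.single j 1) := by
    conv_lhs => rw [aux_expand x]
    simp only [map_sum, map_smul, sum_apply, smul_apply,
      smul_eq_mul, Finset.mul_sum]
    rw [Finset.sum_comm]
    refine Finset.sum_congr rfl fun i _ => Finset.sum_congr rfl fun j _ => by ring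
  have h2 : B x x = ∑ i, ∑ j, x i * x j * B (EuclideanSpace.single j 1) (EuclideanSpace.single i 1) := by
    rw [h1, Finset.sum_comm]
    refine Finset.sum_congr rfl fun i _ => Finset.sum_congr rfl fun j _ => by ring
  have h3 : ‖x‖ ^ 2 * ∑ i, B (EuclideanSpace.single i 1) (EuclideanSpace.single i 1) =
      ∑ i, ∑ j, x i ^ 2 * B (EuclideanSpace.single j 1) (EuclideanSpace.single j 1) := by
    rw [EuclideanSpace.norm_sq_eq, Finset.sum_mul_sum]
    simp
  have h4 : ‖x‖ ^ 2 * ∑ i, B (EuclideanSpace.single i 1) (EuclideanSpace.single i 1) =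
      ∑ i, ∑ j, x j ^ 2 * B (EuclideanSpace.single i 1) (EuclideanSpace.single i 1) := by
    rw [h3, Finset.sum_comm]
  have : ∑ i, ∑ j, B (auxJ i j x) (auxJ i j x) =
    (∑ i, ∑ j, x i ^ 2 * B (EuclideanSpace.single j 1) (EuclideanSpace.single j 1)) +
    (∑ i, ∑ j, x j ^ 2 * B (EuclideanSpace.single i 1) (EuclideanSpace.single i 1)) -
    (∑ i, ∑ j, x i * x j * B (EuclideanSpace.single i 1) (EuclideanSpace.single j 1)) -
    (∑ i, ∑ j, x i * x j * B (EuclideanSpace.single j 1) (EuclideanSpace.single i 1)) := by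
    simp only [← Finset.sum_add_distrib, ← Finset.sum_sub_distrib]
    refine Finset.sum_congr rfl fun i _ => Finset.sum_congr rfl fun j _ => ?_
    rw [auxJ_apply]
    simp only [map_sub, map_smul, sub_apply, smul_apply,
      smul_eq_mul]
    ring
  rw [this, ← h1, ← h2, ← h3, ← h4]
  ring

theorem aux_fderiv_lin {d : ℕ} {U : Set (EuclideanSpace ℝ (Fin d))} (hU : IsOpen U)
    {u : EuclideanSpace ℝ (Fin d) → ℝ} (hu : ContDiffOn ℝ 2 u U)
    (L : EuclideanSpace ℝ (Fin d) →L[ℝ] EuclideanSpace ℝ (Fin d)) :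
    ContDiffOn ℝ 1 (fun x => fderiv ℝ u x (L x)) U ∧
    ∀ x ∈ U, ∀ w, fderiv ℝ (fun x => fderiv ℝ u x (L x)) x w =
      fderiv ℝ (fderiv ℝ u) x w (L x) + fderiv ℝ u x (L w) := by
  have h1 : ContDiffOn ℝ 1 (fderiv ℝ u) U := hu.fderiv_of_isOpen hU (by norm_num)
  refine ⟨h1.clm_apply L.contDiff.contDiffOn, fun x hx w => ?_⟩
  have h2 : HasFDerivAt (fderiv ℝ u) (fderiv ℝ (fderiv ℝ u) x) x :=
    ((h1.differentiableOn one_ne_zero).differentiableAt (hU.mem_nhds hx)).hasFDerivAt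
  rw [(h2.clm_apply L.hasFDerivAt).fderiv]
  simp [add_comm]

theorem aux_radial {d : ℕ} (hd : 3 ≤ d) {U : Set (EuclideanSpace ℝ (Fin d))} (hU : IsOpen U)
    {u : EuclideanSpace ℝ (Fin d) → ℝ} (hu : HarmonicOnSet u U) {r : ℝ}
    (hr : ∀ x : EuclideanSpace ℝ (Fin d), ‖x‖ = 1 → r • x ∈ U) :
    ∃ P' : ℝ, HasDerivAt (fun t : ℝ => ∫ x in sphere (0 : EuclideanSpace ℝ (Fin d)) 1,
      fderiv ℝ u (t • x) (t • x) ∂μH[(d : ℝ) - 1]) P' r ∧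
      r * P' = - ((d : ℝ) - 2) * ∫ x in sphere (0 : EuclideanSpace ℝ (Fin d)) 1,
      fderiv ℝ u (r • x) (r • x) ∂μH[(d : ℝ) - 1] := by
  have hμ := aux_sphere_lt_top hd
  have hS := isCompact_sphere (0 : EuclideanSpace ℝ (Fin d)) 1
  have hrS : ∀ x ∈ sphere (0 : EuclideanSpace ℝ (Fin d)) 1, r • x ∈ U := fun x hx =>
    hr x (by simpa using hx)
  obtain ⟨hH, hH'⟩ := aux_fderiv_lin hU hu.1 (ContinuousLinearMap.id ℝ _)
  have h1 : ContDiffOn ℝ 1 (fderiv ℝ u) U := hu.1.fderiv_of_isOpen hU (by norm_num)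
  have h2 : ContinuousOn (fderiv ℝ (fderiv ℝ u)) U := h1.continuousOn_fderiv_of_isOpen hU le_rfl
  have hc1 : ContinuousOn (fun x : EuclideanSpace ℝ (Fin d) => fderiv ℝ u (r • x)) (sphere 0 1) :=
    h1.continuousOn.comp (by fun_prop) hrS
  have hc2 : ContinuousOn (fun x : EuclideanSpace ℝ (Fin d) => fderiv ℝ (fderiv ℝ u) (r • x))
    (sphere 0 1) := h2.comp (by fun_prop) hrS
  have hder := aux_deriv μH[(d : ℝ) - 1] hS hμ hU hH
    (fun t => t • ContinuousLinearMap.id ℝ _) (fun _ => ContinuousLinearMap.id ℝ _)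
    (fun t => by simpa using (hasDerivAt_id t).smul_const (ContinuousLinearMap.id ℝ (EuclideanSpace ℝ (Fin d))))
    continuous_const r (by intro x hx; simpa using hrS x hx)
  refine ⟨_, hder, ?_⟩
  have hI1 : IntegrableOn (fun x : EuclideanSpace ℝ (Fin d) => fderiv ℝ u (r • x) (r • x))
      (sphere 0 1) μH[(d : ℝ) - 1] :=
    aux_integrableOn _ hS hμ (hc1.clm_apply (by fun_prop))
  have hI2 : IntegrableOn (fun x : EuclideanSpace ℝ (Fin d) =>
      fderiv ℝ (fderiv ℝ u) (r • x) (r • x) (r • x)) (sphere 0 1) μH[(d : ℝ) - 1] :=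
    aux_integrableOn _ hS hμ ((hc2.clm_apply (by fun_prop)).clm_apply (by fun_prop))
  have hlhs : r * ∫ x in sphere (0 : EuclideanSpace ℝ (Fin d)) 1,
      fderiv ℝ (fun x => fderiv ℝ u x ((ContinuousLinearMap.id ℝ _) x))
        ((r • ContinuousLinearMap.id ℝ (EuclideanSpace ℝ (Fin d))) x)
        ((ContinuousLinearMap.id ℝ (EuclideanSpace ℝ (Fin d))) x) ∂μH[(d : ℝ) - 1] =
      (∫ x in sphere (0 : EuclideanSpace ℝ (Fin d)) 1,
        fderiv ℝ (fderiv ℝ u) (r • x) (r • x) (r • x) ∂μH[(d : ℝ) - 1]) +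
      ∫ x in sphere (0 : EuclideanSpace ℝ (Fin d)) 1,
        fderiv ℝ u (r • x) (r • x) ∂μH[(d : ℝ) - 1] := by
    rw [← integral_add hI2 hI1, ← integral_const_mul]
    refine setIntegral_congr_fun hS.measurableSet fun x hx => ?_
    have := hH' (r • x) (hrS x hx) x
    simp only [ContinuousLinearMap.id_apply, smul_apply] at this ⊢
    rw [this]
    simp only [map_smul, smul_apply, smul_eq_mul]
    ring
  have hJ : ∀ i j : Fin d, ∫ x in sphere (0 : EuclideanSpace ℝ (Fin d)) 1,
      (fderiv ℝ (fderiv ℝ u) (r • x) (auxJ i j (r • x)) (auxJ i j (r • x)) +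
        fderiv ℝ u (r • x) (auxJ i j (auxJ i j (r • x)))) ∂μH[(d : ℝ) - 1] = 0 := by
    intro i j
    obtain ⟨hG, hG'⟩ := aux_fderiv_lin hU hu.1 (auxJ i j)
    rw [← aux_skew hμ (fun R hR f => aux_rot R hR f) hU hr hG (auxJ i j) (auxJ_skew i j)]
    refine setIntegral_congr_fun hS.measurableSet fun x hx => ?_
    exact (hG' (r • x) (hrS x hx) _).symm
  have hIJ : ∀ i j : Fin d, IntegrableOn (fun x : EuclideanSpace ℝ (Fin d) =>
      (fderiv ℝ (fderiv ℝ u) (r • x) (auxJ i j (r • x)) (auxJ i j (r • x)) +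
        fderiv ℝ u (r • x) (auxJ i j (auxJ i j (r • x))))) (sphere 0 1) μH[(d : ℝ) - 1] := by
    intro i j
    refine aux_integrableOn _ hS hμ (ContinuousOn.add ?_ ?_)
    · exact (hc2.clm_apply (by fun_prop)).clm_apply (by fun_prop)
    · exact hc1.clm_apply (by fun_prop)
  have hsum : ∫ x in sphere (0 : EuclideanSpace ℝ (Fin d)) 1, ∑ i, ∑ j,
      (fderiv ℝ (fderiv ℝ u) (r • x) (auxJ i j (r • x)) (auxJ i j (r • x)) +
        fderiv ℝ u (r • x) (auxJ i j (auxJ i j (r • x)))) ∂μH[(d : ℝ) - 1] = 0 := by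
    rw [integral_finsetSum _ (fun i _ => integrable_finsetSum _ fun j _ => hIJ i j)]
    refine Finset.sum_eq_zero fun i _ => ?_
    rw [integral_finsetSum _ (fun j _ => hIJ i j)]
    exact Finset.sum_eq_zero fun j _ => hJ i j
  have hsum2 : ∫ x in sphere (0 : EuclideanSpace ℝ (Fin d)) 1,
      ((-2) * fderiv ℝ (fderiv ℝ u) (r • x) (r • x) (r • x) +
        (2 - 2 * (d : ℝ)) * fderiv ℝ u (r • x) (r • x)) ∂μH[(d : ℝ) - 1] = 0 := by
    rw [← hsum]
    refine setIntegral_congr_fun hS.measurableSet fun x hx => ?_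
    have hlap := hu.2 (r • x) (hrS x hx)
    simp only [laplacian, iteratedFDeriv_two_apply] at hlap
    simp only [Finset.sum_add_distrib]
    rw [auxJ_sum_bilin]
    simp only [← map_sum]
    rw [auxJ_sum_sq]
    simp at hlap
    rw [hlap]
    simp only [map_smul, smul_eq_mul]
    ring
  rw [integral_add (hI2.const_mul _) (hI1.const_mul _), integral_const_mul, integral_const_mul] at hsum2
  rw [hlhs]
  linarith

theorem aux_uniqueDiff {d : ℕ} {r₀ ε : ℝ} (hr₀ : 0 < r₀) (hε : 0 < ε) :
    UniqueDiffOn ℝ {x : EuclideanSpace ℝ (Fin d) | r₀ ≤ ‖x‖ ∧ ‖x‖ ≤ r₀ + ε} := by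
  rintro x ⟨h1, h2⟩
  have hx : 0 < ‖x‖ := hr₀.trans_le h1
  set p : EuclideanSpace ℝ (Fin d) := ((r₀ + ε / 2) / ‖x‖) • x
  have hp : ‖p‖ = r₀ + ε / 2 := by
    rw [norm_smul, Real.norm_of_nonneg (by positivity)]
    field_simp
  have hxp : x ∈ closedBall p (ε / 2) := by
    rw [mem_closedBall, dist_eq_norm]
    have : x - p = (1 - (r₀ + ε / 2) / ‖x‖) • x := by rw [sub_smul, one_smul]
    rw [this, norm_smul, Real.norm_eq_abs, ← abs_of_pos hx, ← abs_mul, abs_of_pos hx, sub_mul,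
      div_mul_cancel₀ _ hx.ne', abs_le]
    constructor <;> linarith
  have hne : (interior (closedBall p (ε / 2))).Nonempty :=
    ⟨p, ball_subset_interior_closedBall (mem_ball_self (by positivity))⟩
  refine (uniqueDiffWithinAt_convex (convex_closedBall p (ε / 2)) hne (subset_closure hxp)).mono ?_
  intro y hy
  rw [mem_closedBall, dist_eq_norm] at hy
  have h3 := abs_le.1 ((abs_norm_sub_norm_le y p).trans hy)
  rw [hp] at h3
  exact ⟨by linarith [h3.1], by linarith [h3.2]⟩

theorem aux_grad {d : ℕ} {a D p : ℝ} (x : EuclideanSpace ℝ (Fin d)) (hx : 0 < ‖x‖) :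
    ⟪gradient (fun x : EuclideanSpace ℝ (Fin d) => (‖x‖ ^ p - a) / D) x, ‖x‖⁻¹ • x⟫_ℝ =
      p * ‖x‖ ^ (p - 1) / D := by
  have hdiff : DifferentiableAt ℝ (fun x : EuclideanSpace ℝ (Fin d) => (‖x‖ ^ p - a) / D) x := by
    have h1 : DifferentiableAt ℝ (fun x : EuclideanSpace ℝ (Fin d) => ‖x‖) x :=
      (contDiffAt_norm ℝ (norm_pos_iff.1 hx)).differentiableAt one_ne_zero
    have h2 : DifferentiableAt ℝ (fun x : EuclideanSpace ℝ (Fin d) => ‖x‖ ^ p) x :=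
      h1.rpow_const (Or.inl hx.ne')
    simp only [div_eq_mul_inv]
    exact (h2.sub_const a).mul_const D⁻¹
  rw [gradient, InnerProductSpace.toDual_symm_apply]
  have h2 : HasDerivAt (fun t : ℝ => x + t • (‖x‖⁻¹ • x)) (‖x‖⁻¹ • x) 0 := by
    simpa using ((hasDerivAt_id (0 : ℝ)).smul_const (‖x‖⁻¹ • x)).const_add x
  have hd0 := hdiff.hasFDerivAt
  have h3 : HasDerivAt (fun t : ℝ => (‖x + t • (‖x‖⁻¹ • x)‖ ^ p - a) / D)
      (fderiv ℝ (fun x : EuclideanSpace ℝ (Fin d) => (‖x‖ ^ p - a) / D) x (‖x‖⁻¹ • x)) 0 :=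
    HasFDerivAt.comp_hasDerivAt_of_eq (0 : ℝ) hd0 h2 (by simp)
  have h4 : HasDerivAt (fun t : ℝ => ((‖x‖ + t) ^ p - a) / D) (p * ‖x‖ ^ (p - 1) / D) 0 := by
    have := (((hasDerivAt_id (0 : ℝ)).const_add ‖x‖).rpow_const (p := p) (Or.inl (by simpa using hx.ne')))
    simpa using (this.sub_const a).div_const D
  refine h3.unique (h4.congr_of_eventuallyEq ?_)
  filter_upwards [Ioi_mem_nhds (show -‖x‖ < 0 by linarith)] with t ht
  have : x + t • (‖x‖⁻¹ • x) = ((‖x‖ + t) / ‖x‖) • x := by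
    rw [smul_smul, add_div, div_self hx.ne', add_smul, one_smul, div_eq_mul_inv]
  rw [this, norm_smul, Real.norm_of_nonneg (div_nonneg (by linarith [mem_Ioi.1 ht]) hx.le),
    div_mul_cancel₀ _ hx.ne']

theorem aux_smul_id {d : ℕ} (t : ℝ) :
    HasDerivAt (fun t : ℝ => t • ContinuousLinearMap.id ℝ (EuclideanSpace ℝ (Fin d)))
      (ContinuousLinearMap.id ℝ (EuclideanSpace ℝ (Fin d))) t := by
  simpa using (hasDerivAt_id t).smul_const (ContinuousLinearMap.id ℝ (EuclideanSpace ℝ (Fin d)))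

theorem perfect_conductivity_free_constant {d : ℕ} (hd : 3 ≤ d)
    {r₀ ε : ℝ} (hr₀ : 0 < r₀) (hε : 0 < ε)
    (u φ : EuclideanSpace ℝ (Fin d) → ℝ) (c : ℝ)
    (hcont : ContinuousOn u {x | r₀ ≤ ‖x‖ ∧ ‖x‖ ≤ r₀ + ε})
    (hC1 : ContDiffOn ℝ 1 u {x | r₀ ≤ ‖x‖ ∧ ‖x‖ ≤ r₀ + ε})
    (hharm : HarmonicOnSet u {x | r₀ < ‖x‖ ∧ ‖x‖ < r₀ + ε})
    (hinner : ∀ x : EuclideanSpace ℝ (Fin d), ‖x‖ = r₀ → u x = c)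
    (hflux : (∫ x in Metric.sphere (0 : EuclideanSpace ℝ (Fin d)) r₀,
      fderivWithin ℝ u {y | r₀ ≤ ‖y‖ ∧ ‖y‖ ≤ r₀ + ε} x (‖x‖⁻¹ • x) ∂μH[(d : ℝ) - 1]) = 0)
    (hφ : ContinuousOn φ (Metric.sphere (0 : EuclideanSpace ℝ (Fin d)) (r₀ + ε)))
    (houter : ∀ x : EuclideanSpace ℝ (Fin d), ‖x‖ = r₀ + ε → u x = φ x) :
    let v₁ : EuclideanSpace ℝ (Fin d) → ℝ := fun x =>
      (‖x‖ ^ ((2 : ℝ) - (d : ℝ)) - (r₀ + ε) ^ ((2 : ℝ) - (d : ℝ)))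
        / (r₀ ^ ((2 : ℝ) - (d : ℝ)) - (r₀ + ε) ^ ((2 : ℝ) - (d : ℝ)))
    c = (∫ x in Metric.sphere (0 : EuclideanSpace ℝ (Fin d)) (r₀ + ε),
          ⟪gradient v₁ x, ‖x‖⁻¹ • x⟫_ℝ * φ x ∂μH[(d : ℝ) - 1])
        / (∫ x in Metric.sphere (0 : EuclideanSpace ℝ (Fin d)) r₀,
          ⟪gradient v₁ x, ‖x‖⁻¹ • x⟫_ℝ ∂μH[(d : ℝ) - 1]) := by
  intro v₁
  set A : Set (EuclideanSpace ℝ (Fin d)) := {x | r₀ ≤ ‖x‖ ∧ ‖x‖ ≤ r₀ + ε} with hA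
  set U : Set (EuclideanSpace ℝ (Fin d)) := {x | r₀ < ‖x‖ ∧ ‖x‖ < r₀ + ε} with hUdef
  have hU : IsOpen U := (isOpen_lt continuous_const continuous_norm).inter
    (isOpen_lt continuous_norm continuous_const)
  have hUA : U ⊆ A := fun x hx => ⟨hx.1.le, hx.2.le⟩
  have hμ := aux_sphere_lt_top hd
  have hμ0 := aux_sphere_pos hd
  have hS := isCompact_sphere (0 : EuclideanSpace ℝ (Fin d)) 1
  have hR : 0 < r₀ + ε := by linarith
  have hd3 : (3 : ℝ) ≤ d := by exact_mod_cast hd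
  -- membership
  have hnorm : ∀ t : ℝ, 0 < t → ∀ x : EuclideanSpace ℝ (Fin d), ‖x‖ = 1 → ‖t • x‖ = t := by
    intro t ht x hx
    rw [norm_smul, hx, mul_one, Real.norm_of_nonneg ht.le]
  have hmemA : ∀ t ∈ Icc r₀ (r₀ + ε), ∀ x ∈ sphere (0 : EuclideanSpace ℝ (Fin d)) 1, t • x ∈ A := by
    intro t ht x hx
    have := hnorm t (hr₀.trans_le ht.1) x (by simpa using hx)
    exact ⟨by rw [this]; exact ht.1, by rw [this]; exact ht.2⟩
  have hmemU : ∀ t ∈ Ioo r₀ (r₀ + ε), ∀ x : EuclideanSpace ℝ (Fin d), ‖x‖ = 1 → t • x ∈ U := by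
    intro t ht x hx
    have := hnorm t (hr₀.trans ht.1) x hx
    exact ⟨by rw [this]; exact ht.1, by rw [this]; exact ht.2⟩
  have hfw : ContinuousOn (fderivWithin ℝ u A) A :=
    hC1.continuousOn_fderivWithin (aux_uniqueDiff hr₀ hε) le_rfl
  have hfeq : ∀ x ∈ U, fderivWithin ℝ u A x = fderiv ℝ u x := fun x hx =>
    fderivWithin_of_mem_nhds (Filter.mem_of_superset (hU.mem_nhds hx) hUA)
  set m : ℝ → ℝ := fun t => ∫ x in sphere (0 : EuclideanSpace ℝ (Fin d)) 1,
    u (t • x) ∂μH[(d : ℝ) - 1] with hm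
  set M : ℝ → ℝ := fun t => ∫ x in sphere (0 : EuclideanSpace ℝ (Fin d)) 1,
    fderivWithin ℝ u A (t • x) x ∂μH[(d : ℝ) - 1] with hM
  have hmc : ContinuousOn m (Icc r₀ (r₀ + ε)) :=
    aux_cont _ hS hμ isCompact_Icc (fun t x => u (t • x))
      (hcont.comp (by fun_prop) fun p hp => hmemA p.1 hp.1 p.2 hp.2)
  have hMc : ContinuousOn M (Icc r₀ (r₀ + ε)) :=
    aux_cont _ hS hμ isCompact_Icc (fun t x => fderivWithin ℝ u A (t • x) x)
      ((hfw.comp (f := fun p : ℝ × EuclideanSpace ℝ (Fin d) => p.1 • p.2) (by fun_prop)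
        fun p hp => hmemA p.1 hp.1 p.2 hp.2).clm_apply (by fun_prop))
  -- the flux vanishes at the inner radius
  have hM0 : M r₀ = 0 := by
    rw [aux_scale hd hr₀] at hflux
    have h1 := (mul_eq_zero.1 hflux).resolve_left (by positivity)
    rw [← h1]
    refine setIntegral_congr_fun hS.measurableSet fun x hx => ?_
    rw [hnorm r₀ hr₀ x (by simpa using hx), smul_smul, inv_mul_cancel₀ hr₀.ne', one_smul]
  -- derivative of the spherical mean
  have hmd : ∀ t ∈ Ioo r₀ (r₀ + ε), HasDerivAt m (M t) t := by
    intro t ht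
    have h := aux_deriv μH[(d : ℝ) - 1] hS hμ hU (hharm.1.of_le (by norm_num))
      (fun t => t • ContinuousLinearMap.id ℝ (EuclideanSpace ℝ (Fin d))) (fun _ => ContinuousLinearMap.id ℝ _)
      aux_smul_id
      continuous_const t (by intro x hx; simpa using hmemU t ht x (by simpa using hx))
    have h2 : M t = ∫ x in sphere (0 : EuclideanSpace ℝ (Fin d)) 1,
        fderiv ℝ u (t • x) x ∂μH[(d : ℝ) - 1] := by
      refine setIntegral_congr_fun hS.measurableSet fun x hx => ?_
      rw [hfeq _ (hmemU t ht x (by simpa using hx))]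
    rw [h2]
    exact h
  -- the flux is constant
  have hNeq : ∀ t ∈ Ioo r₀ (r₀ + ε), t * M t = ∫ x in sphere (0 : EuclideanSpace ℝ (Fin d)) 1,
      fderiv ℝ u (t • x) (t • x) ∂μH[(d : ℝ) - 1] := by
    intro t ht
    rw [hM]
    simp only
    rw [← integral_const_mul]
    refine setIntegral_congr_fun hS.measurableSet fun x hx => ?_
    rw [hfeq _ (hmemU t ht x (by simpa using hx)), map_smul, smul_eq_mul]
  have hNd : ∀ t ∈ Ioo r₀ (r₀ + ε), HasDerivAt (fun t => t ^ (d - 2) * (t * M t)) 0 t := by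
    intro t ht
    have ht0 : 0 < t := hr₀.trans ht.1
    obtain ⟨P', hP, hP'⟩ := aux_radial hd hU hharm (hmemU t ht)
    have hP2 : HasDerivAt (fun t => t * M t) P' t := by
      refine hP.congr_of_eventuallyEq ?_
      filter_upwards [isOpen_Ioo.mem_nhds ht] with s hs using hNeq s hs
    rw [← hNeq t ht] at hP'
    have h := (hasDerivAt_pow (d - 2) t).mul hP2
    have h0 : ((d - 2 : ℕ) : ℝ) * t ^ (d - 2 - 1) * (t * M t) + t ^ (d - 2) * P' = 0 := by
      obtain ⟨n, rfl⟩ : ∃ n, d = n + 3 := ⟨d - 3, by omega⟩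
      have e1 : n + 3 - 2 = n + 1 := by omega
      rw [e1, Nat.add_sub_cancel, pow_succ]
      push_cast at hP' ⊢
      linear_combination t ^ n * hP'
    rw [h0] at h
    exact h
  have hNc : ContinuousOn (fun t => t ^ (d - 2) * (t * M t)) (Icc r₀ (r₀ + ε)) := by
    have h1 : ContinuousOn (fun t : ℝ => t) (Icc r₀ (r₀ + ε)) := continuousOn_id
    exact (h1.pow _).mul (h1.mul hMc)
  have hMz : ∀ t ∈ Ioo r₀ (r₀ + ε), M t = 0 := by
    intro t ht
    have ht0 : 0 < t := hr₀.trans ht.1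
    obtain ⟨s, hs, hs'⟩ := exists_hasDerivAt_eq_slope (fun t => t ^ (d - 2) * (t * M t)) (fun _ => 0)
      ht.1 (hNc.mono (Icc_subset_Icc_right ht.2.le))
      (fun s hs => hNd s ⟨hs.1, hs.2.trans ht.2⟩)
    have h1 := (div_eq_zero_iff.1 hs'.symm).resolve_right (by linarith [ht.1])
    rw [hM0, mul_zero, mul_zero, sub_zero] at h1
    have h2 := (mul_eq_zero.1 h1).resolve_left (by positivity)
    exact (mul_eq_zero.1 h2).resolve_left ht0.ne'
  have hmeq : m (r₀ + ε) = m r₀ := by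
    obtain ⟨s, hs, hs'⟩ := exists_hasDerivAt_eq_slope m M (by linarith) hmc hmd
    rw [hMz s hs] at hs'
    have h1 := (div_eq_zero_iff.1 hs'.symm).resolve_right (by linarith)
    linarith
  -- total mass
  set σ : ℝ := (μH[(d : ℝ) - 1] : Measure (EuclideanSpace ℝ (Fin d))).real (sphere 0 1) with hσ
  have hσ0 : σ ≠ 0 := (ENNReal.toReal_pos hμ0.ne' hμ.ne).ne'
  have hm0 : m r₀ = c * σ := by
    have : m r₀ = ∫ x in sphere (0 : EuclideanSpace ℝ (Fin d)) 1, c ∂μH[(d : ℝ) - 1] :=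
      setIntegral_congr_fun hS.measurableSet fun x hx =>
        hinner _ (hnorm r₀ hr₀ x (by simpa using hx))
    rw [this, setIntegral_const, smul_eq_mul, mul_comm]
  set D : ℝ := r₀ ^ ((2 : ℝ) - (d : ℝ)) - (r₀ + ε) ^ ((2 : ℝ) - (d : ℝ)) with hD
  have hD0 : D ≠ 0 := by
    have := Real.rpow_lt_rpow_of_neg hr₀ (show r₀ < r₀ + ε by linarith)
      (show (2 : ℝ) - (d : ℝ) < 0 by linarith)
    rw [hD]
    linarith
  have hk : ∀ t : ℝ, 0 < t → t ^ ((d : ℝ) - 1) * t ^ ((2 : ℝ) - d - 1) = 1 := by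
    intro t ht
    rw [← Real.rpow_add ht, show (d : ℝ) - 1 + (2 - d - 1) = 0 by ring, Real.rpow_zero]
  have hgrad : ∀ t : ℝ, 0 < t → ∀ x ∈ sphere (0 : EuclideanSpace ℝ (Fin d)) 1,
      ⟪gradient v₁ (t • x), ‖t • x‖⁻¹ • (t • x)⟫_ℝ =
        ((2 : ℝ) - d) * t ^ ((2 : ℝ) - d - 1) / D := by
    intro t ht x hx
    have h1 := hnorm t ht x (by simpa using hx)
    have := aux_grad (a := (r₀ + ε) ^ ((2 : ℝ) - (d : ℝ))) (D := D) (p := (2 : ℝ) - d) (t • x)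
      (by rw [h1]; exact ht)
    rw [h1] at this ⊢
    exact this
  have hnum : (∫ x in Metric.sphere (0 : EuclideanSpace ℝ (Fin d)) (r₀ + ε),
      ⟪gradient v₁ x, ‖x‖⁻¹ • x⟫_ℝ * φ x ∂μH[(d : ℝ) - 1]) = ((2 : ℝ) - d) / D * (c * σ) := by
    rw [aux_scale hd hR]
    have h1 : ∫ x in sphere (0 : EuclideanSpace ℝ (Fin d)) 1,
        ⟪gradient v₁ ((r₀ + ε) • x), ‖(r₀ + ε) • x‖⁻¹ • ((r₀ + ε) • x)⟫_ℝ * φ ((r₀ + ε) • x)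
          ∂μH[(d : ℝ) - 1] =
        ∫ x in sphere (0 : EuclideanSpace ℝ (Fin d)) 1,
          (((2 : ℝ) - d) * (r₀ + ε) ^ ((2 : ℝ) - d - 1) / D) * u ((r₀ + ε) • x)
          ∂μH[(d : ℝ) - 1] := by
      refine setIntegral_congr_fun hS.measurableSet fun x hx => ?_
      rw [hgrad _ hR x hx, houter _ (hnorm _ hR x (by simpa using hx))]
    rw [h1, integral_const_mul]
    change _ * (_ * m (r₀ + ε)) = _
    rw [hmeq, hm0]
    linear_combination ((2 : ℝ) - d) / D * (c * σ) * hk _ hR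
  have hden : (∫ x in Metric.sphere (0 : EuclideanSpace ℝ (Fin d)) r₀,
      ⟪gradient v₁ x, ‖x‖⁻¹ • x⟫_ℝ ∂μH[(d : ℝ) - 1]) = ((2 : ℝ) - d) / D * σ := by
    rw [aux_scale hd hr₀, setIntegral_congr_fun hS.measurableSet (hgrad _ hr₀), setIntegral_const,
      smul_eq_mul]
    linear_combination ((2 : ℝ) - d) / D * σ * hk _ hr₀
  rw [hnum, hden]
  have h2d : (2 : ℝ) - d ≠ 0 := by linarith
  field_simp
end

section
/- Let d ≥ 2 and k ≥ 1 be integers, r₀ > 0, and let Q : ℝ^d → ℝ be a nonzero solid harmonic of degree k. For each ε > 0 let u_ε(x) := A_ε|x|^{2−d−2k}Q(x) + B_ε Q(x), where A_ε := 1/((r₀+ε)^{2−d−2k} − r₀^{2−d−2k}) and B_ε := −r₀^{2−d−2k} A_ε. Then there exist constants ε₀ > 0 and 0 < c₁ ≤ c₂, depending only on d, k, r₀ and Q, such that for every ε ∈ (0, ε₀): c₁/ε ≤ sup_{r₀ < |x| < r₀+ε} |∇u_ε(x)| ≤ c₂/ε. -/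
open MeasureTheory Metric Set
open scoped InnerProductSpace

theorem sh_contDiff {d : ℕ} (P : MvPolynomial (Fin d) ℝ) :
    ContDiff ℝ 1 (fun x : EuclideanSpace ℝ (Fin d) => MvPolynomial.eval (fun i => x i) P) := by
  simp only [MvPolynomial.eval_eq']
  refine ContDiff.sum fun m _ => contDiff_const.mul (contDiff_prod fun i _ => ?_)
  fun_prop

theorem sh_homog {d k : ℕ} (P : MvPolynomial (Fin d) ℝ) (hP : P.IsHomogeneous k) (t : ℝ)
    (x : Fin d → ℝ) :
    MvPolynomial.eval (fun i => t * x i) P = t ^ k * MvPolynomial.eval x P := by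
  simp only [MvPolynomial.eval_eq', Finset.mul_sum]
  refine Finset.sum_congr rfl fun m hm => ?_
  have h := hP (MvPolynomial.mem_support_iff.1 hm)
  have h2 : ∑ i, m i = k := by
    rw [← h, Finsupp.weight_apply, Finsupp.sum_fintype] <;> simp
  simp only [mul_pow, Finset.prod_mul_distrib, Finset.prod_pow_eq_pow_sum, h2]
  ring

theorem sh_denom {r₀ s : ℝ} (hr₀ : 0 < r₀) (hs : s < 0) : ∃ c : ℝ, 0 < c ∧
    ∀ ε ∈ Set.Ioo (0 : ℝ) 1, c * ε ≤ |(r₀ + ε) ^ s - r₀ ^ s| := by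
  refine ⟨|s| * (r₀ + 1) ^ (s - 1), mul_pos (abs_pos.2 hs.ne) (Real.rpow_pos_of_pos (by linarith) _), fun ε hε => ?_⟩
  obtain ⟨hε0, hε1⟩ := hε
  have hd : ∀ t : ℝ, 0 < t → HasDerivAt (fun t : ℝ => t ^ s) (s * t ^ (s - 1)) t :=
    fun t ht => Real.hasDerivAt_rpow_const (Or.inl ht.ne')
  obtain ⟨t, ht, h⟩ := exists_deriv_eq_slope (fun t : ℝ => t ^ s) (a := r₀) (b := r₀ + ε)
    (by linarith)
    (fun t ht => (hd t (by linarith [ht.1])).continuousAt.continuousWithinAt)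
    (fun t ht => (hd t (by linarith [ht.1])).differentiableAt.differentiableWithinAt)
  have ht0 : 0 < t := by linarith [ht.1]
  rw [(hd t ht0).deriv, add_sub_cancel_left, eq_div_iff hε0.ne'] at h
  rw [← h, abs_mul, abs_mul, abs_of_pos hε0, abs_of_pos (Real.rpow_pos_of_pos ht0 _)]
  have := Real.rpow_le_rpow_of_nonpos ht0 (show t ≤ r₀ + 1 by linarith [ht.2])
    (show s - 1 ≤ 0 by linarith)
  gcongr

theorem sh_norm_gradient {d : ℕ} (f : EuclideanSpace ℝ (Fin d) → ℝ)
    (x : EuclideanSpace ℝ (Fin d)) : ‖gradient f x‖ = ‖fderiv ℝ f x‖ := by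
  simp [gradient]

theorem perfect_gradient_blowup_rate {d k : ℕ} (hd : 2 ≤ d) (hk : 1 ≤ k)
    {r₀ : ℝ} (hr₀ : 0 < r₀)
    (Q : EuclideanSpace ℝ (Fin d) → ℝ) (hQ : IsSolidHarmonic k Q) (hQne : Q ≠ 0) :
    let A : ℝ → ℝ := fun ε => 1 / ((r₀ + ε) ^ ((2 : ℝ) - (d : ℝ) - 2 * (k : ℝ))
      - r₀ ^ ((2 : ℝ) - (d : ℝ) - 2 * (k : ℝ)))
    let B : ℝ → ℝ := fun ε => -(r₀ ^ ((2 : ℝ) - (d : ℝ) - 2 * (k : ℝ))) * A ε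
    let u : ℝ → EuclideanSpace ℝ (Fin d) → ℝ := fun ε x =>
      A ε * ‖x‖ ^ ((2 : ℝ) - (d : ℝ) - 2 * (k : ℝ)) * Q x + B ε * Q x
    ∃ ε₀ : ℝ, 0 < ε₀ ∧ ∃ c₁ c₂ : ℝ, 0 < c₁ ∧ c₁ ≤ c₂ ∧
      ∀ ε ∈ Set.Ioo (0 : ℝ) ε₀,
        c₁ / ε ≤ sSup ((fun x => ‖gradient (u ε) x‖) '' {x | r₀ < ‖x‖ ∧ ‖x‖ < r₀ + ε}) ∧
        sSup ((fun x => ‖gradient (u ε) x‖) '' {x | r₀ < ‖x‖ ∧ ‖x‖ < r₀ + ε}) ≤ c₂ / ε := by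
  intro A B u
  obtain ⟨⟨P, hP, hQP⟩, -⟩ := hQ
  have hdR : (2 : ℝ) ≤ d := by exact_mod_cast hd
  have hkR : (1 : ℝ) ≤ k := by exact_mod_cast hk
  have hs : (2 : ℝ) - (d : ℝ) - 2 * (k : ℝ) < 0 := by linarith
  obtain ⟨c, hc, hcD⟩ := sh_denom hr₀ hs
  set s : ℝ := (2 : ℝ) - (d : ℝ) - 2 * (k : ℝ) with hsdef
  have hQd : ContDiff ℝ 1 Q := by
    have := sh_contDiff P
    rwa [← funext hQP] at this
  have hQh : ∀ (t : ℝ) x, Q (t • x) = t ^ k * Q x := by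
    intro t x
    rw [hQP, hQP, ← sh_homog P hP]
    simp
  obtain ⟨x₁, hx₁⟩ : ∃ x, Q x ≠ 0 := by
    by_contra! h
    exact hQne (funext h)
  have hx₁0 : x₁ ≠ 0 := by
    rintro rfl
    apply hx₁
    have := hQh 0 0
    rw [zero_pow (by omega)] at this
    simpa using this
  have hx₁n : 0 < ‖x₁‖ := norm_pos_iff.2 hx₁0
  obtain ⟨x₀, hx₀n, hx₀⟩ : ∃ x₀, ‖x₀‖ = 1 ∧ Q x₀ ≠ 0 := by
    refine ⟨‖x₁‖⁻¹ • x₁, ?_, ?_⟩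
    · rw [norm_smul, norm_inv, norm_norm, inv_mul_cancel₀ hx₁n.ne']
    · rw [hQh]
      positivity
  -- the fixed profile
  let ψ : EuclideanSpace ℝ (Fin d) → ℝ := fun x => (‖x‖ ^ s - r₀ ^ s) * Q x
  have hu : ∀ ε, u ε = fun x => A ε * ψ x := by
    intro ε
    funext x
    simp only [u, B, ψ]
    ring
  have hψ : ContDiffOn ℝ 1 ψ {x | x ≠ 0} := by
    intro x hx
    exact ((((contDiffAt_norm ℝ hx).rpow_const_of_ne (norm_ne_zero_iff.2 hx)).sub
      contDiffAt_const).mul hQd.contDiffAt).contDiffWithinAt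
  have hopen : IsOpen {x : EuclideanSpace ℝ (Fin d) | x ≠ 0} := isOpen_ne
  have hψd : ∀ x, x ≠ 0 → DifferentiableAt ℝ ψ x := fun x hx =>
    (hψ.contDiffAt (hopen.mem_nhds hx)).differentiableAt one_ne_zero
  have hψc := hψ.continuousOn_fderiv_of_isOpen hopen le_rfl
  have hK : IsCompact {x : EuclideanSpace ℝ (Fin d) | r₀ ≤ ‖x‖ ∧ ‖x‖ ≤ r₀ + 1} := by
    refine (isCompact_closedBall (0 : EuclideanSpace ℝ (Fin d)) (r₀ + 1)).of_isClosed_subset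
      ((isClosed_le continuous_const continuous_norm).inter
        (isClosed_le continuous_norm continuous_const)) ?_
    intro x hx
    simpa using hx.2
  obtain ⟨M, hM⟩ := hK.exists_bound_of_continuousOn (hψc.mono (by
    rintro x hx rfl
    have := hx.1
    simp at this
    linarith))
  have hc₁ : 0 < r₀ ^ k * |Q x₀| := by positivity
  refine ⟨1, one_pos, r₀ ^ k * |Q x₀|, max (r₀ ^ k * |Q x₀|) (M / c), hc₁, le_max_left _ _, ?_⟩
  intro ε hε
  have hD := hcD ε hε
  have hε0 : 0 < ε := hε.1
  have hε1 : ε < 1 := hε.2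
  have hDpos : 0 < |(r₀ + ε) ^ s - r₀ ^ s| := lt_of_lt_of_le (by positivity) hD
  have hDne : (r₀ + ε) ^ s - r₀ ^ s ≠ 0 := abs_pos.1 hDpos
  have hAabs : |A ε| ≤ 1 / (c * ε) := by
    simp only [A, abs_div, abs_one]
    exact one_div_le_one_div_of_le (by positivity) hD
  have hub : ∀ x : EuclideanSpace ℝ (Fin d), r₀ < ‖x‖ → ‖x‖ < r₀ + ε →
      ‖gradient (u ε) x‖ ≤ max (r₀ ^ k * |Q x₀|) (M / c) / ε := by
    intro x h1 h2
    have hx : x ≠ 0 := norm_pos_iff.1 (hr₀.trans h1)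
    have hMx := hM x ⟨h1.le, by linarith⟩
    rw [sh_norm_gradient, hu, fderiv_const_mul (hψd x hx), norm_smul, Real.norm_eq_abs]
    calc |A ε| * ‖fderiv ℝ ψ x‖ ≤ 1 / (c * ε) * M := by gcongr
      _ = M / c / ε := by field_simp
      _ ≤ _ := by gcongr; exact le_max_right _ _
  have hub' : ∀ y ∈ (fun x => ‖gradient (u ε) x‖) '' {x | r₀ < ‖x‖ ∧ ‖x‖ < r₀ + ε},
      y ≤ max (r₀ ^ k * |Q x₀|) (M / c) / ε := by
    rintro _ ⟨x, hx, rfl⟩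
    exact hub x hx.1 hx.2
  -- a point with large gradient
  have hud : ∀ t : ℝ, 0 < t → HasDerivAt (fun t : ℝ => u ε (t • x₀))
      (fderiv ℝ (u ε) (t • x₀) x₀) t := by
    intro t ht
    have hne : t • x₀ ≠ 0 := by
      rw [← norm_pos_iff, norm_smul, hx₀n, Real.norm_eq_abs]
      positivity
    have h1 : DifferentiableAt ℝ (u ε) (t • x₀) := by
      rw [hu]
      exact (hψd _ hne).const_mul _
    have h2 : HasDerivAt (fun t : ℝ => t • x₀) x₀ t := by
      simpa using (hasDerivAt_id t).smul_const x₀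
    exact h1.hasFDerivAt.comp_hasDerivAt t h2
  obtain ⟨t, ht, hslope⟩ := exists_deriv_eq_slope (fun t : ℝ => u ε (t • x₀)) (a := r₀)
    (b := r₀ + ε) (by linarith)
    (fun t ht => (hud t (by linarith [ht.1])).continuousAt.continuousWithinAt)
    (fun t ht => (hud t (by linarith [ht.1])).differentiableAt.differentiableWithinAt)
  have ht0 : 0 < t := by linarith [ht.1]
  have hnorm : ∀ t : ℝ, 0 < t → ‖t • x₀‖ = t := by
    intro t ht
    rw [norm_smul, hx₀n, Real.norm_eq_abs, abs_of_pos ht, mul_one]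
  have hu0 : u ε (r₀ • x₀) = 0 := by
    rw [hu]
    simp only [ψ, hnorm r₀ hr₀]
    ring
  have hu1 : u ε ((r₀ + ε) • x₀) = (r₀ + ε) ^ k * Q x₀ := by
    rw [hu]
    simp only [ψ, hnorm (r₀ + ε) (by linarith), A, hQh]
    rw [← hsdef]
    field_simp
  rw [(hud t ht0).deriv, hu0, hu1, sub_zero, add_sub_cancel_left] at hslope
  have hlow : r₀ ^ k * |Q x₀| / ε ≤ ‖gradient (u ε) (t • x₀)‖ := by
    rw [sh_norm_gradient]
    have h1 := (fderiv ℝ (u ε) (t • x₀)).le_opNorm x₀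
    rw [hx₀n, mul_one, hslope, Real.norm_eq_abs, abs_div, abs_mul, abs_of_pos hε0,
      abs_of_pos (show 0 < (r₀ + ε) ^ k by positivity)] at h1
    refine le_trans ?_ h1
    gcongr
    linarith
  have hmem : ‖gradient (u ε) (t • x₀)‖ ∈
      (fun x => ‖gradient (u ε) x‖) '' {x | r₀ < ‖x‖ ∧ ‖x‖ < r₀ + ε} :=
    ⟨t • x₀, by simpa [hnorm t ht0] using ht, rfl⟩
  exact ⟨hlow.trans (le_csSup ⟨_, hub'⟩ hmem), csSup_le ⟨_, hmem⟩ hub'⟩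
end

section
/- Let r₀ > 0 and let φ be a C² real-valued function on the unit circle, transported to the circle of radius r₀+ε for each ε ∈ (0,1] by θ ↦ φ(cos θ, sin θ). For each ε ∈ (0,1], let u_ε be the solution of the insulated conductivity problem on the annulus {x ∈ ℝ² : r₀ < |x| < r₀+ε}: u_ε is harmonic on the open annulus, C¹ up to the closed annulus, ⟨∇u_ε(x), x/|x|⟩ = 0 for |x| = r₀, and u_ε((r₀+ε)(cos θ, sin θ)) = φ(cos θ, sin θ) for all θ. Then there exists a constant C > 0, depending only on r₀ and φ but not on ε, such that |∇u_ε(x)| ≤ C for every ε ∈ (0,1] and every x in the open annulus. -/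
open MeasureTheory Metric Set
open scoped InnerProductSpace

/-- The point `(cos θ, sin θ)` on the unit circle in `ℝ²`. -/
noncomputable def dir (θ : ℝ) : EuclideanSpace ℝ (Fin 2) :=
  (EuclideanSpace.equiv (Fin 2) ℝ).symm ![Real.cos θ, Real.sin θ]

/-- The polar angle of `x ∈ ℝ²`. -/
noncomputable def ang (x : EuclideanSpace ℝ (Fin 2)) : ℝ :=
  Complex.arg ((x 0 : ℂ) + (x 1 : ℂ) * Complex.I)

section Aux

lemma ins_second_deriv_nonpos {f f' : ℝ → ℝ} {x c : ℝ} (hmax : IsLocalMax f x)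
    (h1 : ∀ᶠ y in nhds x, HasDerivAt f (f' y) y) (h2 : HasDerivAt f' c x) : c ≤ 0 := by
  by_contra hc
  push Not at hc
  have e1 : deriv f =ᶠ[nhds x] f' := h1.mono fun y hy => hy.deriv
  have e2 : deriv (deriv f) x = c := by rw [e1.deriv_eq, h2.deriv]
  have hmin : IsLocalMin f x :=
    isLocalMin_of_deriv_deriv_pos (by rw [e2]; exact hc) hmax.deriv_eq_zero
      h1.self_of_nhds.continuousAt
  have e3 : f =ᶠ[nhds x] fun _ => f x := by
    filter_upwards [hmax, hmin] with y h3 h4 using le_antisymm h3 h4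
  have e4 : deriv f =ᶠ[nhds x] fun _ => 0 := by
    have := e3.deriv
    simpa using this
  have e5 : deriv (deriv f) x = 0 := by rw [e4.deriv_eq]; simp
  linarith

lemma ins_endpoint {f : ℝ → ℝ} {a b c : ℝ} (hab : a < b)
    (h : HasDerivWithinAt f c (Icc a b) a) (hm : ∀ s ∈ Icc a b, f s ≤ f a) : c ≤ 0 := by
  have h' : HasDerivWithinAt f c (Ioc a b) a := h.mono Ioc_subset_Icc_self
  rw [hasDerivWithinAt_iff_tendsto_slope' (by simp)] at h'
  have : (nhdsWithin a (Ioc a b)).NeBot := by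
    rw [nhdsWithin_Ioc_eq_nhdsGT hab]; infer_instance
  refine le_of_tendsto h' ?_
  filter_upwards [self_mem_nhdsWithin] with s hs
  rw [slope_def_field]
  exact div_nonpos_of_nonpos_of_nonneg (by linarith [hm s ⟨hs.1.le, hs.2⟩]) (by linarith [hs.1])

/-- Harmonic functions on the strip, periodic in the second variable, with zero normal derivative
on the left side. -/
structure InsGood (a b : ℝ) (W Ws Wss Wt Wtt : ℝ → ℝ → ℝ) : Prop where
  cont : ContinuousOn (fun p : ℝ × ℝ => W p.1 p.2) (Icc a b ×ˢ univ)
  per : ∀ s t, W s (t + 2 * Real.pi) = W s t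
  neu : ∀ t, HasDerivWithinAt (fun s => W s t) 0 (Icc a b) a
  ds : ∀ s ∈ Ioo a b, ∀ t, HasDerivAt (fun s => W s t) (Ws s t) s
  dss : ∀ s ∈ Ioo a b, ∀ t, HasDerivAt (fun s => Ws s t) (Wss s t) s
  dt : ∀ s ∈ Ioo a b, ∀ t, HasDerivAt (fun t => W s t) (Wt s t) t
  dtt : ∀ s ∈ Ioo a b, ∀ t, HasDerivAt (fun t => Wt s t) (Wtt s t) t
  harm : ∀ s ∈ Ioo a b, ∀ t, Wss s t + Wtt s t = 0

variable {a b : ℝ} {W Ws Wss Wt Wtt V Vs Vss Vt Vtt : ℝ → ℝ → ℝ}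

lemma InsGood.neg (h : InsGood a b W Ws Wss Wt Wtt) :
    InsGood a b (fun s t => - W s t) (fun s t => - Ws s t) (fun s t => - Wss s t)
      (fun s t => - Wt s t) (fun s t => - Wtt s t) where
  cont := h.cont.neg
  per s t := by rw [h.per]
  neu t := by simpa using (h.neu t).fun_neg
  ds s hs t := (h.ds s hs t).fun_neg
  dss s hs t := (h.dss s hs t).fun_neg
  dt s hs t := (h.dt s hs t).fun_neg
  dtt s hs t := (h.dtt s hs t).fun_neg
  harm s hs t := by linarith [h.harm s hs t]

lemma InsGood.add (h : InsGood a b W Ws Wss Wt Wtt) (k : InsGood a b V Vs Vss Vt Vtt) :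
    InsGood a b (fun s t => W s t + V s t) (fun s t => Ws s t + Vs s t)
      (fun s t => Wss s t + Vss s t)
      (fun s t => Wt s t + Vt s t) (fun s t => Wtt s t + Vtt s t) where
  cont := h.cont.add k.cont
  per s t := by rw [h.per, k.per]
  neu t := by simpa using (h.neu t).fun_add (k.neu t)
  ds s hs t := (h.ds s hs t).fun_add (k.ds s hs t)
  dss s hs t := (h.dss s hs t).fun_add (k.dss s hs t)
  dt s hs t := (h.dt s hs t).fun_add (k.dt s hs t)
  dtt s hs t := (h.dtt s hs t).fun_add (k.dtt s hs t)
  harm s hs t := by linarith [h.harm s hs t, k.harm s hs t]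

lemma InsGood.shift (h : InsGood a b W Ws Wss Wt Wtt) (d : ℝ) :
    InsGood a b (fun s t => W s (t + d)) (fun s t => Ws s (t + d)) (fun s t => Wss s (t + d))
      (fun s t => Wt s (t + d)) (fun s t => Wtt s (t + d)) where
  cont := by
    have := h.cont.comp (f := fun p : ℝ × ℝ => (p.1, p.2 + d)) (s := Icc a b ×ˢ univ)
      (by fun_prop) (by rintro ⟨x, y⟩ hx; exact ⟨hx.1, mem_univ _⟩)
    exact this
  per s t := by rw [← h.per s (t + d)]; ring_nf
  neu t := h.neu _
  ds s hs t := h.ds s hs _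
  dss s hs t := h.dss s hs _
  dt s hs t := (h.dt s hs (t + d)).comp_add_const t d
  dtt s hs t := (h.dtt s hs (t + d)).comp_add_const t d
  harm s hs t := h.harm s hs _

lemma InsGood.max (hab : a < b) (h : InsGood a b W Ws Wss Wt Wtt) {M : ℝ}
    (hM : ∀ t, W b t ≤ M) : ∀ s ∈ Icc a b, ∀ t, W s t ≤ M := by
  have key : ∀ δ > 0, ∀ s ∈ Icc a b, ∀ t, W s t ≤ M + δ * ((b - a) + (b - a) ^ 2) := by
    intro δ hδ
    let q : ℝ → ℝ → ℝ := fun s t => W s t + δ * ((s - a) + (s - a) ^ 2)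
    have hqper : ∀ s t, q s (t + 2 * Real.pi) = q s t := fun s t => by simp only [q, h.per]
    have hqc : ContinuousOn (fun p : ℝ × ℝ => q p.1 p.2) (Icc a b ×ˢ Icc 0 (2 * Real.pi)) := by
      refine ContinuousOn.add (h.cont.mono (prod_mono_right (subset_univ _))) ?_
      fun_prop
    obtain ⟨⟨s₀, t₀⟩, hm0, hmax0⟩ := (isCompact_Icc.prod isCompact_Icc).exists_isMaxOn
      (s := Icc a b ×ˢ Icc 0 (2 * Real.pi)) ⟨(a, 0), ⟨⟨le_rfl, hab.le⟩, ⟨le_rfl, by positivity⟩⟩⟩ hqc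
    have hs₀ : s₀ ∈ Icc a b := hm0.1
    have hmax : ∀ s ∈ Icc a b, ∀ t, q s t ≤ q s₀ t₀ := by
      intro s hs t
      have hp : Function.Periodic (q s) (2 * Real.pi) := hqper s
      obtain ⟨t', ht', he⟩ := hp.exists_mem_Ico₀ Real.two_pi_pos t
      rw [he]
      exact hmax0 (show (s, t') ∈ Icc a b ×ˢ Icc 0 (2 * Real.pi) from ⟨hs, ht'.1, ht'.2.le⟩)
    have hsb : s₀ = b := by
      by_contra hne
      rcases eq_or_lt_of_le hs₀.1 with hsa | hsa
      · subst hsa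
        have hd : HasDerivWithinAt (fun s => q s t₀) δ (Icc a b) a := by
          have h2 : HasDerivAt (fun s : ℝ => δ * ((s - a) + (s - a) ^ 2)) δ a := by
            have h3 := (hasDerivAt_id a).sub_const a
            have h4 := (h3.add (h3.pow 2)).const_mul δ
            refine HasDerivAt.congr_deriv h4 ?_
            simp <;> ring
          simpa using (h.neu t₀).fun_add h2.hasDerivWithinAt
        have := ins_endpoint hab hd (fun s hs => hmax s hs t₀)
        linarith
      · have hs : s₀ ∈ Ioo a b := ⟨hsa, lt_of_le_of_ne hs₀.2 hne⟩
        have hnb : ∀ᶠ y in nhds s₀, y ∈ Ioo a b := isOpen_Ioo.mem_nhds hs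
        have i1 : Wtt s₀ t₀ ≤ 0 := by
          refine ins_second_deriv_nonpos (f := fun t => W s₀ t) (f' := fun t => Wt s₀ t) ?_
            (Filter.Eventually.of_forall (h.dt s₀ hs)) (h.dtt s₀ hs t₀)
          refine Filter.Eventually.of_forall fun t => ?_
          have := hmax s₀ hs₀ t
          simp only [q] at this
          show W s₀ t ≤ W s₀ t₀
          linarith
        have i2 : Wss s₀ t₀ + 2 * δ ≤ 0 := by
          refine ins_second_deriv_nonpos (f := fun s => q s t₀)
            (f' := fun s => Ws s t₀ + δ * (1 + 2 * (s - a))) (x := s₀) ?_ ?_ ?_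
          · filter_upwards [hnb] with s hs' using hmax s ⟨hs'.1.le, hs'.2.le⟩ t₀
          · filter_upwards [hnb] with s hs'
            have h3 := (hasDerivAt_id s).sub_const a
            have h4 := (h.ds s hs' t₀).add ((h3.add (h3.pow 2)).const_mul δ)
            refine HasDerivAt.congr_deriv h4 ?_
            simp <;> ring
          · have h3 := (hasDerivAt_id s₀).sub_const a
            have h4 := (h.dss s₀ hs t₀).add (((h3.const_mul 2).const_add 1).const_mul δ)
            refine HasDerivAt.congr_deriv h4 ?_
            simp <;> ring
        linarith [h.harm s₀ hs t₀]
    intro s hs t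
    have h5 := hmax s hs t
    rw [hsb] at h5
    simp only [q] at h5
    have h6 : 0 ≤ δ * ((s - a) + (s - a) ^ 2) := by
      have := hs.1
      have : 0 ≤ s - a := by linarith
      positivity
    linarith [hM t₀]
  intro s hs t
  have hK : 0 < (b - a) + (b - a) ^ 2 := by
    have : 0 < b - a := by linarith
    positivity
  refine le_of_forall_pos_le_add fun η hη => ?_
  have := key (η / ((b - a) + (b - a) ^ 2)) (by positivity) s hs t
  rwa [div_mul_cancel₀ _ hK.ne'] at this

lemma InsGood.wt_le (hab : a < b) (h : InsGood a b W Ws Wss Wt Wtt) {M : ℝ}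
    {f f' : ℝ → ℝ} (hf : ∀ t, W b t = f t) (hd : ∀ t, HasDerivAt f (f' t) t)
    (hM : ∀ t, |f' t| ≤ M) (s : ℝ) (hs : s ∈ Ioo a b) (t : ℝ) : |Wt s t| ≤ M := by
  have hM0 : 0 ≤ M := (abs_nonneg _).trans (hM 0)
  have hlip : ∀ x y, |f y - f x| ≤ M * |y - x| := fun x y => by
    have := convex_univ.norm_image_sub_le_of_norm_hasDerivWithin_le (f := f) (f' := f') (C := M)
      (fun x _ => (hd x).hasDerivWithinAt) (fun x _ => hM x) (mem_univ x) (mem_univ y)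
    simpa using this
  have hsI : s ∈ Icc a b := ⟨hs.1.le, hs.2.le⟩
  have hle : ∀ d, W s (t + d) - W s t ≤ M * |d| := fun d => by
    have := ((h.shift d).add h.neg).max hab (M := M * |d|) (fun t => by
      rw [hf, hf]
      have := (abs_le.1 (hlip t (t + d))).2
      simp at this; linarith) s hsI t
    linarith
  have hge : ∀ d, -(W s (t + d) - W s t) ≤ M * |d| := fun d => by
    have := ((h.shift d).neg.add h).max hab (M := M * |d|) (fun t => by
      rw [hf, hf]
      have := (abs_le.1 (hlip t (t + d))).1
      simp at this; linarith) s hsI t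
    linarith
  have := (h.dt s hs t).le_of_lip' hM0 (Filter.Eventually.of_forall fun y => by
    have h1 := hle (y - t)
    have h2 := hge (y - t)
    simp only [add_sub_cancel] at h1 h2
    rw [Real.norm_eq_abs, Real.norm_eq_abs, abs_le]
    constructor <;> linarith)
  simpa using this

lemma InsGood.wtt_le (hab : a < b) (h : InsGood a b W Ws Wss Wt Wtt) {M : ℝ}
    {f f' f'' : ℝ → ℝ} (hf : ∀ t, W b t = f t) (hd : ∀ t, HasDerivAt f (f' t) t)
    (hdd : ∀ t, HasDerivAt f' (f'' t) t)
    (hM : ∀ t, f'' t ≤ M) (s : ℝ) (hs : s ∈ Ioo a b) (t : ℝ) : Wtt s t ≤ M := by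
  have hsI : s ∈ Icc a b := ⟨hs.1.le, hs.2.le⟩
  have hconv : ConvexOn ℝ univ (fun x => M * x ^ 2 / 2 - f x) := by
    refine convexOn_of_hasDerivWithinAt2_nonneg (f' := fun x => M * x - f' x)
      (f'' := fun x => M - f'' x) convex_univ ?_ ?_ ?_ ?_
    · exact ContinuousOn.sub (by fun_prop) (fun x _ => (hd x).continuousAt.continuousWithinAt)
    · intro x _
      have h1 := ((((hasDerivAt_id x).pow 2).const_mul M).div_const 2).sub (hd x)
      refine HasDerivAt.hasDerivWithinAt ?_
      refine HasDerivAt.congr_deriv h1 ?_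
      simp <;> ring
    · intro x _
      have h1 := ((hasDerivAt_id x).const_mul M).sub (hdd x)
      refine HasDerivAt.hasDerivWithinAt ?_
      refine HasDerivAt.congr_deriv h1 ?_
      simp <;> ring
    · intro x _
      linarith [hM x]
  have hmid : ∀ x d, f (x + d) + f (x + -d) - 2 * f x ≤ M * d ^ 2 := fun x d => by
    have := hconv.2 (mem_univ (x + d)) (mem_univ (x + -d)) (show (0:ℝ) ≤ 1 / 2 by norm_num)
      (show (0:ℝ) ≤ 1 / 2 by norm_num) (by norm_num)
    simp only [smul_eq_mul] at this
    have e : 1 / 2 * (x + d) + 1 / 2 * (x + -d) = x := by ring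
    rw [e] at this
    nlinarith
  have hW : ∀ d, W s (t + d) + W s (t + -d) - 2 * W s t ≤ M * d ^ 2 := fun d => by
    have := (((h.shift d).add (h.shift (-d))).add (h.neg.add h.neg)).max hab (M := M * d ^ 2)
      (fun t => by
        simp only [hf]
        linarith [hmid t d]) s hsI t
    linarith
  have := ins_second_deriv_nonpos
    (f := fun d => W s (t + d) + W s (t + -d) - 2 * W s t - M * d ^ 2)
    (f' := fun d => Wt s (t + d) - Wt s (t + -d) - 2 * M * d) (x := 0) (c := 2 * Wtt s t - 2 * M)
    (Filter.Eventually.of_forall fun d => by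
      have := hW d
      simp only [add_zero, neg_zero]
      linarith)
    (Filter.Eventually.of_forall fun d => by
      have h1 := (h.dt s hs (t + d)).comp_const_add t d
      have h2 := (h.dt s hs (t + -d)).scomp d ((hasDerivAt_neg d).const_add t)
      have h3 := ((h1.add h2).sub_const (2 * W s t)).sub (((hasDerivAt_id d).pow 2).const_mul M)
      refine HasDerivAt.congr_deriv h3 ?_
      simp <;> ring)
    (by
      have h1 := (h.dtt s hs (t + 0)).comp_const_add t 0
      have h2 := (h.dtt s hs (t + -0)).scomp 0 ((hasDerivAt_neg 0).const_add t)
      have h3 := (h1.sub h2).sub ((hasDerivAt_id 0).const_mul (2 * M))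
      refine HasDerivAt.congr_deriv h3 ?_
      simp <;> ring)
  linarith

lemma InsGood.ws_le (hab : a < b) (h : InsGood a b W Ws Wss Wt Wtt) {M : ℝ}
    {f f' f'' : ℝ → ℝ} (hf : ∀ t, W b t = f t) (hd : ∀ t, HasDerivAt f (f' t) t)
    (hdd : ∀ t, HasDerivAt f' (f'' t) t)
    (hM : ∀ t, f'' t ≤ M) (s : ℝ) (hs : s ∈ Ioo a b) (t : ℝ) : -(M * (s - a)) ≤ Ws s t := by
  have hconv : ConvexOn ℝ (Icc a b) (fun x => M * (x - a) ^ 2 / 2 + W x t) := by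
    refine convexOn_of_hasDerivWithinAt2_nonneg (f' := fun x => M * (x - a) + Ws x t)
      (f'' := fun x => M + Wss x t) (convex_Icc a b) ?_ ?_ ?_ ?_
    · refine ContinuousOn.add (by fun_prop) ?_
      have := h.cont.comp (f := fun x : ℝ => (x, t)) (s := Icc a b)
        (by fun_prop) (by intro x hx; exact ⟨hx, mem_univ _⟩)
      exact this
    · rw [interior_Icc]
      intro x hx
      have h1 := (((((hasDerivAt_id x).sub_const a).pow 2).const_mul M).div_const 2).add (h.ds x hx t)
      refine HasDerivAt.hasDerivWithinAt ?_
      refine HasDerivAt.congr_deriv h1 ?_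
      simp <;> ring
    · rw [interior_Icc]
      intro x hx
      have h1 := (((hasDerivAt_id x).sub_const a).const_mul M).add (h.dss x hx t)
      refine HasDerivAt.hasDerivWithinAt ?_
      refine HasDerivAt.congr_deriv h1 ?_
      simp <;> ring
    · rw [interior_Icc]
      intro x hx
      linarith [h.harm x hx t, h.wtt_le hab hf hd hdd hM x hx t]
  have hsI : s ∈ Icc a b := ⟨hs.1.le, hs.2.le⟩
  have haI : a ∈ Icc a b := ⟨le_rfl, hab.le⟩
  have d0 : HasDerivWithinAt (fun x => M * (x - a) ^ 2 / 2 + W x t) 0 (Icc a b) a := by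
    have h1 := (((((hasDerivAt_id a).sub_const a).pow 2).const_mul M).div_const 2).hasDerivWithinAt
      (s := Icc a b) |>.add (h.neu t)
    refine HasDerivWithinAt.congr_deriv h1 ?_
    simp <;> ring
  have d1 : HasDerivAt (fun x => M * (x - a) ^ 2 / 2 + W x t) (M * (s - a) + Ws s t) s := by
    have h1 := (((((hasDerivAt_id s).sub_const a).pow 2).const_mul M).div_const 2).add (h.ds s hs t)
    refine HasDerivAt.congr_deriv h1 ?_
    simp <;> ring
  have i1 := hconv.le_slope_of_hasDerivWithinAt haI hsI hs.1 d0
  have i2 := hconv.slope_le_of_hasDerivAt haI hsI hs.1 d1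
  linarith

lemma ins_norm_dir (t : ℝ) : ‖dir t‖ = 1 := by
  rw [EuclideanSpace.norm_eq]
  simp [dir, Fin.sum_univ_two]

lemma ins_dir_zero (t : ℝ) : dir t 0 = Real.cos t := by simp [dir]

lemma ins_dir_one (t : ℝ) : dir t 1 = Real.sin t := by simp [dir]

lemma ins_hasDerivAt_dir (t : ℝ) : HasDerivAt dir (dir (t + Real.pi / 2)) t := by
  have h : HasDerivAt (fun t : ℝ => ![Real.cos t, Real.sin t])
      ![Real.cos (t + Real.pi / 2), Real.sin (t + Real.pi / 2)] t := by
    rw [hasDerivAt_pi]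
    intro i
    fin_cases i
    · simpa [Real.cos_add_pi_div_two] using Real.hasDerivAt_cos t
    · simpa [Real.sin_add_pi_div_two] using Real.hasDerivAt_sin t
  exact ((EuclideanSpace.equiv (Fin 2) ℝ).symm.toContinuousLinearMap.hasFDerivAt).comp_hasDerivAt t h

lemma ins_dir_pi (t : ℝ) : dir (t + Real.pi / 2 + Real.pi / 2) = - dir t := by
  ext i
  fin_cases i <;> simp [dir, Real.cos_add_pi_div_two, Real.sin_add_pi_div_two]

lemma ins_dir_per (t : ℝ) : dir (t + 2 * Real.pi) = dir t := by
  simp [dir]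

lemma ins_decomp (t : ℝ) (v : EuclideanSpace ℝ (Fin 2)) :
    v = (v 0 * Real.cos t + v 1 * Real.sin t) • dir t
      + (v 1 * Real.cos t - v 0 * Real.sin t) • dir (t + Real.pi / 2) := by
  have h := Real.sin_sq_add_cos_sq t
  ext i
  fin_cases i
  · simp [ins_dir_zero, Real.cos_add_pi_div_two]
    linear_combination (-(v 0)) * h
  · simp [ins_dir_one, Real.sin_add_pi_div_two]
    linear_combination (-(v 1)) * h

lemma ins_exists_polar (x : EuclideanSpace ℝ (Fin 2)) : ∃ t, x = ‖x‖ • dir t := by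
  let z : ℂ := ⟨x 0, x 1⟩
  have hz : ‖z‖ = ‖x‖ := by
    rw [EuclideanSpace.norm_eq, Complex.norm_eq_sqrt_sq_add_sq]
    simp [z, Fin.sum_univ_two]
  refine ⟨z.arg, ?_⟩
  rw [← hz]
  ext i
  fin_cases i
  · simp [ins_dir_zero, Complex.norm_mul_cos_arg, z]
  · simp [ins_dir_one, Complex.norm_mul_sin_arg, z]

lemma ins_trace (B : EuclideanSpace ℝ (Fin 2) →L[ℝ] EuclideanSpace ℝ (Fin 2) →L[ℝ] ℝ) (t : ℝ) :
    B (dir t) (dir t) + B (dir (t + Real.pi / 2)) (dir (t + Real.pi / 2))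
      = B (EuclideanSpace.single 0 1) (EuclideanSpace.single 0 1)
        + B (EuclideanSpace.single 1 1) (EuclideanSpace.single 1 1) := by
  have e1 : dir t = Real.cos t • EuclideanSpace.single 0 1
      + Real.sin t • EuclideanSpace.single 1 1 := by
    ext i; fin_cases i <;> simp [dir]
  have e2 : dir (t + Real.pi / 2) = (-Real.sin t) • EuclideanSpace.single 0 1
      + Real.cos t • EuclideanSpace.single 1 1 := by
    ext i; fin_cases i <;> simp [dir, Real.cos_add_pi_div_two, Real.sin_add_pi_div_two]
  have h := Real.sin_sq_add_cos_sq t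
  rw [e1, e2]
  simp only [map_add, map_smul, ContinuousLinearMap.add_apply, ContinuousLinearMap.smul_apply,
    smul_eq_mul]
  linear_combination (B (EuclideanSpace.single 0 1) (EuclideanSpace.single 0 1)
        + B (EuclideanSpace.single 1 1) (EuclideanSpace.single 1 1)) * h

lemma ins_norm_le (L : EuclideanSpace ℝ (Fin 2) →L[ℝ] ℝ) (t A B : ℝ)
    (hA : |L (dir t)| ≤ A) (hB : |L (dir (t + Real.pi / 2))| ≤ B) : ‖L‖ ≤ A + B := by
  have hA0 : 0 ≤ A := (abs_nonneg _).trans hA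
  have hB0 : 0 ≤ B := (abs_nonneg _).trans hB
  refine L.opNorm_le_bound (by positivity) fun v => ?_
  have hn : ‖v‖ ^ 2 = v 0 ^ 2 + v 1 ^ 2 := by
    rw [EuclideanSpace.norm_sq_eq]; simp [Fin.sum_univ_two]
  have h := Real.sin_sq_add_cos_sq t
  have e : (v 0 * Real.cos t + v 1 * Real.sin t) ^ 2 + (v 1 * Real.cos t - v 0 * Real.sin t) ^ 2
      = ‖v‖ ^ 2 := by
    rw [hn]; linear_combination (v 0 ^ 2 + v 1 ^ 2) * h
  have c1 : |v 0 * Real.cos t + v 1 * Real.sin t| ≤ ‖v‖ :=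
    abs_le_of_sq_le_sq (by nlinarith [sq_nonneg (v 1 * Real.cos t - v 0 * Real.sin t)])
      (norm_nonneg v)
  have c2 : |v 1 * Real.cos t - v 0 * Real.sin t| ≤ ‖v‖ :=
    abs_le_of_sq_le_sq (by nlinarith [sq_nonneg (v 0 * Real.cos t + v 1 * Real.sin t)])
      (norm_nonneg v)
  have hv := congrArg L (ins_decomp t v)
  rw [map_add, map_smul, map_smul, smul_eq_mul, smul_eq_mul] at hv
  rw [hv, Real.norm_eq_abs]
  refine (abs_add_le _ _).trans ?_
  rw [abs_mul, abs_mul]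
  have := mul_le_mul c1 hA (abs_nonneg _) (norm_nonneg v)
  have := mul_le_mul c2 hB (abs_nonneg _) (norm_nonneg v)
  linarith

set_option maxHeartbeats 1000000 in
lemma ins_good {r₀ ε : ℝ} (hr₀ : 0 < r₀) (hε : 0 < ε) (u : EuclideanSpace ℝ (Fin 2) → ℝ)
    (hu : HarmonicOnSet u {x | r₀ < ‖x‖ ∧ ‖x‖ < r₀ + ε})
    (hu1 : ContDiffOn ℝ 1 u {x | r₀ ≤ ‖x‖ ∧ ‖x‖ ≤ r₀ + ε})
    (hneu : ∀ x : EuclideanSpace ℝ (Fin 2), ‖x‖ = r₀ →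
        fderivWithin ℝ u {y | r₀ ≤ ‖y‖ ∧ ‖y‖ ≤ r₀ + ε} x (‖x‖⁻¹ • x) = 0) :
    InsGood (Real.log r₀) (Real.log (r₀ + ε)) (fun s t => u (Real.exp s • dir t))
      (fun s t => fderiv ℝ u (Real.exp s • dir t) (Real.exp s • dir t))
      (fun s t => fderiv ℝ (fderiv ℝ u) (Real.exp s • dir t) (Real.exp s • dir t)
          (Real.exp s • dir t) + fderiv ℝ u (Real.exp s • dir t) (Real.exp s • dir t))
      (fun s t => fderiv ℝ u (Real.exp s • dir t) (Real.exp s • dir (t + Real.pi / 2)))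
      (fun s t => fderiv ℝ (fderiv ℝ u) (Real.exp s • dir t) (Real.exp s • dir (t + Real.pi / 2))
          (Real.exp s • dir (t + Real.pi / 2))
        + fderiv ℝ u (Real.exp s • dir t) (Real.exp s • dir (t + Real.pi / 2 + Real.pi / 2))) := by
  have hP : ∀ s t, ‖Real.exp s • dir t‖ = Real.exp s := fun s t => by
    rw [norm_smul, ins_norm_dir, mul_one, Real.norm_eq_abs, abs_of_pos (Real.exp_pos s)]
  have hopen : IsOpen {x : EuclideanSpace ℝ (Fin 2) | r₀ < ‖x‖ ∧ ‖x‖ < r₀ + ε} :=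
    (isOpen_lt continuous_const continuous_norm).inter (isOpen_lt continuous_norm continuous_const)
  have hmemc : ∀ s ∈ Icc (Real.log r₀) (Real.log (r₀ + ε)), ∀ t,
      Real.exp s • dir t ∈ {x : EuclideanSpace ℝ (Fin 2) | r₀ ≤ ‖x‖ ∧ ‖x‖ ≤ r₀ + ε} := by
    intro s hs t
    rw [mem_setOf_eq, hP]
    exact ⟨(Real.log_le_iff_le_exp hr₀).1 hs.1, (Real.le_log_iff_exp_le (by linarith)).1 hs.2⟩
  have hmemo : ∀ s ∈ Ioo (Real.log r₀) (Real.log (r₀ + ε)), ∀ t,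
      Real.exp s • dir t ∈ {x : EuclideanSpace ℝ (Fin 2) | r₀ < ‖x‖ ∧ ‖x‖ < r₀ + ε} := by
    intro s hs t
    rw [mem_setOf_eq, hP]
    exact ⟨(Real.log_lt_iff_lt_exp hr₀).1 hs.1, (Real.lt_log_iff_exp_lt (by linarith)).1 hs.2⟩
  have hC2 : ∀ s ∈ Ioo (Real.log r₀) (Real.log (r₀ + ε)), ∀ t,
      ContDiffAt ℝ 2 u (Real.exp s • dir t) := fun s hs t =>
    hu.1.contDiffAt (hopen.mem_nhds (hmemo s hs t))
  have hD1 : ∀ s ∈ Ioo (Real.log r₀) (Real.log (r₀ + ε)), ∀ t,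
      HasFDerivAt u (fderiv ℝ u (Real.exp s • dir t)) (Real.exp s • dir t) := fun s hs t =>
    ((hC2 s hs t).differentiableAt (by norm_num)).hasFDerivAt
  have hD2 : ∀ s ∈ Ioo (Real.log r₀) (Real.log (r₀ + ε)), ∀ t,
      HasFDerivAt (fderiv ℝ u) (fderiv ℝ (fderiv ℝ u) (Real.exp s • dir t))
        (Real.exp s • dir t) := fun s hs t =>
    (((hC2 s hs t).fderiv_right (m := 1) (by norm_num)).differentiableAt (by norm_num)).hasFDerivAt
  have hPs : ∀ s t, HasDerivAt (fun s => Real.exp s • dir t) (Real.exp s • dir t) s := fun s t =>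
    (Real.hasDerivAt_exp s).smul_const (dir t)
  have hPt : ∀ s t, HasDerivAt (fun t => Real.exp s • dir t) (Real.exp s • dir (t + Real.pi / 2)) t :=
    fun s t => (ins_hasDerivAt_dir t).const_smul (Real.exp s)
  have hdirc : Continuous dir :=
    continuous_iff_continuousAt.2 fun t => (ins_hasDerivAt_dir t).continuousAt
  have hlog : Real.log r₀ ≤ Real.log (r₀ + ε) := Real.log_le_log hr₀ (by linarith)
  refine ⟨?_, ?_, ?_, ?_, ?_, ?_, ?_, ?_⟩
  · refine hu1.continuousOn.comp (f := fun p : ℝ × ℝ => Real.exp p.1 • dir p.2)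
      (by fun_prop) ?_
    rintro ⟨s, t⟩ hp
    exact hmemc s hp.1 t
  · intro s t
    simp only [ins_dir_per]
  · intro t
    have hx := hmemc (Real.log r₀) ⟨le_rfl, hlog⟩ t
    have h1 := ((hu1.differentiableOn (by norm_num)) _ hx).hasFDerivWithinAt
    have h2 := h1.comp_hasDerivWithinAt (Real.log r₀)
      ((hPs (Real.log r₀) t).hasDerivWithinAt (s := Icc (Real.log r₀) (Real.log (r₀ + ε))))
      (fun s hs => hmemc s hs t)
    refine h2.congr_deriv ?_
    have h3 := hneu (Real.exp (Real.log r₀) • dir t) (by rw [hP, Real.exp_log hr₀])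
    rw [map_smul, smul_eq_mul, hP] at h3
    rcases mul_eq_zero.1 h3 with h4 | h4
    · exact absurd h4 (inv_ne_zero (Real.exp_pos _).ne')
    · exact h4
  · intro s hs t
    exact HasFDerivAt.comp_hasDerivAt (f := fun s => Real.exp s • dir t) s (hD1 s hs t) (hPs s t)
  · intro s hs t
    have h0 : HasDerivAt (fun s => fderiv ℝ u (Real.exp s • dir t))
        (fderiv ℝ (fderiv ℝ u) (Real.exp s • dir t) (Real.exp s • dir t)) s :=
      HasFDerivAt.comp_hasDerivAt (f := fun s => Real.exp s • dir t) s (hD2 s hs t) (hPs s t)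
    exact h0.clm_apply (hPs s t)
  · intro s hs t
    exact HasFDerivAt.comp_hasDerivAt (f := fun t => Real.exp s • dir t) t (hD1 s hs t) (hPt s t)
  · intro s hs t
    have h1 : HasDerivAt (fun t => Real.exp s • dir (t + Real.pi / 2))
        (Real.exp s • dir (t + Real.pi / 2 + Real.pi / 2)) t :=
      (hPt s (t + Real.pi / 2)).comp_add_const t (Real.pi / 2)
    have h0 : HasDerivAt (fun t => fderiv ℝ u (Real.exp s • dir t))
        (fderiv ℝ (fderiv ℝ u) (Real.exp s • dir t) (Real.exp s • dir (t + Real.pi / 2))) t :=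
      HasFDerivAt.comp_hasDerivAt (f := fun t => Real.exp s • dir t) t (hD2 s hs t) (hPt s t)
    exact h0.clm_apply h1
  · intro s hs t
    have hl := hu.2 _ (hmemo s hs t)
    simp only [laplacian, Fin.sum_univ_two, iteratedFDeriv_two_apply] at hl
    have htr := ins_trace (fderiv ℝ (fderiv ℝ u) (Real.exp s • dir t)) t
    simp only [Matrix.cons_val_zero, Matrix.cons_val_one] at hl
    rw [hl] at htr
    rw [ins_dir_pi]
    simp only [smul_neg, map_neg, map_smul, ContinuousLinearMap.smul_apply, smul_eq_mul] at htr ⊢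
    linear_combination (Real.exp s) ^ 2 * htr

lemma ins_periodic_bound {f : ℝ → ℝ} (hf : Continuous f)
    (hp : Function.Periodic f (2 * Real.pi)) : ∃ M, 0 ≤ M ∧ ∀ t, |f t| ≤ M := by
  obtain ⟨M, hM⟩ := (hp.isBounded_of_continuous Real.two_pi_pos.ne' hf).exists_norm_le
  exact ⟨M, (norm_nonneg _).trans (hM _ ⟨0, rfl⟩), fun t => hM _ ⟨t, rfl⟩⟩

lemma ins_periodic_deriv {f : ℝ → ℝ} {c : ℝ}
    (hp : Function.Periodic f c) : Function.Periodic (deriv f) c := fun t => by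
  rw [← deriv_comp_add_const]
  congr 1
  exact funext hp

end Aux

theorem insulated_two_dim_uniform_gradient_bound {r₀ : ℝ} (hr₀ : 0 < r₀)
    (φ : EuclideanSpace ℝ (Fin 2) → ℝ)
    (hφ : ContDiff ℝ 2 fun θ : ℝ => φ (dir θ)) :
    ∃ C : ℝ, 0 < C ∧ ∀ ε ∈ Set.Ioc (0 : ℝ) 1, ∀ u : EuclideanSpace ℝ (Fin 2) → ℝ,
      HarmonicOnSet u {x | r₀ < ‖x‖ ∧ ‖x‖ < r₀ + ε} →
      ContDiffOn ℝ 1 u {x | r₀ ≤ ‖x‖ ∧ ‖x‖ ≤ r₀ + ε} →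
      (∀ x : EuclideanSpace ℝ (Fin 2), ‖x‖ = r₀ →
        fderivWithin ℝ u {y | r₀ ≤ ‖y‖ ∧ ‖y‖ ≤ r₀ + ε} x (‖x‖⁻¹ • x) = 0) →
      (∀ θ : ℝ, u ((r₀ + ε) • dir θ) = φ (dir θ)) →
      ∀ x : EuclideanSpace ℝ (Fin 2), r₀ < ‖x‖ → ‖x‖ < r₀ + ε →
        ‖gradient u x‖ ≤ C := by

  have hp0 : Function.Periodic (fun θ : ℝ => φ (dir θ)) (2 * Real.pi) := fun t => by
    simp only [ins_dir_per]
  set f : ℝ → ℝ := fun θ : ℝ => φ (dir θ) with hfdef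
  have hf1 : ContDiff ℝ 1 (deriv f) := by
    have h : ContDiff ℝ (1 + 1) f := by simpa [one_add_one_eq_two] using hφ
    exact ((contDiff_succ_iff_deriv).1 h).2.2
  have hd : ∀ t, HasDerivAt f (deriv f t) t := fun t =>
    (hφ.differentiable (by norm_num) t).hasDerivAt
  have hdd : ∀ t, HasDerivAt (deriv f) (deriv (deriv f) t) t := fun t =>
    (hf1.differentiable (by norm_num) t).hasDerivAt
  obtain ⟨M₁, hM₁0, hM₁⟩ := ins_periodic_bound hf1.continuous (ins_periodic_deriv hp0)
  obtain ⟨M₂, hM₂0, hM₂⟩ := ins_periodic_bound (hf1.continuous_deriv (by norm_num))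
    (ins_periodic_deriv (ins_periodic_deriv hp0))
  refine ⟨(M₂ * r₀⁻¹ + M₁) / r₀ + 1, by positivity, ?_⟩
  intro ε hε u hu hu1 hneu hbd x hx1 hx2
  have hG := ins_good hr₀ hε.1 u hu hu1 hneu
  have hab : Real.log r₀ < Real.log (r₀ + ε) := Real.log_lt_log hr₀ (by linarith [hε.1])
  have hxpos : 0 < ‖x‖ := hr₀.trans hx1
  have hW : ∀ t, u (Real.exp (Real.log (r₀ + ε)) • dir t) = f t := fun t => by
    rw [Real.exp_log (by linarith [hε.1]), hbd]
  have hs : Real.log ‖x‖ ∈ Ioo (Real.log r₀) (Real.log (r₀ + ε)) :=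
    ⟨Real.log_lt_log hr₀ hx1, Real.log_lt_log hxpos hx2⟩
  obtain ⟨t, ht⟩ := ins_exists_polar x
  have i1 := hG.wt_le hab hW hd hM₁ _ hs t
  have i2 := hG.ws_le hab hW hd hdd (fun t => (abs_le.1 (hM₂ t)).2) _ hs t
  have i3 := hG.neg.ws_le hab (f := fun t => -f t) (f' := fun t => - deriv f t)
    (f'' := fun t => - deriv (deriv f) t) (fun t => by rw [hW t]) (fun t => (hd t).fun_neg)
    (fun t => (hdd t).fun_neg) (M := M₂) (fun t => by linarith [(abs_le.1 (hM₂ t)).1]) _ hs t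
  simp only [Real.exp_log hxpos, ← ht] at i1 i2 i3
  have hlen : Real.log ‖x‖ - Real.log r₀ ≤ r₀⁻¹ := by
    rw [← Real.log_div hxpos.ne' hr₀.ne']
    refine (Real.log_le_sub_one_of_pos (by positivity)).trans ?_
    rw [div_sub_one hr₀.ne', div_eq_mul_inv]
    have : ‖x‖ - r₀ ≤ 1 := by linarith [hε.2]
    exact mul_le_of_le_one_left (by positivity) this
  have hlen' := mul_le_mul_of_nonneg_left hlen hM₂0
  have i4 : |fderiv ℝ u x x| ≤ M₂ * r₀⁻¹ := abs_le.2 ⟨by linarith, by linarith⟩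
  have e1 : fderiv ℝ u x x = ‖x‖ * fderiv ℝ u x (dir t) := by
    conv_lhs => rw [show fderiv ℝ u x x = fderiv ℝ u x (‖x‖ • dir t) by rw [← ht]]
    rw [map_smul, smul_eq_mul]
  rw [e1, abs_mul, abs_norm] at i4
  rw [map_smul, smul_eq_mul, abs_mul, abs_norm] at i1
  have j1 : |fderiv ℝ u x (dir t)| ≤ M₂ * r₀⁻¹ / r₀ := by
    rw [le_div_iff₀ hr₀, mul_comm]
    exact (mul_le_mul_of_nonneg_right hx1.le (abs_nonneg _)).trans i4
  have j2 : |fderiv ℝ u x (dir (t + Real.pi / 2))| ≤ M₁ / r₀ := by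
    rw [le_div_iff₀ hr₀, mul_comm]
    exact (mul_le_mul_of_nonneg_right hx1.le (abs_nonneg _)).trans i1
  have hn : ‖gradient u x‖ = ‖fderiv ℝ u x‖ := by
    rw [gradient, LinearIsometryEquiv.norm_map]
  rw [hn, add_div]
  linarith [ins_norm_le _ t _ _ j1 j2]
end

section
/- Let r₀ > 0 and let φ be a nonconstant C² real-valued function on the unit circle, transported to the circle of radius r₀+ε for each ε > 0 by θ ↦ φ(cos θ, sin θ). For each ε > 0, let u_ε be the solution of the perfect conductivity problem on the annulus {x ∈ ℝ² : r₀ < |x| < r₀+ε}: u_ε is harmonic on the open annulus, C¹ up to the closed annulus, identically equal to some constant on the inner circle {|x| = r₀}, has vanishing total radial flux across the inner circle (∫_{{|x|=r₀}} ⟨∇u_ε(x), x/|x|⟩ dσ(x) = 0), and u_ε((r₀+ε)(cos θ, sin θ)) = φ(cos θ, sin θ) for all θ. Then there exist constants ε₀ > 0 and 0 < c₁ ≤ c₂, depending only on r₀ and φ, such that for every ε ∈ (0, ε₀): c₁/ε ≤ sup over the open annulus of |∇u_ε| ≤ c₂/ε. -/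
open MeasureTheory Metric Set
open scoped InnerProductSpace

open Filter Topology

/-- Second derivative test: at a local maximum the second derivative is nonpositive. -/
lemma second_deriv_nonpos_of_isLocalMax {g g1 : ℝ → ℝ} {p x : ℝ}
    (h1 : ∀ᶠ y in 𝓝 x, HasDerivAt g (g1 y) y) (h2 : HasDerivAt g1 p x)
    (hm : IsLocalMax g x) : p ≤ 0 := by
  by_contra! hp
  have e1 : deriv g =ᶠ[𝓝 x] g1 := h1.mono fun y hy => hy.deriv
  have e2 : deriv (deriv g) x = p := by rw [e1.deriv_eq, h2.deriv]
  have hmin : IsLocalMin g x :=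
    isLocalMin_of_deriv_deriv_pos (by rw [e2]; exact hp) hm.deriv_eq_zero
      h1.self_of_nhds.continuousAt
  have hc : g =ᶠ[𝓝 x] fun _ => g x := by
    filter_upwards [hm, hmin] with y hy hy'
    exact le_antisymm hy hy'
  have e3 : deriv g =ᶠ[𝓝 x] fun _ => 0 := by
    have := hc.deriv
    simpa using this
  have : deriv (deriv g) x = 0 := by rw [e3.deriv_eq]; simp
  linarith

/-- Weak maximum principle on a strip, for functions periodic in the second variable. -/
lemma strip_weak_max {a b : ℝ} {D Ds Dt p q : ℝ → ℝ → ℝ}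
    (hcont : ContinuousOn (fun z : ℝ × ℝ => D z.1 z.2) (Icc a b ×ˢ univ))
    (hper : ∀ s θ, D s (θ + 2 * Real.pi) = D s θ)
    (hs : ∀ s ∈ Ioo a b, ∀ θ, HasDerivAt (fun s => D s θ) (Ds s θ) s)
    (hss : ∀ s ∈ Ioo a b, ∀ θ, HasDerivAt (fun s => Ds s θ) (p s θ) s)
    (ht : ∀ s ∈ Ioo a b, ∀ θ, HasDerivAt (fun θ => D s θ) (Dt s θ) θ)
    (htt : ∀ s ∈ Ioo a b, ∀ θ, HasDerivAt (fun θ => Dt s θ) (q s θ) θ)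
    (hpq : ∀ s ∈ Ioo a b, ∀ θ, 0 ≤ p s θ + q s θ)
    (ha : ∀ θ, D a θ ≤ 0) (hb : ∀ θ, D b θ ≤ 0) :
    ∀ s ∈ Icc a b, ∀ θ, D s θ ≤ 0 := by
  -- the perturbed statement
  have key : ∀ δ > 0, ∀ s ∈ Icc a b, ∀ θ, D s θ + δ * ((s - a) * (s - b)) ≤ 0 := by
    intro δ hδ s0 hs0 θ0
    set G : ℝ × ℝ → ℝ := fun z => D z.1 z.2 + δ * ((z.1 - a) * (z.1 - b)) with hG
    have hGc : ContinuousOn G (Icc a b ×ˢ univ) := by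
      apply hcont.add; fun_prop
    have hcomp : IsCompact (Icc a b ×ˢ Icc (0:ℝ) (2 * Real.pi)) := isCompact_Icc.prod isCompact_Icc
    obtain ⟨z, hz, hzm⟩ := hcomp.exists_isMaxOn ⟨(s0, 0), by
      refine ⟨hs0, ?_⟩; simp; positivity⟩ (hGc.mono (prod_mono le_rfl (subset_univ _)))
    have hperD : ∀ s, Function.Periodic (D s) (2 * Real.pi) := fun s θ => hper s θ
    have hmax : ∀ s ∈ Icc a b, ∀ θ, G (s, θ) ≤ G z := by
      intro s hs θ
      obtain ⟨θ', hθ', he⟩ := (hperD s).exists_mem_Ico₀ (by positivity) θ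
      have := hzm (show (s, θ') ∈ _ from ⟨hs, Ico_subset_Icc_self hθ'⟩)
      simp only [mem_ofPred_eq, hG] at this ⊢
      rw [he]; exact this
    have hz1 := hz.1
    refine (hmax s0 hs0 θ0).trans ?_
    rcases eq_or_lt_of_le hz1.1 with h | h
    · simp only [hG, ← h]; simpa using ha z.2
    rcases eq_or_lt_of_le hz1.2 with h' | h'
    · simp only [hG, h']; simpa using hb z.2
    exfalso
    have hI : z.1 ∈ Ioo a b := ⟨h, h'⟩
    have hIn : Ioo a b ∈ 𝓝 z.1 := isOpen_Ioo.mem_nhds hI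
    have A : p z.1 z.2 + 2 * δ ≤ 0 := by
      refine second_deriv_nonpos_of_isLocalMax (g := fun s => G (s, z.2))
        (g1 := fun s => Ds s z.2 + δ * ((s - b) + (s - a))) (x := z.1) ?_ ?_ ?_
      · filter_upwards [hIn] with y hy
        have : HasDerivAt (fun s : ℝ => δ * ((s - a) * (s - b))) (δ * (1 * (y - b) + (y - a) * 1)) y :=
          (((hasDerivAt_id y).sub_const a).mul ((hasDerivAt_id y).sub_const b)).const_mul δ
        exact ((hs y hy z.2).add this).congr_deriv (by ring)
      · have : HasDerivAt (fun s : ℝ => δ * ((s - b) + (s - a))) (δ * (1 + 1)) z.1 :=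
          (((hasDerivAt_id z.1).sub_const b).add ((hasDerivAt_id z.1).sub_const a)).const_mul δ
        exact ((hss z.1 hI z.2).add this).congr_deriv (by ring)
      · filter_upwards [hIn] with y hy
        exact hmax y (Ioo_subset_Icc_self hy) z.2
    have B : q z.1 z.2 ≤ 0 := by
      refine second_deriv_nonpos_of_isLocalMax (g := fun t => G (z.1, t))
        (g1 := fun t => Dt z.1 t) (x := z.2) ?_ (htt z.1 hI z.2) ?_
      · exact Eventually.of_forall fun y =>
          (ht z.1 hI y).add_const (δ * ((z.1 - a) * (z.1 - b)))
      · exact Eventually.of_forall fun y => hmax z.1 hz1 y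
    have := hpq z.1 hI z.2
    linarith
  intro s hs' θ
  by_contra! hpos
  by_cases h0 : (s - a) * (s - b) = 0
  · have := key 1 one_pos s hs' θ
    rw [h0] at this; linarith
  · have hn : (s - a) * (s - b) < 0 := lt_of_le_of_ne
      (mul_nonpos_of_nonneg_of_nonpos (by linarith [hs'.1]) (by linarith [hs'.2])) h0
    have := key (D s θ / (2 * -((s - a) * (s - b)))) (by apply div_pos hpos; linarith) s hs' θ
    have e : D s θ / (2 * -((s - a) * (s - b))) * ((s - a) * (s - b)) = - D s θ / 2 := by
      have hne : (s - a) * (s - b) ≠ 0 := h0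
      generalize (s - a) * (s - b) = X at hne ⊢
      field_simp
    rw [e] at this; linarith

lemma slope_left {a b k g' : ℝ} (hab : a < b) {g : ℝ → ℝ}
    (hg : HasDerivWithinAt g g' (Icc a b) a)
    (h : ∀ s ∈ Icc a b, g s ≤ g a + k * (s - a)) : g' ≤ k := by
  have h1 := hasDerivWithinAt_iff_tendsto_slope.1 hg
  have h2 : Icc a b \ {a} = Ioc a b := Icc_sdiff_left
  rw [h2, nhdsWithin_Ioc_eq_nhdsGT hab] at h1
  refine le_of_tendsto h1 ?_
  filter_upwards [Ioc_mem_nhdsGT hab] with s hs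
  rw [slope_def_field, div_le_iff₀ (by linarith [hs.1])]
  linarith [h s (Ioc_subset_Icc_self hs)]

lemma slope_right {a b k g' : ℝ} (hab : a < b) {g : ℝ → ℝ}
    (hg : HasDerivWithinAt g g' (Icc a b) b)
    (h : ∀ s ∈ Icc a b, g s ≤ g b + k * (b - s)) : -k ≤ g' := by
  have h1 := hasDerivWithinAt_iff_tendsto_slope.1 hg
  have h2 : Icc a b \ {b} = Ico a b := Icc_sdiff_right
  rw [h2, nhdsWithin_Ico_eq_nhdsLT hab] at h1
  refine ge_of_tendsto h1 ?_
  filter_upwards [Ico_mem_nhdsLT hab] with s hs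
  rw [slope_def_field, le_div_iff_of_neg (by linarith [hs.2])]
  linarith [h s (Ico_subset_Icc_self hs)]

/-- A solution in logarithmic polar coordinates, with `h = ∂ₛ v - i ∂_θ v`. -/
structure StripSol (a b : ℝ) (f : ℝ → ℝ) (c : ℝ) (v : ℝ → ℝ → ℝ) (h : ℂ → ℂ) : Prop where
  cont : ContinuousOn (fun z : ℝ × ℝ => v z.1 z.2) (Icc a b ×ˢ univ)
  per : ∀ s θ, v s (θ + 2 * Real.pi) = v s θ
  ds : ∀ s ∈ Icc a b, ∀ θ : ℝ, HasDerivWithinAt (fun s => v s θ) (h ⟨s, θ⟩).re (Icc a b) s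
  dt : ∀ s ∈ Icc a b, ∀ θ : ℝ, HasDerivAt (fun θ => v s θ) (-(h ⟨s, θ⟩).im) θ
  hol : ∀ z : ℂ, z.re ∈ Ioo a b → DifferentiableAt ℂ h z
  hcont : ContinuousOn h {z | z.re ∈ Icc a b}
  bdd : ∃ B, ∀ z : ℂ, z.re ∈ Icc a b → ‖h z‖ ≤ B
  inner : ∀ θ, v a θ = c
  outer : ∀ θ, v b θ = f θ

namespace StripSol

variable {a b c : ℝ} {f : ℝ → ℝ} {v : ℝ → ℝ → ℝ} {h : ℂ → ℂ}

lemma neg (S : StripSol a b f c v h) :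
    StripSol a b (fun θ => - f θ) (-c) (fun s θ => - v s θ) (fun z => - h z) where
  cont := S.cont.neg
  per s θ := by rw [S.per]
  ds s hs θ := by simpa using! (S.ds s hs θ).neg
  dt s hs θ := by simpa using! (S.dt s hs θ).neg
  hol z hz := (S.hol z hz).neg
  hcont := S.hcont.neg
  bdd := by simpa using S.bdd
  inner θ := by rw [S.inner]
  outer θ := by rw [S.outer]

lemma hasDerivAt_line_re {z : ℂ} (hd : DifferentiableAt ℂ h z) :
    HasDerivAt (fun s : ℝ => (h ⟨s, z.im⟩).re) (deriv h z).re z.re := by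
  have h1 : HasDerivAt (fun s : ℝ => (⟨s, z.im⟩ : ℂ)) 1 z.re := by
    have : (fun s : ℝ => (⟨s, z.im⟩ : ℂ)) = fun s : ℝ => (s : ℂ) + z.im * Complex.I := by
      ext s; apply Complex.ext <;> simp
    rw [this]
    exact (Complex.ofRealCLM.hasDerivAt (x := z.re)).add_const _
  have h2 : HasDerivAt (fun s : ℝ => h ⟨s, z.im⟩) (deriv h z * 1) z.re := by
    have := hd.hasDerivAt
    exact HasDerivAt.comp z.re (h₂ := h) (by simpa using this) h1
  simpa using! (Complex.reCLM.hasFDerivAt.comp_hasDerivAt _ h2)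

lemma hasDerivAt_line_im {z : ℂ} (hd : DifferentiableAt ℂ h z) :
    HasDerivAt (fun t : ℝ => -(h ⟨z.re, t⟩).im) (-(deriv h z).re) z.im := by
  have h1 : HasDerivAt (fun t : ℝ => (⟨z.re, t⟩ : ℂ)) Complex.I z.im := by
    have : (fun t : ℝ => (⟨z.re, t⟩ : ℂ)) = fun t : ℝ => (z.re : ℂ) + t * Complex.I := by
      ext s; apply Complex.ext <;> simp
    rw [this]
    simpa using ((Complex.ofRealCLM.hasDerivAt (x := z.im)).mul_const Complex.I).const_add (z.re : ℂ)
  have h2 : HasDerivAt (fun t : ℝ => h ⟨z.re, t⟩) (deriv h z * Complex.I) z.im := by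
    have := hd.hasDerivAt
    exact HasDerivAt.comp z.im (h₂ := h) (by simpa using this) h1
  simpa using! (Complex.imCLM.hasFDerivAt.comp_hasDerivAt _ h2).neg

/-- Comparison with a supersolution `f(θ) + w(s)`-type barrier. -/
lemma compare (S : StripSol a b f c v h) {g g1 g2 w w1 w2 : ℝ → ℝ}
    (hg : ∀ θ, HasDerivAt g (g1 θ) θ) (hg1 : ∀ θ, HasDerivAt g1 (g2 θ) θ)
    (hgp : ∀ θ, g (θ + 2 * Real.pi) = g θ)
    (hw : ∀ s, HasDerivAt w (w1 s) s) (hw1 : ∀ s, HasDerivAt w1 (w2 s) s)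
    (hle : ∀ s θ, g2 θ + w2 s ≤ 0)
    (ha : ∀ θ, c ≤ g θ + w a) (hb : ∀ θ, f θ ≤ g θ + w b) :
    ∀ s ∈ Icc a b, ∀ θ, v s θ ≤ g θ + w s := by
  have hgc : Continuous g := continuous_iff_continuousAt.2 fun θ => (hg θ).continuousAt
  have hwc : Continuous w := continuous_iff_continuousAt.2 fun θ => (hw θ).continuousAt
  intro s hs θ
  have := strip_weak_max (a := a) (b := b) (D := fun s θ => v s θ - (g θ + w s))
    (Ds := fun s θ => (h ⟨s, θ⟩).re - w1 s) (Dt := fun s θ => -(h ⟨s, θ⟩).im - g1 θ)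
    (p := fun s θ => (deriv h ⟨s, θ⟩).re - w2 s) (q := fun s θ => -(deriv h ⟨s, θ⟩).re - g2 θ)
    (S.cont.sub (by fun_prop)) (fun s θ => by simp only [S.per, hgp])
    (fun s hs θ => by
      have := (S.ds s (Ioo_subset_Icc_self hs) θ).hasDerivAt (Icc_mem_nhds hs.1 hs.2)
      exact this.sub ((hw s).const_add _))
    (fun s hs θ => (hasDerivAt_line_re (z := ⟨s, θ⟩) (S.hol _ hs)).sub (hw1 s))
    (fun s hs θ => (S.dt s (Ioo_subset_Icc_self hs) θ).sub ((hg θ).add_const _))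
    (fun s hs θ => (hasDerivAt_line_im (z := ⟨s, θ⟩) (S.hol _ hs)).sub (hg1 θ))
    (fun s hs θ => by linarith [hle s θ])
    (fun θ => by simp only [S.inner]; linarith [ha θ])
    (fun θ => by simp only [S.outer]; linarith [hb θ]) s hs θ
  linarith

lemma inner_le (S : StripSol a b f c v h) (hab : a < b) {A : ℝ} (hA : ∀ θ, f θ - c ≤ A) (θ : ℝ) :
    (h ⟨a, θ⟩).re ≤ A / (b - a) := by
  have hL : 0 < b - a := by linarith
  have hc := S.compare (g := fun _ => c) (g1 := fun _ => 0) (g2 := fun _ => 0)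
    (w := fun s => A / (b - a) * (s - a)) (w1 := fun _ => A / (b - a)) (w2 := fun _ => 0)
    (fun θ => hasDerivAt_const _ _) (fun θ => hasDerivAt_const _ _) (fun _ => rfl)
    (fun s => by simpa using ((hasDerivAt_id s).sub_const a).const_mul (A / (b - a)))
    (fun θ => hasDerivAt_const _ _) (by simp) (by simp)
    (fun θ => by rw [div_mul_cancel₀ _ hL.ne']; linarith [hA θ])
  refine slope_left hab (S.ds a ⟨le_rfl, hab.le⟩ θ) fun s hs => ?_
  rw [S.inner]; exact hc s hs θ

lemma outer_ge (S : StripSol a b f c v h) (hab : a < b) {f1 f2 : ℝ → ℝ} {A K : ℝ}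
    (hf : ∀ θ, HasDerivAt f (f1 θ) θ) (hf1 : ∀ θ, HasDerivAt f1 (f2 θ) θ)
    (hK : ∀ θ, f2 θ ≤ K) (hK0 : 0 ≤ K) (hA : ∀ θ, c - f θ ≤ A) (θ : ℝ) :
    -(A / (b - a) + K / 2 * (b - a)) ≤ (h ⟨b, θ⟩).re := by
  have hL : 0 < b - a := by linarith
  have hc := S.compare (g := f) (g1 := f1) (g2 := f2)
    (w := fun s => A / (b - a) * (b - s) + K / 2 * ((b - s) * (s - a)))
    (w1 := fun s => - (A / (b - a)) + K / 2 * ((b - s) - (s - a))) (w2 := fun _ => -K)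
    hf hf1 (fun θ => by rw [← S.outer, S.per, S.outer])
    (fun s => by
      have h1 : HasDerivAt (fun s => b - s) (-1) s := by simpa using (hasDerivAt_id s).const_sub b
      have h2 : HasDerivAt (fun s => s - a) 1 s := by simpa using (hasDerivAt_id s).sub_const a
      exact ((h1.const_mul (A / (b - a))).add ((h1.mul h2).const_mul (K / 2))).congr_deriv (by ring))
    (fun s => by
      have h1 : HasDerivAt (fun s => b - s) (-1) s := by simpa using (hasDerivAt_id s).const_sub b
      have h2 : HasDerivAt (fun s => s - a) 1 s := by simpa using (hasDerivAt_id s).sub_const a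
      exact (((h1.sub h2).const_mul (K / 2)).const_add (- (A / (b - a)))).congr_deriv (by ring))
    (fun s θ => by linarith [hK θ])
    (fun θ => by rw [div_mul_cancel₀ _ hL.ne']; simp; linarith [hA θ])
    (by simp)
  refine slope_right hab (S.ds b ⟨hab.le, le_rfl⟩ θ) fun s hs => ?_
  rw [S.outer]
  refine (hc s hs θ).trans ?_
  have : (b - s) * (s - a) ≤ (b - s) * (b - a) :=
    mul_le_mul_of_nonneg_left (by linarith [hs.2]) (by linarith [hs.2])
  nlinarith

/-- The global gradient bound in the strip. -/
lemma norm_le (S : StripSol a b f c v h) (hab : a < b) {f1 f2 : ℝ → ℝ} {A K M : ℝ}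
    (hf : ∀ θ, HasDerivAt f (f1 θ) θ) (hf1 : ∀ θ, HasDerivAt f1 (f2 θ) θ)
    (hM : ∀ θ, |f1 θ| ≤ M)
    (hK : ∀ θ, |f2 θ| ≤ K) (hA : ∀ θ, |f θ - c| ≤ A) (z : ℂ) (hz : z.re ∈ Icc a b) :
    ‖h z‖ ≤ A / (b - a) + K / 2 * (b - a) + M := by
  have hL : 0 < b - a := by linarith
  have hK0 : 0 ≤ K := (abs_nonneg _).trans (hK 0)
  have hM0 : 0 ≤ M := (abs_nonneg _).trans (hM 0)
  have hKL : 0 ≤ K / 2 * (b - a) := by positivity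
  have hza : ∀ z : ℂ, z.re = a → ‖h z‖ ≤ A / (b - a) + K / 2 * (b - a) + M := by
    rintro ⟨s, θ⟩ rfl
    refine (Complex.norm_le_abs_re_add_abs_im _).trans ?_
    have hi : (h ⟨s, θ⟩).im = 0 := by
      have h1 := S.dt s ⟨le_rfl, hab.le⟩ θ
      have h2 : HasDerivAt (fun θ => v s θ) 0 θ := by
        simp only [show ∀ θ, v s θ = c from S.inner]; exact hasDerivAt_const _ _
      linarith [h1.unique h2]
    have r1 := S.inner_le hab (A := A) (fun θ => (abs_le.1 (hA θ)).2) θ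
    have r2 := S.neg.inner_le hab (A := A) (fun θ => by linarith [(abs_le.1 (hA θ)).1]) θ
    simp only [Complex.neg_re] at r2
    have : |(h ⟨s, θ⟩).re| ≤ A / (b - s) := abs_le.2 ⟨by linarith, r1⟩
    rw [hi, abs_zero]; linarith
  have hzb : ∀ z : ℂ, z.re = b → ‖h z‖ ≤ A / (b - a) + K / 2 * (b - a) + M := by
    rintro ⟨s, θ⟩ rfl
    refine (Complex.norm_le_abs_re_add_abs_im _).trans ?_
    have hi : (h ⟨s, θ⟩).im = - f1 θ := by
      have h1 := S.dt s ⟨hab.le, le_rfl⟩ θ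
      have h2 : HasDerivAt (fun θ => v s θ) (f1 θ) θ := by
        simp only [show ∀ θ, v s θ = f θ from S.outer]; exact hf θ
      linarith [h1.unique h2]
    have r1 := S.outer_ge hab hf hf1 (fun θ => (abs_le.1 (hK θ)).2) hK0 (A := A)
      (fun θ => by linarith [(abs_le.1 (hA θ)).1]) θ
    have r2 := S.neg.outer_ge hab (fun θ => (hf θ).neg) (fun θ => (hf1 θ).neg) (K := K)
      (fun θ => by linarith [(abs_le.1 (hK θ)).1]) hK0 (A := A)
      (fun θ => by linarith [(abs_le.1 (hA θ)).2]) θ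
    simp only [Complex.neg_re] at r2
    have : |(h ⟨s, θ⟩).re| ≤ A / (s - a) + K / 2 * (s - a) := abs_le.2 ⟨by linarith, by linarith⟩
    rw [hi, abs_neg]; linarith [hM θ]
  obtain ⟨B, hB⟩ := S.bdd
  refine PhragmenLindelof.vertical_strip (a := a) (b := b) ⟨?_, ?_⟩ ⟨0, ?_, 0, ?_⟩ hza hzb hz.1 hz.2
  · intro z hz; exact (S.hol z hz).differentiableWithinAt
  · refine S.hcont.mono ?_
    refine closure_minimal (fun z hz => Ioo_subset_Icc_self hz) ?_
    exact isClosed_Icc.preimage Complex.continuous_re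
  · positivity
  · refine Asymptotics.IsBigO.of_bound B ?_
    refine Filter.eventually_inf_principal.2 (Eventually.of_forall fun z hz => ?_)
    simpa using hB z (Ioo_subset_Icc_self hz)

end StripSol

/-- Identification of `ℂ` with the Euclidean plane. -/
noncomputable def iC : ℂ ≃ₗᵢ[ℝ] EuclideanSpace ℝ (Fin 2) := Complex.orthonormalBasisOneI.repr

lemma iC_exp (s θ : ℝ) : iC (Complex.exp ⟨s, θ⟩) = Real.exp s • dir θ := by
  have h0 : (⟨s, θ⟩ : ℂ).re = s := rfl
  have h1 : (⟨s, θ⟩ : ℂ).im = θ := rfl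
  ext i
  fin_cases i
  · change (Complex.exp ⟨s, θ⟩).re = Real.exp s * Real.cos θ
    rw [Complex.exp_re]
  · change (Complex.exp ⟨s, θ⟩).im = Real.exp s * Real.sin θ
    rw [Complex.exp_im]

lemma norm_iC_exp (z : ℂ) : ‖iC (Complex.exp z)‖ = Real.exp z.re := by
  rw [LinearIsometryEquiv.norm_map, Complex.norm_exp]

lemma exists_iC_exp {x : EuclideanSpace ℝ (Fin 2)} (hx : x ≠ 0) : ∃ z, iC (Complex.exp z) = x := by
  refine ⟨Complex.log (iC.symm x), ?_⟩
  rw [Complex.exp_log (by simpa using hx)]; simp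

lemma hasFDerivAt_E (z : ℂ) : HasFDerivAt (fun z => iC (Complex.exp z))
    ((iC.toContinuousLinearEquiv : ℂ →L[ℝ] EuclideanSpace ℝ (Fin 2)).comp
      (ContinuousLinearMap.mul ℝ ℂ (Complex.exp z))) z := by
  have h1 : HasFDerivAt Complex.exp (ContinuousLinearMap.mul ℝ ℂ (Complex.exp z)) z := by
    have := (Complex.hasDerivAt_exp z).hasFDerivAt.restrictScalars ℝ
    refine this.congr_fderiv ?_
    ext <;> simp [mul_comm]
  exact (iC.toContinuousLinearEquiv : ℂ →L[ℝ] EuclideanSpace ℝ (Fin 2)).hasFDerivAt.comp z h1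

lemma image_strip {r R : ℝ} (hr : 0 < r) (hR : 0 < R) :
    (fun z => iC (Complex.exp z)) '' {z | z.re ∈ Icc (Real.log r) (Real.log R)} =
      {x | r ≤ ‖x‖ ∧ ‖x‖ ≤ R} := by
  ext x
  constructor
  · rintro ⟨z, hz, rfl⟩
    simp only [mem_ofPred_eq, norm_iC_exp]
    exact ⟨(Real.log_le_iff_le_exp hr).1 hz.1, (Real.le_log_iff_exp_le hR).1 hz.2⟩
  · rintro ⟨h1, h2⟩
    obtain ⟨z, rfl⟩ := exists_iC_exp (x := x) (by rintro rfl; simp at h1; linarith)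
    rw [norm_iC_exp] at h1 h2
    exact ⟨z, ⟨(Real.log_le_iff_le_exp hr).2 h1, (Real.le_log_iff_exp_le hR).2 h2⟩, rfl⟩

lemma uniqueDiffOn_annulus {r R : ℝ} (hr : 0 < r) (hrR : r < R) :
    UniqueDiffOn ℝ {x : EuclideanSpace ℝ (Fin 2) | r ≤ ‖x‖ ∧ ‖x‖ ≤ R} := by
  have hl : Real.log r < Real.log R := Real.log_lt_log hr hrR
  have hS : UniqueDiffOn ℝ {z : ℂ | z.re ∈ Icc (Real.log r) (Real.log R)} := by
    apply uniqueDiffOn_convex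
    · exact (convex_Icc _ _).linear_preimage Complex.reLm
    · have ho : IsOpen {z : ℂ | z.re ∈ Ioo (Real.log r) (Real.log R)} :=
        isOpen_Ioo.preimage Complex.continuous_re
      refine ⟨((Real.log r + Real.log R) / 2 : ℝ), ?_⟩
      have hsub : {z : ℂ | z.re ∈ Ioo (Real.log r) (Real.log R)} ⊆
          {z : ℂ | z.re ∈ Icc (Real.log r) (Real.log R)} := fun z hz => Ioo_subset_Icc_self hz
      refine (interior_maximal hsub ho) ?_
      simp only [mem_ofPred_eq, Complex.ofReal_re]
      constructor <;> linarith
  rw [← image_strip hr (hr.trans hrR)]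
  rintro _ ⟨z, hz, rfl⟩
  refine (hasFDerivAt_E z).hasFDerivWithinAt.uniqueDiffWithinAt (hS z hz) ?_
  apply Function.Surjective.denseRange
  intro y
  refine ⟨iC.symm y / Complex.exp z, ?_⟩
  simp [mul_div_cancel₀]

/-- The complex gradient. -/
noncomputable def cgrad (T : EuclideanSpace ℝ (Fin 2) → (EuclideanSpace ℝ (Fin 2) →L[ℝ] ℝ)) (z : ℂ) : ℂ :=
  (T (iC z) (iC 1) : ℂ) - Complex.I * (T (iC z) (iC Complex.I) : ℂ)

lemma cgrad_mul_re (T : EuclideanSpace ℝ (Fin 2) → (EuclideanSpace ℝ (Fin 2) →L[ℝ] ℝ)) (z y : ℂ) :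
    (y * cgrad T z).re = T (iC z) (iC y) := by
  have : y = y.re • (1 : ℂ) + y.im • Complex.I := by
    apply Complex.ext <;> simp
  conv_rhs => rw [this]
  simp only [map_add, map_smul]
  simp [cgrad]

lemma norm_T_le (T : EuclideanSpace ℝ (Fin 2) → (EuclideanSpace ℝ (Fin 2) →L[ℝ] ℝ)) (z : ℂ) :
    ‖T (iC z)‖ ≤ ‖cgrad T z‖ := by
  refine ContinuousLinearMap.opNorm_le_bound _ (norm_nonneg _) fun y => ?_
  obtain ⟨y, rfl⟩ := iC.surjective y
  rw [← cgrad_mul_re, LinearIsometryEquiv.norm_map, Real.norm_eq_abs]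
  refine (Complex.abs_re_le_norm _).trans ?_
  rw [norm_mul, mul_comm]

lemma harmonicAt_comp {u : EuclideanSpace ℝ (Fin 2) → ℝ} {U : Set (EuclideanSpace ℝ (Fin 2))}
    (hU : IsOpen U) (h : HarmonicOnSet u U) {z : ℂ} (hz : iC z ∈ U) :
    InnerProductSpace.HarmonicAt (fun z => u (iC z)) z := by
  have hcd : ∀ z, iC z ∈ U → ContDiffAt ℝ 2 u (iC z) := fun z hz => (h.1.contDiffAt (hU.mem_nhds hz))
  refine ⟨(hcd z hz).comp z iC.contDiff.contDiffAt, ?_⟩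
  have : ∀ᶠ y in 𝓝 z, iC y ∈ U := iC.continuous.continuousAt.eventually (hU.mem_nhds hz)
  filter_upwards [this] with y hy
  have hl := h.2 _ hy
  rw [InnerProductSpace.laplacian_eq_iteratedFDeriv_complexPlane]
  simp only [laplacian, Fin.sum_univ_two] at hl
  have e1 : iC 1 = EuclideanSpace.single 0 1 := by
    ext i; fin_cases i <;> simp [iC]
  have e2 : iC Complex.I = EuclideanSpace.single 1 1 := by
    ext i; fin_cases i <;> simp [iC]
  simp only [iteratedFDeriv_two_apply, Pi.zero_apply] at hl ⊢
  have hd : ∀ᶠ w in 𝓝 y, fderiv ℝ (fun z => u (iC z)) w = (fderiv ℝ u (iC w)).comp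
      (iC.toContinuousLinearEquiv : ℂ →L[ℝ] EuclideanSpace ℝ (Fin 2)) := by
    have : ∀ᶠ w in 𝓝 y, iC w ∈ U := iC.continuous.continuousAt.eventually (hU.mem_nhds hy)
    filter_upwards [this] with w hw
    have h1 := ((hcd w hw).differentiableAt (by norm_num)).hasFDerivAt
    exact (h1.comp w (iC.toContinuousLinearEquiv :
      ℂ →L[ℝ] EuclideanSpace ℝ (Fin 2)).hasFDerivAt).fderiv
  have hdd : HasFDerivAt (fderiv ℝ u) (fderiv ℝ (fderiv ℝ u) (iC y)) (iC y) := by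
    have := (hcd y hy).fderiv_right (m := 1) (by norm_num)
    exact (this.differentiableAt (by norm_num)).hasFDerivAt
  have hc : HasFDerivAt (fun w => fderiv ℝ u (iC w)) ((fderiv ℝ (fderiv ℝ u) (iC y)).comp
      (iC.toContinuousLinearEquiv : ℂ →L[ℝ] EuclideanSpace ℝ (Fin 2))) y :=
    hdd.comp y (iC.toContinuousLinearEquiv : ℂ →L[ℝ] EuclideanSpace ℝ (Fin 2)).hasFDerivAt
  have key : ∀ d : ℂ, fderiv ℝ (fderiv ℝ (fun z => u (iC z))) y d d
      = fderiv ℝ (fderiv ℝ u) (iC y) (iC d) (iC d) := by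
    intro d
    rw [Filter.EventuallyEq.fderiv_eq hd]
    rw [(hc.clm_comp (hasFDerivAt_const _ _)).fderiv]
    simp
  simp only [Matrix.cons_val_zero, Matrix.cons_val_one, key, e1, e2] at hl ⊢
  exact hl

section
variable {u : EuclideanSpace ℝ (Fin 2) → ℝ} {r R c : ℝ} {f : ℝ → ℝ}

lemma stripSol_of_annulus (hr : 0 < r) (hrR : r < R)
    (hu : HarmonicOnSet u {x | r < ‖x‖ ∧ ‖x‖ < R})
    (hu1 : ContDiffOn ℝ 1 u {x | r ≤ ‖x‖ ∧ ‖x‖ ≤ R})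
    (hc : ∀ x : EuclideanSpace ℝ (Fin 2), ‖x‖ = r → u x = c)
    (hf : ∀ θ : ℝ, u (R • dir θ) = f θ) :
    StripSol (Real.log r) (Real.log R) f c (fun s θ => u (iC (Complex.exp ⟨s, θ⟩)))
      (fun z => Complex.exp z *
        cgrad (fderivWithin ℝ u {x | r ≤ ‖x‖ ∧ ‖x‖ ≤ R}) (Complex.exp z)) := by
  have hR : 0 < R := hr.trans hrR
  set A : Set (EuclideanSpace ℝ (Fin 2)) := {x | r ≤ ‖x‖ ∧ ‖x‖ ≤ R} with hA
  set T := fderivWithin ℝ u A with hT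
  have hUD := uniqueDiffOn_annulus hr hrR
  have hmem : ∀ z : ℂ, z.re ∈ Icc (Real.log r) (Real.log R) → iC (Complex.exp z) ∈ A := by
    intro z hz
    rw [hA, ← image_strip hr hR]; exact ⟨z, hz, rfl⟩
  have hUo : IsOpen {x : EuclideanSpace ℝ (Fin 2) | r < ‖x‖ ∧ ‖x‖ < R} :=
    (isOpen_lt continuous_const continuous_norm).inter (isOpen_lt continuous_norm continuous_const)
  have hUA : {x : EuclideanSpace ℝ (Fin 2) | r < ‖x‖ ∧ ‖x‖ < R} ⊆ A :=
    fun x hx => ⟨hx.1.le, hx.2.le⟩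
  have hTc : ContinuousOn T A := hu1.continuousOn_fderivWithin hUD le_rfl
  have hTd : ∀ x ∈ A, HasFDerivWithinAt u (T x) A x := fun x hx =>
    (hu1.differentiableOn (by norm_num) x hx).hasFDerivWithinAt
  have hmk : Continuous fun z : ℝ × ℝ => (⟨z.1, z.2⟩ : ℂ) := Complex.equivRealProdCLM.symm.continuous
  have hAc : IsCompact A := by
    refine Metric.isCompact_of_isClosed_isBounded ?_ ?_
    · exact (isClosed_le continuous_const continuous_norm).inter
        (isClosed_le continuous_norm continuous_const)
    · exact (Metric.isBounded_closedBall (x := 0) (r := R)).subset fun x hx => by simpa using hx.2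
  refine ⟨?_, ?_, ?_, ?_, ?_, ?_, ?_, ?_, ?_⟩
  · refine hu1.continuousOn.comp (f := fun z : ℝ × ℝ => iC (Complex.exp ⟨z.1, z.2⟩)) ?_ ?_
    · exact (iC.continuous.comp (Complex.continuous_exp.comp hmk)).continuousOn
    · rintro z hz
      exact hmem _ hz.1
  · intro s θ
    have : Complex.exp ⟨s, θ + 2 * Real.pi⟩ = Complex.exp ⟨s, θ⟩ := by
      have e : (⟨s, θ + 2 * Real.pi⟩ : ℂ) = ⟨s, θ⟩ + 2 * Real.pi * Complex.I := by
        apply Complex.ext <;> simp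
      rw [e, Complex.exp_periodic]
    simp only [this]
  · intro s hs θ
    have h1 : HasDerivAt (fun s : ℝ => (⟨s, θ⟩ : ℂ)) 1 s := by
      have : (fun s : ℝ => (⟨s, θ⟩ : ℂ)) = fun s : ℝ => (s : ℂ) + θ * Complex.I := by
        ext s; apply Complex.ext <;> simp
      rw [this]
      exact (Complex.ofRealCLM.hasDerivAt (x := s)).add_const _
    have h2 := (hasFDerivAt_E ⟨s, θ⟩).comp_hasDerivAt s h1
    have h3 := (hTd _ (hmem ⟨s, θ⟩ hs)).comp_hasDerivWithinAt s
      (h2.hasDerivWithinAt (s := Icc (Real.log r) (Real.log R))) (fun s hs => hmem ⟨s, θ⟩ hs)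
    rw [cgrad_mul_re]
    simpa using! h3
  · intro s hs θ
    have h1 : HasDerivAt (fun t : ℝ => (⟨s, t⟩ : ℂ)) Complex.I θ := by
      have : (fun t : ℝ => (⟨s, t⟩ : ℂ)) = fun t : ℝ => (s : ℂ) + t * Complex.I := by
        ext s; apply Complex.ext <;> simp
      rw [this]
      simpa using ((Complex.ofRealCLM.hasDerivAt (x := θ)).mul_const Complex.I).const_add (s : ℂ)
    have h2 := (hasFDerivAt_E ⟨s, θ⟩).comp_hasDerivAt θ h1
    have h3 := (hTd _ (hmem ⟨s, θ⟩ hs)).comp_hasDerivWithinAt θ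
      (h2.hasDerivWithinAt (s := univ)) (fun t _ => hmem ⟨s, t⟩ hs)
    rw [hasDerivWithinAt_univ] at h3
    have e : -(Complex.exp ⟨s, θ⟩ * cgrad T (Complex.exp ⟨s, θ⟩)).im =
        T (iC (Complex.exp ⟨s, θ⟩)) (iC (Complex.exp ⟨s, θ⟩ * Complex.I)) := by
      rw [← cgrad_mul_re]
      simp; ring
    rw [e]
    simpa using! h3
  · intro z hz
    have hzU : iC (Complex.exp z) ∈ {x : EuclideanSpace ℝ (Fin 2) | r < ‖x‖ ∧ ‖x‖ < R} := by
      simp only [mem_ofPred_eq, norm_iC_exp]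
      exact ⟨(Real.log_lt_iff_lt_exp hr).1 hz.1, (Real.lt_log_iff_exp_lt hR).1 hz.2⟩
    have hh := HarmonicAt.differentiableAt_complex_partial (harmonicAt_comp hUo hu hzU)
    have hF : DifferentiableAt ℂ (cgrad T) (Complex.exp z) := by
      refine hh.congr_of_eventuallyEq ?_
      have : ∀ᶠ w in 𝓝 (Complex.exp z), iC w ∈ {x : EuclideanSpace ℝ (Fin 2) | r < ‖x‖ ∧ ‖x‖ < R} :=
        iC.continuous.continuousAt.eventually (hUo.mem_nhds hzU)
      filter_upwards [this] with w hw
      have hn : A ∈ 𝓝 (iC w) := mem_of_superset (hUo.mem_nhds hw) hUA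
      have h1 := (hTd _ (hUA hw)).hasFDerivAt hn
      have h2 := (h1.comp w (iC.toContinuousLinearEquiv :
        ℂ →L[ℝ] EuclideanSpace ℝ (Fin 2)).hasFDerivAt).fderiv
      have h3 : fderiv ℝ (fun z => u (iC z)) w = (T (iC w)).comp
        (iC.toContinuousLinearEquiv : ℂ →L[ℝ] EuclideanSpace ℝ (Fin 2)) := h2
      rw [h3]; simp [cgrad]
    exact Complex.differentiable_exp.differentiableAt.mul
      (hF.comp z Complex.differentiable_exp.differentiableAt)
  · have h1 : ContinuousOn (fun z : ℂ => T (iC (Complex.exp z)))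
        {z | z.re ∈ Icc (Real.log r) (Real.log R)} :=
      hTc.comp (iC.continuous.comp Complex.continuous_exp).continuousOn hmem
    unfold cgrad
    refine Complex.continuous_exp.continuousOn.mul (ContinuousOn.sub ?_ (continuousOn_const.mul ?_))
    · exact Complex.continuous_ofReal.comp_continuousOn (h1.clm_apply continuousOn_const)
    · exact Complex.continuous_ofReal.comp_continuousOn (h1.clm_apply continuousOn_const)
  · obtain ⟨B, hB⟩ := hAc.exists_bound_of_continuousOn hTc
    refine ⟨R * (B + B), fun z hz => ?_⟩
    have hb := hB _ (hmem z hz)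
    have hB0 : 0 ≤ B := (norm_nonneg _).trans hb
    rw [norm_mul, Complex.norm_exp]
    have hR1 : Real.exp z.re ≤ R := (Real.le_log_iff_exp_le hR).1 hz.2
    refine mul_le_mul hR1 ?_ (norm_nonneg _) hR.le
    unfold cgrad
    refine (norm_sub_le _ _).trans (add_le_add ?_ ?_)
    · rw [Complex.norm_real]
      refine ((T (iC (Complex.exp z))).le_opNorm _).trans ?_
      simpa using hb
    · rw [norm_mul, Complex.norm_real, Complex.norm_I, one_mul]
      refine ((T (iC (Complex.exp z))).le_opNorm _).trans ?_
      simpa using hb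
  · intro θ
    apply hc
    rw [norm_iC_exp]; exact Real.exp_log hr
  · intro θ
    simp only [iC_exp, Real.exp_log hR, hf]
end

lemma sphere_measure_lt_top {r : ℝ} (hr : 0 < r) :
    μH[(1 : ℝ)] (Metric.sphere (0 : EuclideanSpace ℝ (Fin 2)) r) < ⊤ := by
  have h1 : Metric.sphere (0 : EuclideanSpace ℝ (Fin 2)) r =
      (fun θ => iC (circleMap 0 r θ)) '' Ioc 0 (2 * Real.pi) := by
    rw [← image_image (g := iC), image_circleMap_Ioc, abs_of_pos hr, LinearIsometryEquiv.image_sphere]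
    simp
  rw [h1]
  have hl : LipschitzWith (1 * Real.nnabs r) (fun θ => iC (circleMap 0 r θ)) :=
    iC.lipschitz.comp (lipschitzWith_circleMap 0 r)
  refine (hl.hausdorffMeasure_image_le zero_le_one _).trans_lt ?_
  rw [hausdorffMeasure_real, Real.volume_Ioc]
  refine ENNReal.mul_lt_top ?_ ENNReal.ofReal_lt_top
  simp

lemma sphere_measure_pos {r : ℝ} (hr : 0 < r) :
    0 < μH[(1 : ℝ)] (Metric.sphere (0 : EuclideanSpace ℝ (Fin 2)) r) := by
  have hl : LipschitzWith 1 (fun x : EuclideanSpace ℝ (Fin 2) => x 0) := by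
    refine LipschitzWith.of_dist_le_mul fun x y => ?_
    rw [dist_eq_norm, dist_eq_norm]
    simpa using PiLp.norm_apply_le (x - y) 0
  have hsub : Icc 0 r ⊆ (fun x : EuclideanSpace ℝ (Fin 2) => x 0) ''
      Metric.sphere (0 : EuclideanSpace ℝ (Fin 2)) r := by
    intro t ht
    refine ⟨iC ⟨t, Real.sqrt (r ^ 2 - t ^ 2)⟩, ?_, rfl⟩
    rw [mem_sphere_zero_iff_norm, LinearIsometryEquiv.norm_map]
    have h0 : 0 ≤ r ^ 2 - t ^ 2 := by nlinarith [ht.1, ht.2]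
    have : ‖(⟨t, Real.sqrt (r ^ 2 - t ^ 2)⟩ : ℂ)‖ ^ 2 = r ^ 2 := by
      rw [← Complex.normSq_eq_norm_sq, Complex.normSq_mk, Real.mul_self_sqrt h0]; ring
    exact (sq_eq_sq₀ (norm_nonneg _) hr.le).1 this
  have h1 := (measure_mono hsub).trans (hl.hausdorffMeasure_image_le (d := 1) zero_le_one _)
  rw [hausdorffMeasure_real, Real.volume_Icc] at h1
  have h2 : 0 < ENNReal.ofReal (r - 0) := by simpa using hr
  simpa using h2.trans_le h1

lemma flux_neg {r : ℝ} (hr : 0 < r) {g : EuclideanSpace ℝ (Fin 2) → ℝ}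
    (hg : ContinuousOn g (Metric.sphere 0 r)) (hneg : ∀ x, ‖x‖ = r → 0 < g x) :
    ∫ x in Metric.sphere (0 : EuclideanSpace ℝ (Fin 2)) r, g x ∂μH[(1 : ℝ)] ≠ 0 := by
  have hms : MeasurableSet (Metric.sphere (0 : EuclideanSpace ℝ (Fin 2)) r) :=
    Metric.isClosed_sphere.measurableSet
  have hint : IntegrableOn g (Metric.sphere 0 r) μH[(1 : ℝ)] := by
    obtain ⟨B, hB⟩ := (isCompact_sphere (0 : EuclideanSpace ℝ (Fin 2)) r).exists_bound_of_continuousOn hg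
    refine IntegrableOn.of_bound (sphere_measure_lt_top hr) (hg.aestronglyMeasurable hms) B ?_
    exact ae_restrict_of_forall_mem hms hB
  refine ne_of_gt ?_
  rw [setIntegral_pos_iff_support_of_nonneg_ae ?_ hint]
  · have : Function.support g ∩ Metric.sphere 0 r = Metric.sphere 0 r := by
      refine inter_eq_right.2 fun x hx => ?_
      exact (hneg x (by simpa using hx)).ne'
    rw [this]; exact sphere_measure_pos hr
  · exact ae_restrict_of_forall_mem hms fun x hx => (hneg x (by simpa using hx)).le

lemma bounded_of_periodic {g : ℝ → ℝ} (hg : Continuous g) (hp : Function.Periodic g (2 * Real.pi)) :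
    ∃ B, ∀ θ, |g θ| ≤ B := by
  obtain ⟨B, hB⟩ := (hp.isBounded_of_continuous (by positivity) hg).exists_norm_le
  exact ⟨B, fun θ => hB _ ⟨θ, rfl⟩⟩

lemma deriv_periodic {g : ℝ → ℝ} (hp : Function.Periodic g (2 * Real.pi)) :
    Function.Periodic (deriv g) (2 * Real.pi) := by
  intro θ
  rw [← deriv_comp_add_const]
  congr 1
  ext x; exact hp x

/-- the constant on the inner circle is bounded by the boundary data -/
lemma const_le {u : EuclideanSpace ℝ (Fin 2) → ℝ} {r R c M : ℝ} {f : ℝ → ℝ}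
    (hr : 0 < r) (hrR : r < R)
    (hu : HarmonicOnSet u {x | r < ‖x‖ ∧ ‖x‖ < R})
    (hu1 : ContDiffOn ℝ 1 u {x | r ≤ ‖x‖ ∧ ‖x‖ ≤ R})
    (hc : ∀ x : EuclideanSpace ℝ (Fin 2), ‖x‖ = r → u x = c)
    (hflux : (∫ x in Metric.sphere (0 : EuclideanSpace ℝ (Fin 2)) r,
          fderivWithin ℝ u {y | r ≤ ‖y‖ ∧ ‖y‖ ≤ R} x (‖x‖⁻¹ • x) ∂μH[(1 : ℝ)]) = 0)
    (hf : ∀ θ : ℝ, u (R • dir θ) = f θ) (hM : ∀ θ, |f θ| ≤ M) : |c| ≤ M := by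
  have S := stripSol_of_annulus hr hrR hu hu1 hc hf
  have hl : Real.log r < Real.log R := Real.log_lt_log hr hrR
  set T := fderivWithin ℝ u {x | r ≤ ‖x‖ ∧ ‖x‖ ≤ R} with hT
  have hTc : ContinuousOn T {x | r ≤ ‖x‖ ∧ ‖x‖ ≤ R} :=
    hu1.continuousOn_fderivWithin (uniqueDiffOn_annulus hr hrR) le_rfl
  have hgc : ContinuousOn (fun x => T x (‖x‖⁻¹ • x)) (Metric.sphere 0 r) := by
    refine (hTc.mono ?_).clm_apply ?_
    · intro x hx
      have : ‖x‖ = r := by simpa using hx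
      exact ⟨this.ge, this.le.trans hrR.le⟩
    · refine ContinuousOn.smul (continuousOn_id.norm.inv₀ ?_) continuousOn_id
      intro x hx
      have : ‖x‖ = r := by simpa using hx
      simp only [id]; rw [this]; exact hr.ne'
  have hval : ∀ x : EuclideanSpace ℝ (Fin 2), ‖x‖ = r → ∃ θ : ℝ,
      (Complex.exp ⟨Real.log r, θ⟩ * cgrad T (Complex.exp ⟨Real.log r, θ⟩)).re =
        r * T x (‖x‖⁻¹ • x) := by
    intro x hx
    obtain ⟨z, rfl⟩ := exists_iC_exp (x := x) (by rintro rfl; simp at hx; linarith)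
    refine ⟨z.im, ?_⟩
    have hz : (⟨Real.log r, z.im⟩ : ℂ) = z := by
      apply Complex.ext
      · simp only; rw [← hx, norm_iC_exp, Real.log_exp]
      · rfl
    rw [hz, cgrad_mul_re, hx, map_smul, smul_eq_mul]
    field_simp
  by_contra! hcon
  rcases lt_abs.1 hcon with h | h
  · refine flux_neg hr (g := fun x => -(T x (‖x‖⁻¹ • x))) hgc.neg ?_ ?_
    · intro x hx
      obtain ⟨θ, hθ⟩ := hval x hx
      have h1 := S.inner_le hl (A := M - c) (fun θ => by linarith [(abs_le.1 (hM θ)).2]) θ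
      have h2 : (M - c) / (Real.log R - Real.log r) < 0 := div_neg_of_neg_of_pos (by linarith) (by linarith)
      have h3 := h1.trans_lt h2
      rw [hθ] at h3
      have := (pos_iff_neg_of_mul_neg h3).1 hr
      linarith
    · rw [integral_neg, hflux, neg_zero]
  · refine flux_neg hr (g := fun x => (T x (‖x‖⁻¹ • x))) hgc ?_ hflux
    · intro x hx
      obtain ⟨θ, hθ⟩ := hval x hx
      have h1 := S.neg.inner_le hl (A := M + c) (fun θ => by linarith [(abs_le.1 (hM θ)).1]) θ
      have h2 : (M + c) / (Real.log R - Real.log r) < 0 := div_neg_of_neg_of_pos (by linarith) (by linarith)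
      have h3 := h1.trans_lt h2
      simp only [Complex.neg_re, hθ] at h3
      have : 0 < r * T x (‖x‖⁻¹ • x) := by linarith
      exact (mul_pos_iff_of_pos_left hr).1 this

lemma gradient_bounds {u : EuclideanSpace ℝ (Fin 2) → ℝ} {r ε c M M1 K d : ℝ} {f f1 f2 : ℝ → ℝ}
    (hr : 0 < r) (hε : 0 < ε) (hεr : ε < r)
    (hu : HarmonicOnSet u {x | r < ‖x‖ ∧ ‖x‖ < r + ε})
    (hu1 : ContDiffOn ℝ 1 u {x | r ≤ ‖x‖ ∧ ‖x‖ ≤ r + ε})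
    (hc : ∀ x : EuclideanSpace ℝ (Fin 2), ‖x‖ = r → u x = c)
    (hflux : (∫ x in Metric.sphere (0 : EuclideanSpace ℝ (Fin 2)) r,
          fderivWithin ℝ u {y | r ≤ ‖y‖ ∧ ‖y‖ ≤ r + ε} x (‖x‖⁻¹ • x) ∂μH[(1 : ℝ)]) = 0)
    (hf : ∀ θ : ℝ, u ((r + ε) • dir θ) = f θ) (hM : ∀ θ, |f θ| ≤ M)
    (hf1 : ∀ θ, HasDerivAt f (f1 θ) θ) (hf2 : ∀ θ, HasDerivAt f1 (f2 θ) θ)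
    (hM1 : ∀ θ, |f1 θ| ≤ M1) (hK : ∀ θ, |f2 θ| ≤ K)
    (hd : ∀ c, ∃ θ, d ≤ |f θ - c|) (hd0 : 0 < d) :
    (∀ x : EuclideanSpace ℝ (Fin 2), r < ‖x‖ → ‖x‖ < r + ε →
      ‖gradient u x‖ ≤ 2 * (2 * M + K / 2 + M1) / ε) ∧
    ∃ x : EuclideanSpace ℝ (Fin 2), r < ‖x‖ ∧ ‖x‖ < r + ε ∧ d / 2 / ε ≤ ‖gradient u x‖ := by
  have hrR : r < r + ε := by linarith
  have hR : 0 < r + ε := by linarith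
  have S := stripSol_of_annulus hr hrR hu hu1 hc hf
  have hcM := const_le hr hrR hu hu1 hc hflux hf hM
  have hl : Real.log r < Real.log (r + ε) := Real.log_lt_log hr hrR
  have hLeq : Real.log (r + ε) - Real.log r = Real.log (1 + ε / r) := by
    rw [← Real.log_div hR.ne' hr.ne']; congr 1; field_simp
  set L := Real.log (r + ε) - Real.log r with hLdef
  have hLpos : 0 < L := by linarith
  have hL1 : L ≤ ε / r := by
    rw [hLeq]
    linarith [Real.log_le_sub_one_of_pos (show 0 < 1 + ε / r by positivity)]
  have hεr1 : ε / r < 1 := (div_lt_one hr).2 hεr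
  have hL2 : ε / (2 * r) ≤ L := by
    rw [hLeq]
    refine le_trans ?_ (Real.one_sub_inv_le_log_of_pos (show 0 < 1 + ε / r by positivity))
    have : 1 - (1 + ε / r)⁻¹ = ε / (r + ε) := by field_simp; ring
    rw [this]
    apply div_le_div_of_nonneg_left hε.le hR; linarith
  set A : Set (EuclideanSpace ℝ (Fin 2)) := {x | r ≤ ‖x‖ ∧ ‖x‖ ≤ r + ε} with hA
  set T := fderivWithin ℝ u A with hT
  have hUo : IsOpen {x : EuclideanSpace ℝ (Fin 2) | r < ‖x‖ ∧ ‖x‖ < r + ε} :=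
    (isOpen_lt continuous_const continuous_norm).inter (isOpen_lt continuous_norm continuous_const)
  have hgrad : ∀ x : EuclideanSpace ℝ (Fin 2), r < ‖x‖ → ‖x‖ < r + ε → ‖gradient u x‖ = ‖T x‖ := by
    intro x h1 h2
    have hn : A ∈ 𝓝 x := mem_of_superset (hUo.mem_nhds ⟨h1, h2⟩) fun x hx => ⟨hx.1.le, hx.2.le⟩
    rw [gradient, LinearIsometryEquiv.norm_map, hT, fderivWithin_of_mem_nhds hn]
  have hM0 : 0 ≤ M := (abs_nonneg _).trans (hM 0)
  have hM10 : 0 ≤ M1 := (abs_nonneg _).trans (hM1 0)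
  have hK0 : 0 ≤ K := (abs_nonneg _).trans (hK 0)
  constructor
  · intro x h1 h2
    rw [hgrad x h1 h2]
    obtain ⟨z, rfl⟩ := exists_iC_exp (x := x) (by rintro rfl; simp at h1; linarith)
    refine (norm_T_le T _).trans ?_
    rw [norm_iC_exp] at h1 h2
    have hb := S.norm_le hl hf1 hf2 hM1 hK (A := 2 * M)
      (fun θ => by
        have := abs_sub (f θ) c
        linarith [hM θ]) z
      ⟨((Real.log_lt_iff_lt_exp hr).2 h1).le, ((Real.lt_log_iff_exp_lt hR).2 h2).le⟩
    rw [norm_mul, Complex.norm_exp, ← hLdef] at hb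
    have hb2 : 2 * M / L + K / 2 * L + M1 ≤ (2 * M + K / 2 + M1) / L := by
      rw [le_div_iff₀ hLpos]
      have : (2 * M / L + K / 2 * L + M1) * L = 2 * M + K / 2 * (L * L) + M1 * L := by
        field_simp
      rw [this]
      have hLle : L ≤ 1 := by linarith
      nlinarith [mul_nonneg hK0 (show 0 ≤ 1 - L * L by nlinarith), mul_nonneg hM10 (show 0 ≤ 1 - L by linarith)]
    have hb3 : (2 * M + K / 2 + M1) / L ≤ (2 * M + K / 2 + M1) / (ε / (2 * r)) :=
      div_le_div_of_nonneg_left (by positivity) (by positivity) hL2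
    have hb4 : (2 * M + K / 2 + M1) / (ε / (2 * r)) = r * (2 * (2 * M + K / 2 + M1) / ε) := by
      field_simp
    have hb5 : r * ‖cgrad T (Complex.exp z)‖ ≤ Real.exp z.re * ‖cgrad T (Complex.exp z)‖ :=
      mul_le_mul_of_nonneg_right h1.le (norm_nonneg _)
    refine le_of_mul_le_mul_left ?_ hr
    linarith
  · obtain ⟨θ, hθ⟩ := hd c
    have hder : ∀ s ∈ Ioo (Real.log r) (Real.log (r + ε)), HasDerivAt
        (fun s => u (iC (Complex.exp ⟨s, θ⟩)))
        (Complex.exp ⟨s, θ⟩ * cgrad T (Complex.exp ⟨s, θ⟩)).re s := fun s hs =>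
      (S.ds s (Ioo_subset_Icc_self hs) θ).hasDerivAt (Icc_mem_nhds hs.1 hs.2)
    obtain ⟨s, hs, he⟩ := exists_hasDerivAt_eq_slope _ _ hl
      (fun s hs => (S.ds s hs θ).continuousWithinAt) hder
    rw [cgrad_mul_re, S.inner, S.outer, ← hLdef] at he
    have hn : ‖iC (Complex.exp ⟨s, θ⟩)‖ = Real.exp s := norm_iC_exp _
    have h1 : r < Real.exp s := (Real.log_lt_iff_lt_exp hr).1 hs.1
    have h2 : Real.exp s < r + ε := (Real.lt_log_iff_exp_lt hR).1 hs.2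
    refine ⟨iC (Complex.exp ⟨s, θ⟩), by rwa [hn], by rwa [hn], ?_⟩
    rw [hgrad _ (by rwa [hn]) (by rwa [hn])]
    have h3 := (T (iC (Complex.exp ⟨s, θ⟩))).le_opNorm (iC (Complex.exp ⟨s, θ⟩))
    rw [he, hn, Real.norm_eq_abs, abs_div, abs_of_pos hLpos, div_le_iff₀ hLpos] at h3
    have h4 : Real.exp s * L ≤ 2 * ε := by
      calc Real.exp s * L ≤ (2 * r) * (ε / r) := by
            apply mul_le_mul _ hL1 hLpos.le <;> linarith
        _ = 2 * ε := by field_simp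
    have h5 := norm_nonneg (T (iC (Complex.exp ⟨s, θ⟩)))
    rw [div_div, div_le_iff₀ (by positivity)]
    nlinarith [mul_le_mul_of_nonneg_left h4 h5]

theorem perfect_two_dim_gradient_blowup {r₀ : ℝ} (hr₀ : 0 < r₀)
    (φ : EuclideanSpace ℝ (Fin 2) → ℝ)
    (hφ : ContDiff ℝ 2 fun θ : ℝ => φ (dir θ))
    (hφnc : ∃ θ₁ θ₂ : ℝ, φ (dir θ₁) ≠ φ (dir θ₂)) :
    ∃ ε₀ : ℝ, 0 < ε₀ ∧ ∃ c₁ c₂ : ℝ, 0 < c₁ ∧ c₁ ≤ c₂ ∧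
      ∀ ε ∈ Set.Ioo (0 : ℝ) ε₀, ∀ u : EuclideanSpace ℝ (Fin 2) → ℝ,
        HarmonicOnSet u {x | r₀ < ‖x‖ ∧ ‖x‖ < r₀ + ε} →
        ContDiffOn ℝ 1 u {x | r₀ ≤ ‖x‖ ∧ ‖x‖ ≤ r₀ + ε} →
        (∃ c : ℝ, ∀ x : EuclideanSpace ℝ (Fin 2), ‖x‖ = r₀ → u x = c) →
        (∫ x in Metric.sphere (0 : EuclideanSpace ℝ (Fin 2)) r₀,
          fderivWithin ℝ u {y | r₀ ≤ ‖y‖ ∧ ‖y‖ ≤ r₀ + ε} x (‖x‖⁻¹ • x) ∂μH[(1 : ℝ)]) = 0 →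
        (∀ θ : ℝ, u ((r₀ + ε) • dir θ) = φ (dir θ)) →
        c₁ / ε ≤ sSup ((fun x => ‖gradient u x‖) '' {x | r₀ < ‖x‖ ∧ ‖x‖ < r₀ + ε}) ∧
        sSup ((fun x => ‖gradient u x‖) '' {x | r₀ < ‖x‖ ∧ ‖x‖ < r₀ + ε}) ≤ c₂ / ε := by
  set f : ℝ → ℝ := fun θ => φ (dir θ) with hfdef
  have hfp : Function.Periodic f (2 * Real.pi) := by
    intro θ
    simp [hfdef, dir]
  have hf1 : ContDiff ℝ 1 (deriv f) := by
    have := (contDiff_succ_iff_deriv (n := 1)).1 (show ContDiff ℝ (1 + 1) f by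
      convert hφ using 1; norm_num)
    exact this.2.2
  have hf2 : Continuous (deriv (deriv f)) := hf1.continuous_deriv le_rfl
  obtain ⟨M, hM⟩ := bounded_of_periodic hφ.continuous hfp
  obtain ⟨M1, hM1⟩ := bounded_of_periodic hf1.continuous (deriv_periodic hfp)
  obtain ⟨K, hK⟩ := bounded_of_periodic hf2 (deriv_periodic (deriv_periodic hfp))
  obtain ⟨θ₁, θ₂, hne⟩ := hφnc
  have hd0 : 0 < |f θ₁ - f θ₂| / 2 := by
    have := abs_pos.2 (sub_ne_zero.2 hne)
    exact half_pos this
  have hd : ∀ c, ∃ θ, |f θ₁ - f θ₂| / 2 ≤ |f θ - c| := by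
    intro c
    by_contra! hcon
    have h1 := hcon θ₁
    have h2 := hcon θ₂
    have h3 := abs_sub_le (f θ₁) c (f θ₂)
    rw [abs_sub_comm c] at h3
    linarith
  refine ⟨r₀, hr₀, |f θ₁ - f θ₂| / 2 / 2,
    max (|f θ₁ - f θ₂| / 2 / 2) (2 * (2 * M + K / 2 + M1)), half_pos hd0, le_max_left _ _, ?_⟩
  rintro ε ⟨hε, hεr⟩ u hu hu1 ⟨c, hc⟩ hflux hbd
  obtain ⟨hup, x, hx1, hx2, hx⟩ := gradient_bounds hr₀ hε hεr hu hu1 hc hflux hbd hM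
    (fun θ => (hφ.differentiable (by norm_num) θ).hasDerivAt)
    (fun θ => (hf1.differentiable (by norm_num) θ).hasDerivAt) hM1 hK hd hd0
  constructor
  · refine hx.trans (le_csSup ⟨2 * (2 * M + K / 2 + M1) / ε, ?_⟩ ⟨x, ⟨hx1, hx2⟩, rfl⟩)
    rintro _ ⟨y, hy, rfl⟩
    exact hup y hy.1 hy.2
  · refine csSup_le ⟨_, x, ⟨hx1, hx2⟩, rfl⟩ ?_
    rintro _ ⟨y, hy, rfl⟩
    refine (hup y hy.1 hy.2).trans ?_
    gcongr
    exact le_max_right _ _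
end
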